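/- arXiv:2302.00708 — 2 statements merged into one kernel-verified Lean document; each statement's English description precedes it below -/
import Mathlib

section
/- For every natural number n: for every B in {3, 6, 7, 8, 9, 12}, b_26(169n + 13B − 7) ≡ p_11(13n + B) (mod 2); for every B in {1, 3, 5, 6, 11, 12}, b_52(169n + 13B − 7) ≡ p_9(13n + B) (mod 2); and for every B in {2, 6, 9, 10, 11, 12}, b_104(169n + 13B − 7) ≡ p_5(13n + B) (mod 2). -/
/-- The number of `m`-regular partitions of `n`, i.e. partitions of `n`
in which no part is divisible by `m`. -/
noncomputable def numRegularPartitions (m n : ℕ) : ℕ :=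
  Nat.card {π : n.Partition // ∀ j ∈ π.parts, ¬ m ∣ j}

/-- The number of `t`-multipartitions of `n`, i.e. `t`-tuples of partitions
whose sizes sum to `n`. -/
noncomputable def numMultipartitions (t n : ℕ) : ℕ :=
  Nat.card {f : Fin t → Σ k : ℕ, k.Partition // (∑ i, (f i).1) = n}

namespace Stmt3

/-- Gauss reduction of positive binary quadratic forms `a x² + 2 b x y + c y²`. -/
lemma gauss_reduction (D : ℤ) (hD : 0 < D) : ∀ (n : ℕ) (a b c : ℤ), a.toNat = n → 0 < a →
    a * c - b ^ 2 = D →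
    ∃ A B C x y u v : ℤ, A * C - B ^ 2 = D ∧ 0 < A ∧ 2 * |B| ≤ A ∧ A ≤ C ∧ x * v - y * u = 1 ∧
      a = A * x ^ 2 + 2 * B * x * y + C * y ^ 2 ∧
      b = A * x * u + B * (x * v + y * u) + C * y * v ∧
      c = A * u ^ 2 + 2 * B * u * v + C * v ^ 2 := by
  intro n
  induction n using Nat.strong_induction_on with
  | _ n ih =>
    intro a b c han ha hdet
    obtain ⟨t, ht⟩ : ∃ t : ℤ, 2 * |b - t * a| ≤ a := by
      refine ⟨(2 * b + a) / (2 * a), ?_⟩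
      have h1 := Int.emod_add_mul_ediv (2 * b + a) (2 * a)
      have h2 := Int.emod_nonneg (2 * b + a) (show (2 * a) ≠ 0 by omega)
      have h3 := Int.emod_lt_of_pos (2 * b + a) (show 0 < 2 * a by omega)
      set t := (2 * b + a) / (2 * a)
      set r := (2 * b + a) % (2 * a)
      have h4 : 2 * (b - t * a) = r - a := by linarith
      have : |2 * (b - t * a)| ≤ a := by rw [h4, abs_le]; constructor <;> linarith
      rwa [abs_mul, abs_of_pos (by norm_num : (0:ℤ) < 2)] at this
    set b' := b - t * a with hb'
    set c' := c - 2 * t * b + t ^ 2 * a with hc'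
    have hdet' : a * c' - b' ^ 2 = D := by rw [← hdet]; ring
    by_cases hac : a ≤ c'
    · refine ⟨a, b', c', 1, 0, t, 1, hdet', ha, ht, hac, by ring, by ring, ?_, ?_⟩
      · rw [hb']; ring
      · rw [hb', hc']; ring
    · have hc0 : 0 < c' := by
        by_contra h
        push Not at h
        nlinarith [sq_nonneg b', mul_nonneg ha.le (neg_nonneg.mpr h)]
      obtain ⟨A, B, C, x, y, u, v, h1, h2, h3, h4, h5, h6, h7, h8⟩ :=
        ih c'.toNat (by omega) c' (-b') a rfl hc0 (by rw [← hdet']; ring)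
      refine ⟨A, B, C, u, v, -x + t * u, -y + t * v, h1, h2, h3, h4, ?_, h8, ?_, ?_⟩
      · rw [← h5]; ring
      · have : b = b' + t * a := by rw [hb']; ring
        rw [this, h8, show b' = -(A * x * u + B * (x * v + y * u) + C * y * v) by linarith]; ring
      · have hb2 : b' = -(A * x * u + B * (x * v + y * u) + C * y * v) := by linarith
        have : c = c' + 2 * t * b' + t ^ 2 * a := by rw [hb', hc']; ring
        rw [this, hb2, h8, h6]; ring

/-- Reduced forms represent the root `z` in the expected way. -/
lemma exists_rep (D k M : ℤ) (hD : 0 < D) (hM : 0 < M)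
    (H : ∀ A B C x y : ℤ, A * C - B ^ 2 = D → 0 < A → 2 * |B| ≤ A → A ≤ C →
      M = A * x ^ 2 + 2 * B * x * y + C * y ^ 2 → A = k ∧ IsCoprime k y)
    (z : ℤ) (hz : M ∣ z ^ 2 + D) :
    ∃ X Y : ℤ, IsCoprime X Y ∧ X ^ 2 + D * Y ^ 2 = k * M ∧ M ∣ X - z * Y := by
  obtain ⟨c, hc⟩ := hz
  obtain ⟨A, B, C, x, y, u, v, h1, h2, h3, h4, h5, h6, h7, h8⟩ :=
    gauss_reduction D hD _ M z c rfl hM (by rw [← hc]; ring)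
  obtain ⟨rfl, hcop⟩ := H A B C x y h1 h2 h3 h4 h6
  refine ⟨A * x + B * y, -y, ?_, ?_, ?_⟩
  · have hxy : IsCoprime x y := ⟨v, -u, by linarith⟩
    have : IsCoprime (A * x) y := hcop.mul_left hxy
    exact (IsCoprime.add_mul_right_left this B).neg_right
  · rw [← h1, h6]; ring
  · refine ⟨v, ?_⟩
    have h9 : y * u = x * v - 1 := by linarith
    rw [h7, h6]
    linear_combination (A * x + B * y) * h9

lemma H6 (M : ℤ) (hM : M % 24 = 7) (A B C x y : ℤ) (h1 : A * C - B ^ 2 = 6) (h2 : 0 < A)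
    (h3 : 2 * |B| ≤ A) (h4 : A ≤ C) (h5 : M = A * x ^ 2 + 2 * B * x * y + C * y ^ 2) :
    A = 1 ∧ IsCoprime 1 y := by
  refine ⟨?_, isCoprime_one_left⟩
  have h6 : A ≤ 2 := by nlinarith [sq_abs B, abs_nonneg B]
  have hB : B ≤ 1 ∧ -1 ≤ B := by constructor <;> nlinarith [le_abs_self B, neg_abs_le B]
  obtain ⟨hB1, hB2⟩ := hB
  interval_cases A
  · rfl
  · exfalso
    interval_cases B
    · omega
    · have : C = 3 := by omega
      subst this
      have hx : x % 3 = 0 ∨ x % 3 = 1 ∨ x % 3 = 2 := by omega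
      have : x ^ 2 % 3 = 0 ∨ x ^ 2 % 3 = 1 := by
        rcases hx with h | h | h <;> simp [pow_two, Int.mul_emod, h]
      ring_nf at h5
      omega
    · omega

lemma H13 (M : ℤ) (hM : M % 4 = 3) (A B C x y : ℤ) (h1 : A * C - B ^ 2 = 13) (h2 : 0 < A)
    (h3 : 2 * |B| ≤ A) (h4 : A ≤ C) (h5 : M = A * x ^ 2 + 2 * B * x * y + C * y ^ 2) :
    A = 2 ∧ IsCoprime 2 y := by
  have h6 : A ≤ 4 := by nlinarith [sq_abs B, abs_nonneg B]
  have hB : B ≤ 2 ∧ -2 ≤ B := by constructor <;> nlinarith [le_abs_self B, neg_abs_le B]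
  obtain ⟨hB1, hB2⟩ := hB
  have sq4 : ∀ x : ℤ, x ^ 2 % 4 = 0 ∨ x ^ 2 % 4 = 1 := by
    intro x
    have hx : x % 4 = 0 ∨ x % 4 = 1 ∨ x % 4 = 2 ∨ x % 4 = 3 := by omega
    rcases hx with h | h | h | h <;> simp [pow_two, Int.mul_emod, h]
  have hA : A = 2 ∧ C = 7 := by
    have hx := sq4 x
    have hy := sq4 y
    interval_cases A <;> interval_cases B <;> simp at h3 <;> first | omega | skip
    have : C = 13 := by omega
    subst this
    ring_nf at h5
    omega
  obtain ⟨rfl, rfl⟩ := hA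
  refine ⟨rfl, ?_⟩
  rw [Int.isCoprime_iff_gcd_eq_one]
  have hy : y % 2 = 1 := by
    by_contra h
    have h0 : y % 2 = 0 := by omega
    obtain ⟨w, rfl⟩ := Int.dvd_of_emod_eq_zero h0
    have : M = 2 * (x ^ 2 + 2 * B * x * w + 14 * w ^ 2) := by rw [h5]; ring
    omega
  exact (Int.isCoprime_iff_gcd_eq_one.mp (Int.isCoprime_two_left.mpr (Int.odd_iff.mpr hy)))

lemma red78 (A B C : ℤ) (h1 : A * C - B ^ 2 = 78) (h2 : 0 < A)
    (h3 : 2 * |B| ≤ A) (h4 : A ≤ C) :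
    B = 0 ∧ ((A = 1 ∧ C = 78) ∨ (A = 2 ∧ C = 39) ∨ (A = 3 ∧ C = 26) ∨ (A = 6 ∧ C = 13)) := by
  have h6 : A ≤ 10 := by nlinarith [sq_abs B, abs_nonneg B]
  have hB : B ≤ 5 ∧ -5 ≤ B := by constructor <;> nlinarith [le_abs_self B, neg_abs_le B]
  obtain ⟨hB1, hB2⟩ := hB
  interval_cases B <;> simp at h3 <;> interval_cases A <;> omega

lemma sq3 (x : ℤ) : x ^ 2 % 3 = 0 ∨ x ^ 2 % 3 = 1 := by
  have hx : x % 3 = 0 ∨ x % 3 = 1 ∨ x % 3 = 2 := by omega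
  rcases hx with h | h | h <;> simp [pow_two, Int.mul_emod, h]

lemma sq8 (x : ℤ) : x ^ 2 % 8 = 0 ∨ x ^ 2 % 8 = 1 ∨ x ^ 2 % 8 = 4 := by
  have hx : x % 8 = 0 ∨ x % 8 = 1 ∨ x % 8 = 2 ∨ x % 8 = 3 ∨ x % 8 = 4 ∨ x % 8 = 5 ∨
    x % 8 = 6 ∨ x % 8 = 7 := by omega
  rcases hx with h | h | h | h | h | h | h | h <;> simp [pow_two, Int.mul_emod, h]

lemma H78a (M : ℤ) (hM : M % 24 = 7) (A B C x y : ℤ) (h1 : A * C - B ^ 2 = 78) (h2 : 0 < A)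
    (h3 : 2 * |B| ≤ A) (h4 : A ≤ C) (h5 : M = A * x ^ 2 + 2 * B * x * y + C * y ^ 2) :
    A = 1 ∧ IsCoprime 1 y := by
  refine ⟨?_, isCoprime_one_left⟩
  have a1 := sq3 x
  have a2 := sq3 y
  have a3 := sq8 x
  have a4 := sq8 y
  obtain ⟨rfl, h⟩ := red78 A B C h1 h2 h3 h4
  rcases h with ⟨rfl, rfl⟩ | ⟨rfl, rfl⟩ | ⟨rfl, rfl⟩ | ⟨rfl, rfl⟩ <;> ring_nf at h5 <;> omega

lemma H78b (M : ℤ) (hM : M % 24 = 19) (A B C x y : ℤ) (h1 : A * C - B ^ 2 = 78) (h2 : 0 < A)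
    (h3 : 2 * |B| ≤ A) (h4 : A ≤ C) (h5 : M = A * x ^ 2 + 2 * B * x * y + C * y ^ 2) :
    A = 6 ∧ IsCoprime 6 y := by
  have a1 := sq3 x
  have a2 := sq3 y
  have a3 := sq8 x
  have a4 := sq8 y
  obtain ⟨rfl, h⟩ := red78 A B C h1 h2 h3 h4
  have hA : A = 6 ∧ C = 13 := by
    rcases h with ⟨rfl, rfl⟩ | ⟨rfl, rfl⟩ | ⟨rfl, rfl⟩ | ⟨rfl, rfl⟩ <;> ring_nf at h5 <;> omega
  obtain ⟨rfl, rfl⟩ := hA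
  refine ⟨rfl, ?_⟩
  have e2 : IsCoprime 2 y := by
    rw [Int.isCoprime_two_left, ← Int.not_even_iff_odd]
    rintro ⟨w, rfl⟩
    have : M = 2 * (3 * x ^ 2 + 26 * w ^ 2) := by rw [h5]; ring
    omega
  have e3 : IsCoprime 3 y := by
    rw [Prime.coprime_iff_not_dvd Int.prime_three]
    rintro ⟨w, rfl⟩
    have : M = 3 * (2 * x ^ 2 + 39 * w ^ 2) := by rw [h5]; ring
    omega
  rw [show (6:ℤ) = 2 * 3 by norm_num]
  exact e2.mul_left e3

end Stmt3

namespace Stmt3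

/-- square roots of `d` modulo `M` -/
def Zset (M : ℕ) [NeZero M] (d : ZMod M) : Finset (ZMod M) := Finset.univ.filter (fun z => z ^ 2 = d)

/-- primitive representations of `γ` by `x² + D y²` with `x, y ≥ 0` -/
def prim (D γ : ℕ) : Finset (ℕ × ℕ) :=
  (Finset.range (γ + 1) ×ˢ Finset.range (γ + 1)).filter
    (fun p => Nat.Coprime p.1 p.2 ∧ p.1 ^ 2 + D * p.2 ^ 2 = γ)

lemma mem_prim {D γ : ℕ} (hD : 0 < D) (p : ℕ × ℕ) :
    p ∈ prim D γ ↔ Nat.Coprime p.1 p.2 ∧ p.1 ^ 2 + D * p.2 ^ 2 = γ := by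
  unfold prim
  simp only [Finset.mem_filter, Finset.mem_product, Finset.mem_range, and_iff_right_iff_imp]
  rintro ⟨-, h⟩
  constructor
  · nlinarith [Nat.le_self_pow (n := 2) (by norm_num) p.1, Nat.zero_le (D * p.2 ^ 2)]
  · nlinarith [Nat.le_self_pow (n := 2) (by norm_num) p.2, Nat.zero_le (p.1 ^ 2),
      Nat.mul_le_mul_right (p.2 ^ 2) hD]

/-- two vectors in the same (or conjugate) class have vanishing determinant -/
lemma det_zero (D k M x y x' y' : ℤ) (hM : 0 < M) (hk : k ^ 2 < D)
    (h1 : x ^ 2 + D * y ^ 2 = k * M) (h2 : x' ^ 2 + D * y' ^ 2 = k * M)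
    (h3 : M ∣ x * y' - x' * y) (h4 : M ∣ x * x' + D * y * y') : x * y' - x' * y = 0 := by
  obtain ⟨B, hB⟩ := h3
  obtain ⟨A, hA⟩ := h4
  have h : M ^ 2 * (A ^ 2 + D * B ^ 2) = M ^ 2 * k ^ 2 := by
    calc M ^ 2 * (A ^ 2 + D * B ^ 2) = (M * A) ^ 2 + D * (M * B) ^ 2 := by ring
      _ = (x ^ 2 + D * y ^ 2) * (x' ^ 2 + D * y' ^ 2) := by rw [← hA, ← hB]; ring
      _ = M ^ 2 * k ^ 2 := by rw [h1, h2]; ring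
  have h' := mul_left_cancel₀ (by positivity) h
  have hB0 : B = 0 := by
    by_contra hne
    have : 1 ≤ B ^ 2 := by
      have := sq_nonneg B
      have : B ^ 2 ≠ 0 := by positivity
      omega
    nlinarith [sq_nonneg A, sq_nonneg k]
  rw [hB, hB0, mul_zero]

lemma cast_natAbs_cases (M : ℕ) (X : ℤ) :
    (X : ZMod M) = (X.natAbs : ZMod M) ∨ (X : ZMod M) = -(X.natAbs : ZMod M) := by
  rcases Int.natAbs_eq X with h | h
  · left
    have := congrArg (fun n : ℤ => (n : ZMod M)) h
    simpa only [Int.cast_natCast] using this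
  · right
    have := congrArg (fun n : ℤ => (n : ZMod M)) h
    simpa only [Int.cast_natCast, Int.cast_neg] using this

lemma card_prim (D k M : ℕ) [NeZero M] (hM : 1 < M) (hDM : Nat.Coprime D M) (hk : k ^ 2 < D)
    (hkp : 0 < k)
    (Hex : ∀ z : ℤ, (M : ℤ) ∣ z ^ 2 + D →
      ∃ X Y : ℤ, IsCoprime X Y ∧ X ^ 2 + D * Y ^ 2 = k * M ∧ (M : ℤ) ∣ X - z * Y) :
    (Zset M (-(D : ZMod M))).card = 2 * (prim D (k * M)).card := by
  have hD : 0 < D := lt_of_le_of_lt (Nat.zero_le _) hk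
  set φ : ℕ × ℕ → ZMod M := fun p => (p.1 : ZMod M) * (p.2 : ZMod M)⁻¹ with hφ
  have key : ∀ p ∈ prim D (k * M), 0 < p.1 ∧ 0 < p.2 ∧ (p.1 : ZMod M) = φ p * p.2 ∧
      φ p ^ 2 = -(D : ZMod M) := by
    rintro ⟨x, y⟩ hp
    obtain ⟨hc, he⟩ := (mem_prim hD _).mp hp
    simp only at hc he
    have hyM : Nat.Coprime y M := by
      rw [Nat.coprime_iff_gcd_eq_one]
      by_contra hne
      obtain ⟨q, hq, hqd⟩ := Nat.exists_prime_and_dvd hne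
      have h1 : q ∣ y := hqd.trans (Nat.gcd_dvd_left _ _)
      have h2 : q ∣ M := hqd.trans (Nat.gcd_dvd_right _ _)
      have h3 : q ∣ x ^ 2 := by
        have : q ∣ x ^ 2 + D * y ^ 2 := he ▸ (h2.mul_left k)
        exact (Nat.dvd_add_left ((h1.pow (by norm_num)).mul_left D)).mp this
      exact Nat.not_coprime_of_dvd_of_dvd hq.one_lt (hq.dvd_of_dvd_pow h3) h1 hc
    have hinv : (y : ZMod M) * (y : ZMod M)⁻¹ = 1 := ZMod.coe_mul_inv_eq_one y hyM
    have heZ : (x : ZMod M) ^ 2 + D * (y : ZMod M) ^ 2 = 0 := by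
      have := congrArg (fun n : ℕ => (n : ZMod M)) he
      simpa using this
    refine ⟨?_, ?_, ?_, ?_⟩
    · rcases Nat.eq_zero_or_pos x with rfl | h
      · exfalso
        have : y = 1 := by simpa using hc
        subst this
        have : D = k * M := by simpa using he
        have h2 : M ∣ D := ⟨k, by rw [this, mul_comm]⟩
        have := Nat.Coprime.eq_one_of_dvd hDM.symm h2
        omega
      · exact h
    · rcases Nat.eq_zero_or_pos y with rfl | h
      · exfalso
        have : (0:ℕ).gcd M = 1 := hyM
        simp at this
        omega
      · exact h
    · simp only [hφ]
      rw [mul_assoc, mul_comm ((y : ZMod M)⁻¹), hinv, mul_one]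
    · simp only [hφ]
      linear_combination (y : ZMod M)⁻¹ ^ 2 * heZ - D * (1 + (y : ZMod M) * (y : ZMod M)⁻¹) * hinv
  have cast0 : ∀ a : ℤ, (a : ZMod M) = 0 → (M : ℤ) ∣ a := fun a h =>
    (ZMod.intCast_zmod_eq_zero_iff_dvd a M).mp h
  have hMpos : (0 : ℤ) < M := by omega
  have hk' : (k : ℤ) ^ 2 < D := by exact_mod_cast hk
  have hinj : Set.InjOn φ (prim D (k * M)) := by
    intro p hp p' hp' hpp
    obtain ⟨h1, h2, h3, h4⟩ := key p hp
    obtain ⟨h1', h2', h3', h4'⟩ := key p' hp'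
    obtain ⟨hc, he⟩ := (mem_prim hD _).mp hp
    obtain ⟨hc', he'⟩ := (mem_prim hD _).mp hp'
    have hdet := det_zero D k M p.1 p.2 p'.1 p'.2 hMpos hk' (by exact_mod_cast he)
      (by exact_mod_cast he') (cast0 _ (by push_cast; rw [h3, h3', hpp]; ring))
      (cast0 _ (by push_cast; rw [h3, h3', hpp]; linear_combination (p.2 : ZMod M) * p'.2 * h4'))
    have hdet' : p.1 * p'.2 = p'.1 * p.2 := by
      have : (p.1 : ℤ) * p'.2 = p'.1 * p.2 := by linarith
      exact_mod_cast this
    have d1 : p.1 ∣ p'.1 := hc.dvd_of_dvd_mul_right ⟨p'.2, hdet'.symm⟩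
    have d2 : p'.1 ∣ p.1 := hc'.dvd_of_dvd_mul_right ⟨p.2, hdet'⟩
    have e1 := Nat.dvd_antisymm d1 d2
    rw [e1] at hdet'
    have e2 := Nat.eq_of_mul_eq_mul_left h1' hdet'
    exact Prod.ext e1 e2.symm
  have hneg : ∀ p ∈ prim D (k * M), ∀ p' ∈ prim D (k * M), φ p ≠ -φ p' := by
    intro p hp p' hp' hpp
    obtain ⟨h1, h2, h3, h4⟩ := key p hp
    obtain ⟨h1', h2', h3', h4'⟩ := key p' hp'
    obtain ⟨hc, he⟩ := (mem_prim hD _).mp hp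
    obtain ⟨hc', he'⟩ := (mem_prim hD _).mp hp'
    have hdet := det_zero D k M p.1 p.2 p'.1 (-p'.2) hMpos hk' (by exact_mod_cast he)
      (by rw [neg_sq]; exact_mod_cast he') (cast0 _ (by push_cast; rw [h3, h3', hpp]; ring))
      (cast0 _ (by push_cast; rw [h3, h3', hpp]; linear_combination -(p.2 : ZMod M) * p'.2 * h4'))
    have : 0 < (p.1 : ℤ) * p'.2 := by positivity
    have : 0 < (p'.1 : ℤ) * p.2 := by positivity
    linarith
  have hZ : Zset M (-(D : ZMod M)) =
      (prim D (k * M)).image φ ∪ (prim D (k * M)).image (fun p => -φ p) := by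
    ext z
    simp only [Zset, Finset.mem_filter, Finset.mem_univ, true_and, Finset.mem_union,
      Finset.mem_image]
    constructor
    · intro hz
      obtain ⟨X, Y, hcop, hXY, hdvd⟩ := Hex (z.val : ℤ) (by
        apply cast0
        push_cast
        rw [ZMod.natCast_zmod_val, hz]; ring)
      have hmem : (X.natAbs, Y.natAbs) ∈ prim D (k * M) := by
        rw [mem_prim hD]
        refine ⟨Int.isCoprime_iff_gcd_eq_one.mp hcop, ?_⟩
        zify
        simpa using hXY
      obtain ⟨h1, h2, h3, h4⟩ := key _ hmem
      have hXz : (X : ZMod M) = z * Y := by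
        have := (ZMod.intCast_zmod_eq_zero_iff_dvd _ M).mpr hdvd
        push_cast at this
        rw [ZMod.natCast_zmod_val] at this
        linear_combination this
      have hunit : (Y.natAbs : ZMod M) * (Y.natAbs : ZMod M)⁻¹ = 1 := by
        have hne : IsUnit ((Y.natAbs : ℕ) : ZMod M) := by
          have hDu : IsUnit ((D : ℕ) : ZMod M) := (ZMod.isUnit_iff_coprime _ _).mpr hDM
          rw [ZMod.isUnit_iff_coprime]
          rw [Nat.coprime_iff_gcd_eq_one]
          by_contra hne
          obtain ⟨q, hq, hqd⟩ := Nat.exists_prime_and_dvd hne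
          have g1 : q ∣ Y.natAbs := hqd.trans (Nat.gcd_dvd_left _ _)
          have g2 : q ∣ M := hqd.trans (Nat.gcd_dvd_right _ _)
          obtain ⟨hc, he⟩ := (mem_prim hD _).mp hmem
          have g3 : q ∣ X.natAbs ^ 2 := by
            have : q ∣ X.natAbs ^ 2 + D * Y.natAbs ^ 2 := he ▸ (g2.mul_left k)
            exact (Nat.dvd_add_left ((g1.pow (by norm_num)).mul_left D)).mp this
          exact Nat.not_coprime_of_dvd_of_dvd hq.one_lt (hq.dvd_of_dvd_pow g3) g1 hc
        exact ZMod.mul_inv_of_unit _ hne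
      have hX : (X : ZMod M) = (X.natAbs : ZMod M) ∨ (X : ZMod M) = -(X.natAbs : ZMod M) := by
        exact cast_natAbs_cases M X
      have hY : (Y : ZMod M) = (Y.natAbs : ZMod M) ∨ (Y : ZMod M) = -(Y.natAbs : ZMod M) := by
        exact cast_natAbs_cases M Y
      have hz' : z = φ (X.natAbs, Y.natAbs) ∨ z = -φ (X.natAbs, Y.natAbs) := by
        simp only [hφ]
        rcases hX with hX | hX <;> rcases hY with hY | hY <;> rw [hX, hY] at hXz
        · left; rw [hXz]; linear_combination (-z) * hunit
        · right; rw [hXz]; linear_combination (-z) * hunit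
        · right
          linear_combination (-(Y.natAbs : ZMod M)⁻¹) * hXz - z * hunit
        · left
          linear_combination ((Y.natAbs : ZMod M)⁻¹) * hXz - z * hunit
      rcases hz' with h | h
      · exact Or.inl ⟨_, hmem, h.symm⟩
      · exact Or.inr ⟨_, hmem, h.symm⟩
    · rintro (⟨p, hp, rfl⟩ | ⟨p, hp, rfl⟩)
      · exact (key p hp).2.2.2
      · rw [neg_sq]; exact (key p hp).2.2.2
  rw [hZ, Finset.card_union_of_disjoint, Finset.card_image_of_injOn hinj,
    Finset.card_image_of_injOn (fun p hp p' hp' h => hinj hp hp' (neg_injective h)), two_mul]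
  rw [Finset.disjoint_left]
  intro z hz hz'
  obtain ⟨p, hp, rfl⟩ := Finset.mem_image.mp hz
  obtain ⟨p', hp', h⟩ := Finset.mem_image.mp hz'
  exact hneg p hp p' hp' h.symm

end Stmt3

namespace Stmt3

lemma jacobi_unit_sq (M : ℕ) [NeZero M] (d : ℤ) (hd : IsUnit (d : ZMod M))
    (hne : (Zset M (d : ZMod M)).Nonempty) : jacobiSym d M = 1 := by
  obtain ⟨z, hz⟩ := hne
  simp only [Zset, Finset.mem_filter, Finset.mem_univ, true_and] at hz
  have hzu : IsUnit z := by
    rw [← hz] at hd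
    exact (isUnit_pow_iff (by norm_num)).mp hd
  have h1 : ((z.val : ℤ) ^ 2) % M = d % M := by
    have : (((z.val : ℤ) ^ 2 : ℤ) : ZMod M) = (d : ℤ) := by
      push_cast; rw [ZMod.natCast_zmod_val, hz]
    exact (ZMod.intCast_eq_intCast_iff' _ _ M).mp this
  rw [← jacobiSym.mod_left' h1]
  apply jacobiSym.sq_one'
  have : IsUnit ((z.val : ℕ) : ZMod M) := by rwa [ZMod.natCast_zmod_val]
  have := (ZMod.isUnit_iff_coprime _ _).mp this
  exact this

lemma card_Zset (M : ℕ) [NeZero M] (d : ZMod M) (hd : IsUnit d) :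
    (Zset M d).card = 0 ∨ (Zset M d).card = (Zset M 1).card := by
  rcases (Zset M d).eq_empty_or_nonempty with h | ⟨z, hz⟩
  · left; rw [h]; rfl
  · right
    simp only [Zset, Finset.mem_filter, Finset.mem_univ, true_and] at hz
    have hzu : IsUnit z := by
      rw [← hz] at hd
      exact (isUnit_pow_iff (by norm_num)).mp hd
    obtain ⟨w, rfl⟩ := hzu
    symm
    apply Finset.card_bij (fun a _ => (w : ZMod M) * a)
    · intro a ha
      simp only [Zset, Finset.mem_filter, Finset.mem_univ, true_and] at ha ⊢
      rw [mul_pow, ha, hz, mul_one]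
    · intro a _ b _ h
      exact w.isUnit.mul_left_cancel h
    · intro b hb
      simp only [Zset, Finset.mem_filter, Finset.mem_univ, true_and] at hb ⊢
      refine ⟨(w⁻¹ : (ZMod M)ˣ) * b, ?_, by simp⟩
      rw [mul_pow, hb, ← hz, ← mul_pow]; simp

lemma card_Zset_one (M : ℕ) [NeZero M] (hM : M % 4 = 3) :
    4 ∣ (Zset M 1).card ∨ ((Zset M 1).card = 2 ∧
      ∀ d : ℤ, IsUnit (d : ZMod M) → jacobiSym d M = 1 → (Zset M (d : ZMod M)).Nonempty) := by
  have hodd : Odd M := Nat.odd_iff.mpr (by omega)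
  have hJ : jacobiSym (-1) M = -1 := by
    rw [jacobiSym.mod_right _ hodd]
    simp only [Int.natAbs_neg, Int.natAbs_one, mul_one, hM]
    norm_num
  set s : (ZMod M)ˣ →* (ZMod M)ˣ := powMonoidHom 2 with hs
  have hcard : (Zset M 1).card = Nat.card s.ker := by
    rw [Nat.card_eq_fintype_card, ← Finset.card_univ]
    symm
    refine Finset.card_bij (s := (Finset.univ : Finset s.ker)) (t := Zset M 1) (fun a _ => (((a : (ZMod M)ˣ)) : ZMod M)) ?_ ?_ ?_
    · intro a _
      have := a.2
      rw [MonoidHom.mem_ker] at this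
      simp only [Zset, Finset.mem_filter, Finset.mem_univ, true_and]
      have h := congrArg (fun u : (ZMod M)ˣ => (u : ZMod M)) this
      simpa [hs] using h
    · intro a _ b _ h
      exact Subtype.ext (Units.ext h)
    · intro b hb
      simp only [Zset, Finset.mem_filter, Finset.mem_univ, true_and] at hb
      refine ⟨⟨⟨b, b, by rw [← pow_two, hb], by rw [← pow_two, hb]⟩, ?_⟩, Finset.mem_univ _, rfl⟩
      rw [MonoidHom.mem_ker]
      ext
      simpa [hs] using hb
  have hp : IsPGroup 2 s.ker := by
    intro g
    refine ⟨1, ?_⟩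
    have := g.2
    rw [MonoidHom.mem_ker] at this
    exact Subtype.ext (by simpa [hs] using this)
  obtain ⟨n, hn⟩ := IsPGroup.iff_card.mp hp
  have hsq : ∀ u : (ZMod M)ˣ, u ∈ s.range → ∀ d : ℤ, (d : ZMod M) = u →
      (Zset M (d : ZMod M)).Nonempty := by
    rintro u ⟨w, rfl⟩ d hd
    refine ⟨w, ?_⟩
    simp [Zset, hd, hs]
  have hneg : (-1 : (ZMod M)ˣ) ∉ s.range := by
    intro h
    have := jacobi_unit_sq M (-1) (by simp) (hsq _ h (-1) (by simp))
    rw [hJ] at this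
    norm_num at this
  match n, hn with
  | 0, hn =>
    exfalso
    apply hneg
    have hbot : s.ker = ⊥ := Subgroup.card_eq_one.mp (by simpa using hn)
    have hinj := (MonoidHom.ker_eq_bot_iff s).mp hbot
    have hsurj := Finite.surjective_of_injective hinj
    exact hsurj _
  | 1, hn =>
    right
    refine ⟨by rw [hcard, hn]; norm_num, ?_⟩
    intro d hd hJd
    have hidx : s.range.index = 2 := by
      have h1 := Subgroup.card_mul_index s.range
      have h2 := Subgroup.card_mul_index s.ker
      rw [Subgroup.index_ker, hn, ← h1, mul_comm] at h2
      have hpos : 0 < Nat.card s.range := Nat.card_pos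
      have := Nat.eq_of_mul_eq_mul_left hpos h2
      simpa using this.symm
    obtain ⟨u, hu⟩ := hd
    by_cases hur : u ∈ s.range
    · exact hsq u hur d hu.symm
    · exfalso
      have hm : u * (-1) ∈ s.range :=
        (Subgroup.mul_mem_iff_of_index_two hidx).mpr (by simp [hur, hneg])
      have h1 := jacobi_unit_sq M (-d) (by rw [Int.cast_neg, ← hu]; exact u.isUnit.neg)
        (hsq _ hm (-d) (by simp [hu]))
      rw [neg_eq_neg_one_mul, jacobiSym.mul_left, hJ, hJd] at h1
      norm_num at h1
  | (n + 2), hn =>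
    left
    rw [hcard, hn, pow_add]
    exact Dvd.intro_left _ rfl

lemma unit_of_coprime (M : ℕ) (d : ℤ) (D : ℕ) (hd : d = -(D : ℤ)) (h : Nat.Coprime D M) :
    IsUnit (d : ZMod M) := by
  rw [hd]; push_cast
  exact ((ZMod.isUnit_iff_coprime _ _).mpr h).neg

lemma Zset_empty_of (M : ℕ) [NeZero M] (d : ℤ) (hd : IsUnit (d : ZMod M)) (h : jacobiSym d M ≠ 1) :
    (Zset M (d : ZMod M)).card = 0 := by
  rw [Finset.card_eq_zero]
  by_contra hne
  exact h (jacobi_unit_sq M d hd (Finset.nonempty_iff_ne_empty.mpr hne))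

lemma coprimes (M : ℕ) (h2 : M % 2 ≠ 0) (h3 : M % 3 ≠ 0) (h13 : M % 13 ≠ 0) :
    Nat.Coprime 6 M ∧ Nat.Coprime 13 M ∧ Nat.Coprime 78 M := by
  have a2 : Nat.Coprime 2 M := (Nat.Prime.coprime_iff_not_dvd Nat.prime_two).mpr (by omega)
  have a3 : Nat.Coprime 3 M := (Nat.Prime.coprime_iff_not_dvd Nat.prime_three).mpr (by omega)
  have a13 : Nat.Coprime 13 M :=
    (Nat.Prime.coprime_iff_not_dvd (by norm_num)).mpr (by omega)
  exact ⟨a2.mul_left a3, a13, (a2.mul_left a3).mul_left a13⟩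

lemma Z_sum_seven (M : ℕ) [NeZero M] (hM : M % 24 = 7) (h13 : M % 13 ≠ 0) :
    4 ∣ (Zset M (-((6 : ℕ) : ZMod M))).card + (Zset M (-((78 : ℕ) : ZMod M))).card +
      (Zset M (-((13 : ℕ) : ZMod M))).card := by
  obtain ⟨c6, c13, c78⟩ := coprimes M (by omega) (by omega) h13
  have hodd : Odd M := Nat.odd_iff.mpr (by omega)
  have u6 := unit_of_coprime M (-6) 6 (by norm_num) c6
  have u13 := unit_of_coprime M (-13) 13 (by norm_num) c13
  have u78 := unit_of_coprime M (-78) 78 (by norm_num) c78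
  have e6 : (-((6 : ℕ) : ZMod M)) = ((-6 : ℤ) : ZMod M) := by push_cast; rfl
  have e13 : (-((13 : ℕ) : ZMod M)) = ((-13 : ℤ) : ZMod M) := by push_cast; rfl
  have e78 : (-((78 : ℕ) : ZMod M)) = ((-78 : ℤ) : ZMod M) := by push_cast; rfl
  rw [e6, e13, e78]
  have k6 := card_Zset M _ u6
  have k13 := card_Zset M _ u13
  have k78 := card_Zset M _ u78
  rcases card_Zset_one M (by omega) with h | ⟨h, hne⟩
  · refine Nat.dvd_add (Nat.dvd_add ?_ ?_) ?_
    · rcases k6 with k | k <;> rw [k]; exacts [dvd_zero _, h]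
    · rcases k78 with k | k <;> rw [k]; exacts [dvd_zero _, h]
    · rcases k13 with k | k <;> rw [k]; exacts [dvd_zero _, h]
  · have hJ1 : jacobiSym (-1) M = -1 := by
      rw [jacobiSym.mod_right _ hodd]
      simp only [Int.natAbs_neg, Int.natAbs_one, mul_one, show M % 4 = 3 by omega]
      norm_num
    have hJ6 : jacobiSym (-6) M = 1 := by
      rw [jacobiSym.mod_right _ hodd]
      rw [show 4 * (-6 : ℤ).natAbs = 24 by rfl, hM]
      norm_num
    have full : ∀ d : ℤ, IsUnit (d : ZMod M) → jacobiSym d M = 1 →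
        (Zset M (d : ZMod M)).card = 2 := by
      intro d hd hJ
      have := Finset.card_pos.mpr (hne d hd hJ)
      rcases card_Zset M _ hd with k | k <;> omega
    have hJ13 : jacobiSym 13 M = 1 ∨ jacobiSym 13 M = -1 :=
      jacobiSym.eq_one_or_neg_one (by simpa [Int.gcd] using c13)
    have hJ78 : jacobiSym (-78) M = jacobiSym 13 M := by
      rw [show (-78 : ℤ) = -6 * 13 by norm_num, jacobiSym.mul_left, hJ6, one_mul]
    have hJm13 : jacobiSym (-13) M = - jacobiSym 13 M := by
      rw [show (-13 : ℤ) = -1 * 13 by norm_num, jacobiSym.mul_left, hJ1]; ring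
    rw [full _ u6 hJ6]
    rcases hJ13 with hJ | hJ
    · rw [full _ u78 (by rw [hJ78, hJ]), Zset_empty_of M _ u13 (by rw [hJm13, hJ]; norm_num)]
    · rw [full _ u13 (by rw [hJm13, hJ]; norm_num),
        Zset_empty_of M _ u78 (by rw [hJ78, hJ]; norm_num)]

lemma Z_sum_nineteen (M : ℕ) [NeZero M] (hM : M % 24 = 19) (h13 : M % 13 ≠ 0) :
    4 ∣ (Zset M (-((78 : ℕ) : ZMod M))).card + (Zset M (-((13 : ℕ) : ZMod M))).card := by
  obtain ⟨c6, c13, c78⟩ := coprimes M (by omega) (by omega) h13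
  have hodd : Odd M := Nat.odd_iff.mpr (by omega)
  have u13 := unit_of_coprime M (-13) 13 (by norm_num) c13
  have u78 := unit_of_coprime M (-78) 78 (by norm_num) c78
  have e13 : (-((13 : ℕ) : ZMod M)) = ((-13 : ℤ) : ZMod M) := by push_cast; rfl
  have e78 : (-((78 : ℕ) : ZMod M)) = ((-78 : ℤ) : ZMod M) := by push_cast; rfl
  rw [e13, e78]
  have k13 := card_Zset M _ u13
  have k78 := card_Zset M _ u78
  rcases card_Zset_one M (by omega) with h | ⟨h, hne⟩
  · refine Nat.dvd_add ?_ ?_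
    · rcases k78 with k | k <;> rw [k]; exacts [dvd_zero _, h]
    · rcases k13 with k | k <;> rw [k]; exacts [dvd_zero _, h]
  · have hJ6 : jacobiSym 6 M = 1 := by
      rw [jacobiSym.mod_right _ hodd]
      rw [show 4 * (6 : ℤ).natAbs = 24 by rfl, hM]
      norm_num
    have full : ∀ d : ℤ, IsUnit (d : ZMod M) → jacobiSym d M = 1 →
        (Zset M (d : ZMod M)).card = 2 := by
      intro d hd hJ
      have := Finset.card_pos.mpr (hne d hd hJ)
      rcases card_Zset M _ hd with k | k <;> omega
    have hJ78 : jacobiSym (-78) M = jacobiSym (-13) M := by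
      rw [show (-78 : ℤ) = 6 * (-13) by norm_num, jacobiSym.mul_left, hJ6, one_mul]
    by_cases hJ : jacobiSym (-13) M = 1
    · rw [full _ u78 (by rw [hJ78, hJ]), full _ u13 hJ]
    · rw [Zset_empty_of M _ u78 (by rw [hJ78]; exact hJ), Zset_empty_of M _ u13 hJ]
      norm_num

/-- parity of the primitive representation numbers -/
lemma prim_seven (M : ℕ) (hM : M % 24 = 7) (h13 : M % 13 ≠ 0) :
    2 ∣ (prim 6 (1 * M)).card + (prim 78 (1 * M)).card + (prim 13 (2 * M)).card := by
  haveI : NeZero M := ⟨by omega⟩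
  obtain ⟨c6, c13, c78⟩ := coprimes M (by omega) (by omega) h13
  have h := Z_sum_seven M hM h13
  have hM0 : (0 : ℤ) < M := by omega
  rw [card_prim 6 1 M (by omega) c6 (by norm_num) (by norm_num)
      (exists_rep 6 1 M (by norm_num) hM0 (H6 M (by omega))),
    card_prim 78 1 M (by omega) c78 (by norm_num) (by norm_num)
      (exists_rep 78 1 M (by norm_num) hM0 (H78a M (by omega))),
    card_prim 13 2 M (by omega) c13 (by norm_num) (by norm_num)
      (exists_rep 13 2 M (by norm_num) hM0 (H13 M (by omega)))] at h
  omega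

lemma prim_nineteen (M : ℕ) (hM : M % 24 = 19) (h13 : M % 13 ≠ 0) :
    2 ∣ (prim 78 (6 * M)).card + (prim 13 (2 * M)).card := by
  haveI : NeZero M := ⟨by omega⟩
  obtain ⟨c6, c13, c78⟩ := coprimes M (by omega) (by omega) h13
  have h := Z_sum_nineteen M hM h13
  have hM0 : (0 : ℤ) < M := by omega
  rw [card_prim 78 6 M (by omega) c78 (by norm_num) (by norm_num)
      (exists_rep 78 6 M (by norm_num) hM0 (H78b M (by omega))),
    card_prim 13 2 M (by omega) c13 (by norm_num) (by norm_num)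
      (exists_rep 13 2 M (by norm_num) hM0 (H13 M (by omega)))] at h
  omega

end Stmt3

namespace Stmt3

/-- all representations of `γ` by `α x² + β y²` with `x, y ≥ 0` -/
def Q (α β γ : ℕ) : Finset (ℕ × ℕ) :=
  (Finset.range (γ + 1) ×ˢ Finset.range (γ + 1)).filter
    (fun p => α * p.1 ^ 2 + β * p.2 ^ 2 = γ)

lemma mem_Q {α β γ : ℕ} (hα : 0 < α) (hβ : 0 < β) (p : ℕ × ℕ) :
    p ∈ Q α β γ ↔ α * p.1 ^ 2 + β * p.2 ^ 2 = γ := by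
  unfold Q
  simp only [Finset.mem_filter, Finset.mem_product, Finset.mem_range, and_iff_right_iff_imp]
  intro h
  constructor
  · nlinarith [Nat.le_self_pow (n := 2) (by norm_num) p.1, Nat.zero_le (β * p.2 ^ 2),
      Nat.mul_le_mul_right (p.1 ^ 2) hα]
  · nlinarith [Nat.le_self_pow (n := 2) (by norm_num) p.2, Nat.zero_le (α * p.1 ^ 2),
      Nat.mul_le_mul_right (p.2 ^ 2) hβ]

/-- index set of the possible gcds -/
def gs (M : ℕ) : Finset ℕ := (Finset.range (M + 1)).filter (fun g => 0 < g ∧ g ^ 2 ∣ M)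

lemma card_Q_eq_sum (D k M : ℕ) (hD : 0 < D) (hk : 0 < k) (hM : 0 < M)
    (H : ∀ g, g ^ 2 ∣ k * M → g ^ 2 ∣ M) :
    (Q 1 D (k * M)).card = ∑ g ∈ gs M, (prim D (k * (M / g ^ 2))).card := by
  rw [Finset.card_eq_sum_card_fiberwise (f := fun p : ℕ × ℕ => Nat.gcd p.1 p.2) (t := gs M)]
  · apply Finset.sum_congr rfl
    intro g hg
    simp only [gs, Finset.mem_filter, Finset.mem_range] at hg
    obtain ⟨-, hg0, N, hN⟩ := hg
    have hdiv : M / g ^ 2 = N := by rw [hN]; exact Nat.mul_div_cancel_left _ (by positivity)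
    rw [hdiv]
    symm
    apply Finset.card_bij (fun p _ => (g * p.1, g * p.2))
    · intro p hp
      rw [mem_prim hD] at hp
      simp only [Finset.mem_filter, mem_Q one_pos hD]
      constructor
      · rw [hN]
        calc 1 * (g * p.1) ^ 2 + D * (g * p.2) ^ 2 = g ^ 2 * (p.1 ^ 2 + D * p.2 ^ 2) := by ring
          _ = _ := by rw [hp.2]; ring
      · rw [Nat.gcd_mul_left, hp.1.gcd_eq_one, mul_one]
    · rintro ⟨a, b⟩ _ ⟨c, d⟩ _ h
      simp only [Prod.mk.injEq] at h ⊢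
      exact ⟨Nat.eq_of_mul_eq_mul_left hg0 h.1, Nat.eq_of_mul_eq_mul_left hg0 h.2⟩
    · rintro ⟨x, y⟩ hp
      simp only [Finset.mem_filter, mem_Q one_pos hD] at hp
      obtain ⟨h1, h2⟩ := hp
      obtain ⟨a, ha⟩ : g ∣ x := h2 ▸ Nat.gcd_dvd_left x y
      obtain ⟨b, hb⟩ : g ∣ y := h2 ▸ Nat.gcd_dvd_right x y
      refine ⟨(a, b), ?_, by rw [ha, hb]⟩
      rw [mem_prim hD]
      subst ha hb
      constructor
      · rw [Nat.gcd_mul_left] at h2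
        exact Nat.eq_of_mul_eq_mul_left hg0 (by rw [h2, mul_one])
      · apply Nat.eq_of_mul_eq_mul_left (show 0 < g ^ 2 by positivity)
        rw [hN] at h1
        linarith
  · rintro ⟨x, y⟩ hp
    have hp' := (mem_Q one_pos hD _).mp (Finset.mem_coe.mp hp)
    simp only [one_mul] at hp'
    have hdvd : (Nat.gcd x y) ^ 2 ∣ M := by
      apply H
      rw [← hp']
      exact dvd_add (pow_dvd_pow_of_dvd (Nat.gcd_dvd_left x y) 2)
        (Dvd.dvd.mul_left (pow_dvd_pow_of_dvd (Nat.gcd_dvd_right x y) 2) _)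
    have h0 : 0 < Nat.gcd x y := by
      by_contra h
      have h : Nat.gcd x y = 0 := by omega
      rw [h] at hdvd
      simp at hdvd
      omega
    simp only [gs, Finset.coe_filter, Set.mem_setOf_eq, Finset.mem_range]
    refine ⟨?_, h0, hdvd⟩
    have := Nat.le_of_dvd hM hdvd
    nlinarith [Nat.le_self_pow (n := 2) (by norm_num) (Nat.gcd x y)]

lemma sq_dvd_aux (M : ℕ) (h2 : M % 2 ≠ 0) (h3 : M % 3 ≠ 0) (k : ℕ) (hk : k ∣ 6) (g : ℕ)
    (h : g ^ 2 ∣ k * M) : g ^ 2 ∣ M := by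
  have h6 : g ^ 2 ∣ 6 * M := h.trans (Nat.mul_dvd_mul_right hk M)
  have c2 : Nat.Coprime 2 g := by
    rw [Nat.Prime.coprime_iff_not_dvd Nat.prime_two]
    intro hd
    have : 2 ^ 2 ∣ 6 * M := (pow_dvd_pow_of_dvd hd 2).trans h6
    omega
  have c3 : Nat.Coprime 3 g := by
    rw [Nat.Prime.coprime_iff_not_dvd Nat.prime_three]
    intro hd
    have : 3 ^ 2 ∣ 6 * M := (pow_dvd_pow_of_dvd hd 2).trans h6
    omega
  have c6 : Nat.Coprime 6 g := by
    have := Nat.Coprime.mul_left c2 c3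
    simpa using this
  exact (Nat.Coprime.pow_left 2 c6.symm).dvd_of_dvd_mul_left h6

lemma quot_mod (M g : ℕ) (h2 : M % 2 ≠ 0) (h3 : M % 3 ≠ 0) (hg : g ∈ gs M) :
    (M / g ^ 2) % 24 = M % 24 ∧ (M % 13 ≠ 0 → (M / g ^ 2) % 13 ≠ 0) := by
  simp only [gs, Finset.mem_filter, Finset.mem_range] at hg
  obtain ⟨-, hg0, N, hN⟩ := hg
  have hdiv : M / g ^ 2 = N := by rw [hN]; exact Nat.mul_div_cancel_left _ (by positivity)
  rw [hdiv]
  have g2 : g % 2 ≠ 0 := by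
    intro h
    obtain ⟨a, rfl⟩ : 2 ∣ g := by omega
    apply h2; rw [hN, show (2 * a) ^ 2 * N = 2 * (2 * a ^ 2 * N) by ring]; omega
  have g3 : g % 3 ≠ 0 := by
    intro h
    obtain ⟨a, rfl⟩ : 3 ∣ g := by omega
    apply h3; rw [hN, show (3 * a) ^ 2 * N = 3 * (3 * a ^ 2 * N) by ring]; omega
  constructor
  · have : g ^ 2 % 24 = 1 := by
      have h24 : g % 24 < 24 := Nat.mod_lt _ (by norm_num)
      have e2 : (g % 24) % 2 ≠ 0 := by omega
      have e3 : (g % 24) % 3 ≠ 0 := by omega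
      rw [Nat.pow_mod]
      generalize g % 24 = r at *
      interval_cases r <;> simp_all
    rw [hN, Nat.mul_mod, this, one_mul, Nat.mod_mod]
  · intro h h'
    apply h
    rw [hN, Nat.mul_mod, h', mul_zero, Nat.zero_mod]

lemma Q_seven (M : ℕ) (hM : M % 24 = 7) (h13 : M % 13 ≠ 0) :
    2 ∣ (Q 1 6 M).card + (Q 1 78 M).card + (Q 1 13 (2 * M)).card := by
  have a := card_Q_eq_sum 6 1 M (by norm_num) (by norm_num) (by omega)
    (sq_dvd_aux M (by omega) (by omega) 1 (by norm_num))
  have b := card_Q_eq_sum 78 1 M (by norm_num) (by norm_num) (by omega)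
    (sq_dvd_aux M (by omega) (by omega) 1 (by norm_num))
  have c := card_Q_eq_sum 13 2 M (by norm_num) (by norm_num) (by omega)
    (sq_dvd_aux M (by omega) (by omega) 2 (by norm_num))
  have o : 1 * M = M := one_mul M
  rw [o] at a b
  rw [a, b, c, ← Finset.sum_add_distrib, ← Finset.sum_add_distrib]
  apply Finset.dvd_sum
  intro g hg
  obtain ⟨q1, q2⟩ := quot_mod M g (by omega) (by omega) hg
  exact prim_seven _ (by omega) (q2 h13)

lemma Q_nineteen (M : ℕ) (hM : M % 24 = 19) (h13 : M % 13 ≠ 0) :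
    2 ∣ (Q 1 78 (6 * M)).card + (Q 1 13 (2 * M)).card := by
  have b := card_Q_eq_sum 78 6 M (by norm_num) (by norm_num) (by omega)
    (sq_dvd_aux M (by omega) (by omega) 6 (by norm_num))
  have c := card_Q_eq_sum 13 2 M (by norm_num) (by norm_num) (by omega)
    (sq_dvd_aux M (by omega) (by omega) 2 (by norm_num))
  rw [b, c, ← Finset.sum_add_distrib]
  apply Finset.dvd_sum
  intro g hg
  obtain ⟨q1, q2⟩ := quot_mod M g (by omega) (by omega) hg
  exact prim_nineteen _ (by omega) (q2 h13)

/-- general transfer between two representation sets by an injective map -/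
lemma Q_transfer {α β γ α' β' γ' : ℕ} (hα : 0 < α) (hβ : 0 < β) (hα' : 0 < α') (hβ' : 0 < β')
    (u v : ℕ) (hu : 0 < u) (hv : 0 < v)
    (h1 : ∀ x y, α * x ^ 2 + β * y ^ 2 = γ ↔ α' * (u * x) ^ 2 + β' * (v * y) ^ 2 = γ')
    (h2 : ∀ x y, α' * x ^ 2 + β' * y ^ 2 = γ' → u ∣ x ∧ v ∣ y) :
    (Q α β γ).card = (Q α' β' γ').card := by
  apply Finset.card_bij (fun p _ => (u * p.1, v * p.2))
  · intro p hp
    rw [mem_Q hα hβ] at hp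
    rw [mem_Q hα' hβ']
    exact (h1 _ _).mp hp
  · rintro ⟨a, b⟩ _ ⟨c, d⟩ _ h
    simp only [Prod.mk.injEq] at h ⊢
    exact ⟨Nat.eq_of_mul_eq_mul_left hu h.1, Nat.eq_of_mul_eq_mul_left hv h.2⟩
  · rintro ⟨x, y⟩ hp
    rw [mem_Q hα' hβ'] at hp
    obtain ⟨⟨a, rfl⟩, ⟨b, rfl⟩⟩ := h2 _ _ hp
    exact ⟨(a, b), (mem_Q hα hβ _).mpr ((h1 _ _).mpr hp), rfl⟩

lemma Q_swap {α β γ : ℕ} (hα : 0 < α) (hβ : 0 < β) : (Q α β γ).card = (Q β α γ).card := by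
  apply Finset.card_bij (fun p _ => (p.2, p.1))
  · intro p hp
    rw [mem_Q hα hβ] at hp
    rw [mem_Q hβ hα]
    simp only
    omega
  · rintro ⟨a, b⟩ _ ⟨c, d⟩ _ h
    simp only [Prod.mk.injEq] at h ⊢
    exact ⟨h.2, h.1⟩
  · rintro ⟨x, y⟩ hp
    rw [mem_Q hβ hα] at hp
    exact ⟨(y, x), (mem_Q hα hβ _).mpr (by simp only at hp ⊢; omega), rfl⟩

lemma dvd13 (x : ℕ) (h : 13 ∣ x ^ 2) : 13 ∣ x :=
  (by norm_num : Nat.Prime 13).dvd_of_dvd_pow h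

lemma dvd13_both (x y : ℕ) (h : 13 ∣ x ^ 2 + 6 * y ^ 2) : 13 ∣ x ∧ 13 ∣ y := by
  have key : ∀ a b : ZMod 13, a ^ 2 + 6 * b ^ 2 = 0 → a = 0 ∧ b = 0 := by decide
  have := (ZMod.natCast_eq_zero_iff (x ^ 2 + 6 * y ^ 2) 13).mpr h
  push_cast at this
  obtain ⟨h1, h2⟩ := key _ _ this
  exact ⟨(ZMod.natCast_eq_zero_iff _ _).mp h1, (ZMod.natCast_eq_zero_iff _ _).mp h2⟩

/-- transfer for the form with coefficients one and thirteen -/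
lemma QA (N : ℕ) : (Q 1 13 (2 * (13 * N))).card = (Q 1 13 (2 * N)).card := by
  rw [Q_swap (α := 1) (β := 13) (γ := 2 * N) (by norm_num) (by norm_num)]
  symm
  apply Q_transfer (by norm_num) (by norm_num) (by norm_num) (by norm_num) 13 1 (by norm_num)
    (by norm_num)
  · intro x y
    constructor <;> intro h <;> nlinarith
  · intro x y h
    refine ⟨dvd13 x ?_, one_dvd _⟩
    exact ⟨2 * N - y ^ 2, by omega⟩

/-- transfer for the form with coefficients one and six -/
lemma QB (N : ℕ) : (Q 1 6 (13 * N)).card = (Q 13 78 N).card := by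
  symm
  apply Q_transfer (by norm_num) (by norm_num) (by norm_num) (by norm_num) 13 13 (by norm_num)
    (by norm_num)
  · intro x y
    constructor <;> intro h <;> nlinarith
  · intro x y h
    exact dvd13_both x y ⟨N, by omega⟩

lemma QC (N : ℕ) : (Q 1 78 (13 * N)).card = (Q 13 6 N).card := by
  symm
  apply Q_transfer (by norm_num) (by norm_num) (by norm_num) (by norm_num) 13 1 (by norm_num)
    (by norm_num)
  · intro x y
    constructor <;> intro h <;> nlinarith
  · intro x y h
    refine ⟨dvd13 x ⟨N - 6 * y ^ 2, by omega⟩, one_dvd _⟩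

lemma QD (N : ℕ) : (Q 13 6 (13 * N)).card = (Q 1 78 N).card := by
  symm
  apply Q_transfer (by norm_num) (by norm_num) (by norm_num) (by norm_num) 1 13 (by norm_num)
    (by norm_num)
  · intro x y
    constructor <;> intro h <;> nlinarith
  · intro x y h
    refine ⟨one_dvd _, dvd13 y ?_⟩
    omega

lemma QE (N : ℕ) : (Q 13 78 (13 * N)).card = (Q 1 6 N).card := by
  symm
  apply Q_transfer (by norm_num) (by norm_num) (by norm_num) (by norm_num) 1 1 (by norm_num)
    (by norm_num)
  · intro x y
    constructor <;> intro h <;> nlinarith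
  · intro x y h
    exact ⟨one_dvd _, one_dvd _⟩

lemma QF (M : ℕ) : (Q 13 6 M).card = (Q 1 78 (6 * M)).card := by
  rw [Q_swap (by norm_num) (by norm_num)]
  apply Q_transfer (by norm_num) (by norm_num) (by norm_num) (by norm_num) 6 1 (by norm_num)
    (by norm_num)
  · intro x y
    constructor <;> intro h <;> nlinarith
  · intro x y h
    refine ⟨?_, one_dvd _⟩
    have h6 : 6 ∣ x ^ 2 := ⟨M - 13 * y ^ 2, by omega⟩
    have h2 : 2 ∣ x := Nat.prime_two.dvd_of_dvd_pow (dvd_trans (by norm_num) h6)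
    have h3 : 3 ∣ x := Nat.prime_three.dvd_of_dvd_pow (dvd_trans (by norm_num) h6)
    omega

theorem T_even (M : ℕ) :
    (M % 24 = 7 → 2 ∣ (Q 1 6 M).card + (Q 1 78 M).card + (Q 1 13 (2 * M)).card) ∧
    (M % 24 = 19 → 2 ∣ (Q 13 6 M).card + (Q 13 78 M).card + (Q 1 13 (2 * M)).card) := by
  induction M using Nat.strong_induction_on with
  | _ M ih =>
    by_cases h13 : M % 13 = 0
    · obtain ⟨N, rfl⟩ : 13 ∣ M := by omega
      constructor
      · intro h
        have := (ih N (by omega)).2 (by omega)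
        rw [QA, QB, QC]
        omega
      · intro h
        have := (ih N (by omega)).1 (by omega)
        rw [QA, QD, QE]
        omega
    · refine ⟨fun h => Q_seven M h h13, fun h => ?_⟩
      have h0 : (Q 13 78 M).card = 0 := by
        rw [Finset.card_eq_zero, Finset.eq_empty_iff_forall_notMem]
        intro p hp
        rw [mem_Q (by norm_num) (by norm_num)] at hp
        omega
      rw [h0, QF]
      exact Q_nineteen M h h13

end Stmt3

namespace Stmt3
open PowerSeries

/-- product of the even factors -/
def EE {A : Type*} [CommRing A] (q : A) (s n : ℕ) : A := ∏ j ∈ Finset.Ico s n, (1 - q ^ (2 * (j + 1)))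
/-- product of odd factors -/
def OO {A : Type*} [CommRing A] (q : A) (s : ℕ) : A := ∏ j ∈ Finset.range s, (1 - q ^ (2 * j + 1))

lemma shanks_aux {A : Type*} [CommRing A] (q : A) (n m : ℕ) (hm : m ≤ n) :
    ∑ s ∈ Finset.range m, q ^ (s * (2 * n + 3)) * EE q s (n + 1) * OO q s -
      (1 - q ^ (2 * n + 1)) * ∑ s ∈ Finset.range m, q ^ (s * (2 * n + 1)) * EE q s n * OO q s
      = q ^ (m * (2 * n + 1)) * OO q m * (1 - q ^ (2 * m)) * EE q m n := by
  induction m with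
  | zero => simp
  | succ m ih =>
    have ih := ih (by omega)
    rw [Finset.sum_range_succ, Finset.sum_range_succ]
    have e1 : EE q m (n + 1) = EE q m n * (1 - q ^ (2 * (n + 1))) := by
      unfold EE; rw [Finset.prod_Ico_succ_top (by omega)]
    have e2 : EE q m n = (1 - q ^ (2 * (m + 1))) * EE q (m + 1) n := by
      unfold EE; rw [Finset.prod_eq_prod_Ico_succ_bot (by omega)]
    have e3 : OO q (m + 1) = OO q m * (1 - q ^ (2 * m + 1)) := by
      unfold OO; rw [Finset.prod_range_succ]
    rw [e1, e3]
    have : q ^ ((m + 1) * (2 * n + 1)) * (OO q m * (1 - q ^ (2 * m + 1))) * (1 - q ^ (2 * (m + 1))) *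
        EE q (m + 1) n = q ^ ((m + 1) * (2 * n + 1)) * (OO q m * (1 - q ^ (2 * m + 1))) * EE q m n := by
      rw [e2]; ring
    rw [this]
    have e4 : q ^ (m * (2 * n + 3)) = q ^ (m * (2 * n + 1)) * q ^ (2 * m) := by
      rw [← pow_add]; congr 1; ring
    rw [e4]
    linear_combination ih

lemma shanks {A : Type*} [CommRing A] (q : A) (n : ℕ) :
    (∑ s ∈ Finset.range (2 * n), q ^ (s * (s + 1) / 2)) * OO q n =
      ∑ s ∈ Finset.range n, q ^ (s * (2 * n + 1)) * EE q s n * OO q s := by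
  induction n with
  | zero => simp
  | succ n ih =>
    have h := shanks_aux q n n le_rfl
    rw [← ih] at h
    rw [show 2 * (n + 1) = 2 * n + 1 + 1 by ring, Finset.sum_range_succ, Finset.sum_range_succ,
      Finset.sum_range_succ (fun s => q ^ (s * (2 * n + 1 + 1 + 1)) * _ * _)]
    have e3 : OO q (n + 1) = OO q n * (1 - q ^ (2 * n + 1)) := by
      unfold OO; rw [Finset.prod_range_succ]
    have e5 : EE q n n = 1 := by unfold EE; simp
    have e6 : EE q n (n + 1) = 1 - q ^ (2 * (n + 1)) := by unfold EE; simp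
    have d1 : 2 * n * (2 * n + 1) / 2 = n * (2 * n + 1) := by
      rw [mul_assoc]; exact Nat.mul_div_cancel_left _ (by norm_num)
    have d2 : (2 * n + 1) * (2 * n + 1 + 1) / 2 = n * (2 * n + 1) + (2 * n + 1) := by
      rw [show (2 * n + 1) * (2 * n + 1 + 1) = 2 * (n * (2 * n + 1) + (2 * n + 1)) by ring]
      exact Nat.mul_div_cancel_left _ (by norm_num)
    rw [d1, d2, e3, e6]
    rw [e5] at h
    have e4 : q ^ (n * (2 * n + 1 + 1 + 1)) = q ^ (n * (2 * n + 1)) * q ^ (2 * n) := by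
      rw [← pow_add]; congr 1; ring
    rw [e4]
    linear_combination (-1) * h

/-- Euler function modulo two -/
noncomputable def f : (ZMod 2)⟦X⟧ := pentagonalSeries (ZMod 2)

noncomputable def FF (N : ℕ) : (ZMod 2)⟦X⟧ := ∏ j ∈ Finset.range N, (1 - X ^ (j + 1))

lemma prod_cong_one (N : ℕ) (s : Finset ℕ) (h : ∀ j ∈ s, N ≤ j) :
    (X : (ZMod 2)⟦X⟧) ^ (N + 1) ∣ (∏ j ∈ s, (1 - X ^ (j + 1))) - 1 := by
  induction s using Finset.induction_on with
  | empty => simp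
  | insert a s ha ih =>
    rw [Finset.prod_insert ha]
    have h1 := ih (fun j hj => h j (Finset.mem_insert_of_mem hj))
    have h2 : (X : (ZMod 2)⟦X⟧) ^ (N + 1) ∣ X ^ (a + 1) :=
      pow_dvd_pow _ (by have := h a (Finset.mem_insert_self _ _); omega)
    have : ((1 - X ^ (a + 1)) * ∏ j ∈ s, (1 - X ^ (j + 1)) - 1 : (ZMod 2)⟦X⟧) =
      (∏ j ∈ s, (1 - X ^ (j + 1)) - 1) - X ^ (a + 1) * ∏ j ∈ s, (1 - X ^ (j + 1)) := by ring
    rw [this]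
    exact dvd_sub h1 (Dvd.dvd.mul_right h2 _)

lemma FF_cong (N : ℕ) : (X : (ZMod 2)⟦X⟧) ^ (N + 1) ∣ f - FF N := by
  have h : ∀ᶠ s : Finset ℕ in Filter.atTop, ∀ k ∈ Finset.range (N + 1),
      (∏ n ∈ s, (1 - X ^ (n + 1) : (ZMod 2)⟦X⟧)).coeff k = (pentagonalSeries (ZMod 2)).coeff k := by
    rw [Filter.eventually_all_finset]
    intro k _
    exact coeff_prod_one_sub_X_pow_eventually_eq _ k
  obtain ⟨s, hs1, hs2⟩ := (h.and (Filter.eventually_ge_atTop (Finset.range N))).exists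
  have h1 : (X : (ZMod 2)⟦X⟧) ^ (N + 1) ∣ f - ∏ n ∈ s, (1 - X ^ (n + 1)) := by
    rw [X_pow_dvd_iff]
    intro m hm
    rw [map_sub, hs1 m (Finset.mem_range.mpr hm), f, sub_self]
  have h2 : ∏ n ∈ s, (1 - X ^ (n + 1) : (ZMod 2)⟦X⟧) = FF N * ∏ n ∈ s \ Finset.range N, (1 - X ^ (n + 1)) := by
    rw [FF, mul_comm, Finset.prod_sdiff hs2]
  have h3 := prod_cong_one N (s \ Finset.range N) (by
    intro j hj; simp only [Finset.mem_sdiff, Finset.mem_range] at hj; omega)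
  rw [h2] at h1
  have : f - FF N = (f - FF N * ∏ n ∈ s \ Finset.range N, (1 - X ^ (n + 1))) +
    FF N * (∏ n ∈ s \ Finset.range N, (1 - X ^ (n + 1)) - 1) := by ring
  rw [this]
  exact dvd_add h1 (Dvd.dvd.mul_left h3 _)

/-- the theta series `∑ X^{n(n+1)/2}` -/
noncomputable def psi : (ZMod 2)⟦X⟧ :=
  open Classical in PowerSeries.mk (fun n => if ∃ s, s * (s + 1) / 2 = n then 1 else 0)

lemma tri_inj : StrictMono (fun s : ℕ => s * (s + 1) / 2) := by
  apply strictMono_nat_of_lt_succ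
  intro s
  have : (s + 1) * (s + 1 + 1) = s * (s + 1) + 2 * (s + 1) := by ring
  simp only [this]
  omega

lemma psi_cong (n : ℕ) :
    (X : (ZMod 2)⟦X⟧) ^ n ∣ psi - ∑ s ∈ Finset.range n, X ^ (s * (s + 1) / 2) := by
  classical
  rw [X_pow_dvd_iff]
  intro m hm
  rw [map_sub, map_sum, psi, coeff_mk]
  simp only [coeff_X_pow]
  split_ifs with h
  · obtain ⟨s, hs⟩ := h
    rw [Finset.sum_eq_single s]
    · simp [hs]
    · intro b _ hb
      rw [if_neg]
      intro h
      exact hb (tri_inj.injective (show b * (b + 1) / 2 = s * (s + 1) / 2 by omega))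
    · intro hsn
      exfalso
      apply hsn
      rw [Finset.mem_range]
      have : s ≤ s * (s + 1) / 2 := tri_inj.le_apply (x := s)
      omega
  · rw [Finset.sum_eq_zero, sub_self]
    intro s _
    rw [if_neg]
    intro h'
    exact h ⟨s, h'.symm⟩

instance : CharP (ZMod 2)⟦X⟧ 2 := by
  have : CharP (ZMod 2) 2 := inferInstance
  exact charP_of_injective_ringHom (f := (PowerSeries.C (R := ZMod 2))) PowerSeries.C_injective 2

lemma EE_OO (n : ℕ) : EE (X : (ZMod 2)⟦X⟧) 0 n * OO X n = FF (2 * n) := by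
  induction n with
  | zero => simp [EE, OO, FF]
  | succ n ih =>
    have e1 : EE (X : (ZMod 2)⟦X⟧) 0 (n + 1) = EE X 0 n * (1 - X ^ (2 * (n + 1))) := by
      unfold EE; rw [Finset.prod_Ico_succ_top (by omega)]
    have e3 : OO (X : (ZMod 2)⟦X⟧) (n + 1) = OO X n * (1 - X ^ (2 * n + 1)) := by
      unfold OO; rw [Finset.prod_range_succ]
    have e2 : FF (2 * (n + 1)) = FF (2 * n) * (1 - X ^ (2 * n + 1)) * (1 - X ^ (2 * (n + 1))) := by
      unfold FF
      rw [show 2 * (n + 1) = 2 * n + 1 + 1 by ring, Finset.prod_range_succ, Finset.prod_range_succ]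
    rw [e1, e2, e3, ← ih]; ring

lemma EE_sq (n : ℕ) : EE (X : (ZMod 2)⟦X⟧) 0 n = FF n ^ 2 := by
  unfold EE FF
  rw [← Finset.prod_pow, Nat.Ico_zero_eq_range]
  apply Finset.prod_congr rfl
  intro j _
  rw [sub_pow_char, one_pow, ← pow_mul, mul_comm]

lemma f_ne_zero : f ≠ 0 := by
  intro h
  have := coeff_pentagonalSeries_pentagonal (ZMod 2) 0
  rw [f] at h
  rw [h] at this
  simp at this

lemma dvd_trans_sub {a b c d : (ZMod 2)⟦X⟧} (h1 : d ∣ a - b) (h2 : d ∣ b - c) : d ∣ a - c := by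
  have := dvd_add h1 h2
  simpa using this

theorem f_cube : f ^ 3 = psi := by
  have key : psi * f = f ^ 4 := by
    ext k
    set n := k + 1 with hn
    have h1 := shanks (X : (ZMod 2)⟦X⟧) n
    set d : (ZMod 2)⟦X⟧ := X ^ (k + 1) with hd
    have c0 : d ∣ psi - ∑ s ∈ Finset.range (2 * n), X ^ (s * (s + 1) / 2) :=
      (pow_dvd_pow _ (by omega)).trans (psi_cong (2 * n))
    have c1 : d ∣ f - FF (2 * n) := (pow_dvd_pow _ (by omega)).trans (FF_cong (2 * n))
    have c2 : d ∣ f - FF n := (pow_dvd_pow _ (by omega)).trans (FF_cong n)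
    have c3 : d ∣ (∑ s ∈ Finset.range n, X ^ (s * (2 * n + 1)) * EE X s n * OO X s) - EE X 0 n := by
      rw [hn, Finset.sum_range_succ']
      have : OO (X : (ZMod 2)⟦X⟧) 0 = 1 := by simp [OO]
      rw [this, zero_mul, pow_zero, one_mul, mul_one, add_sub_cancel_right]
      apply Finset.dvd_sum
      intro s _
      rw [mul_assoc]
      apply Dvd.dvd.mul_right
      exact pow_dvd_pow _ (by nlinarith)
    rw [← h1] at c3
    have c4 := Dvd.dvd.mul_left c3 (EE X 0 n)
    set S := ∑ s ∈ Finset.range (2 * n), (X : (ZMod 2)⟦X⟧) ^ (s * (s + 1) / 2)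
    have c5 : d ∣ S * FF (2 * n) - FF n ^ 4 := by
      rw [← EE_OO]
      have : S * (EE X 0 n * OO X n) - FF n ^ 4 = EE X 0 n * (S * OO X n - EE X 0 n) := by
        rw [EE_sq]; ring
      rw [this]; exact c4
    have c6 : d ∣ psi * f - S * FF (2 * n) := by
      have : psi * f - S * FF (2 * n) = (psi - S) * f + S * (f - FF (2 * n)) := by ring
      rw [this]; exact dvd_add (Dvd.dvd.mul_right c0 _) (Dvd.dvd.mul_left c1 _)
    have c7 : d ∣ FF n ^ 4 - f ^ 4 := by
      have := c2.trans (sub_dvd_pow_sub_pow f (FF n) 4)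
      rw [← neg_sub]; exact (dvd_neg).mpr this
    have c8 := dvd_trans_sub (dvd_trans_sub c6 c5) c7
    rw [hd, X_pow_dvd_iff] at c8
    have := c8 k (by omega)
    rw [map_sub, sub_eq_zero] at this
    exact this
  apply mul_right_cancel₀ f_ne_zero
  rw [key]; ring

end Stmt3

namespace Stmt3
open PowerSeries

lemma sq24 (x : ℕ) : x ^ 2 % 24 = 0 ∨ x ^ 2 % 24 = 1 ∨ x ^ 2 % 24 = 4 ∨ x ^ 2 % 24 = 9 ∨
    x ^ 2 % 24 = 12 ∨ x ^ 2 % 24 = 16 := by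
  have h24 : x % 24 < 24 := Nat.mod_lt _ (by norm_num)
  rw [Nat.pow_mod]
  generalize x % 24 = r at *
  interval_cases r <;> simp

open Classical in
/-- indicator theta series -/
noncomputable def th (α σ : ℕ) : (ZMod 2)⟦X⟧ :=
  PowerSeries.mk (fun i => if ∃ x : ℕ, α * x ^ 2 = 24 * i + σ then 1 else 0)

lemma coeff_th_mul (α σ β τ n : ℕ) (hα : 0 < α) (hβ : 0 < β)
    (H : ∀ x y : ℕ, α * x ^ 2 + β * y ^ 2 = 24 * n + (σ + τ) →
      ∃ i j, α * x ^ 2 = 24 * i + σ ∧ β * y ^ 2 = 24 * j + τ) :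
    (th α σ * th β τ).coeff n = ((Q α β (24 * n + (σ + τ))).card : ZMod 2) := by
  classical
  rw [coeff_mul]
  simp only [th, coeff_mk, ← ite_and, ite_mul, one_mul, zero_mul]
  rw [← Finset.sum_filter, Finset.sum_const, nsmul_eq_mul, mul_one]
  congr 1
  symm
  apply Finset.card_bij (fun p _ => ((α * p.1 ^ 2 - σ) / 24, (β * p.2 ^ 2 - τ) / 24))
  · intro p hp
    rw [mem_Q hα hβ] at hp
    obtain ⟨i, j, hi, hj⟩ := H _ _ hp
    simp only [Finset.mem_filter, Finset.HasAntidiagonal.mem_antidiagonal]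
    rw [hi, hj, Nat.add_sub_cancel, Nat.add_sub_cancel, Nat.mul_div_cancel_left _ (by norm_num),
      Nat.mul_div_cancel_left _ (by norm_num)]
    rw [hi, hj] at hp
    exact ⟨by omega, ⟨_, hi⟩, ⟨_, hj⟩⟩
  · rintro ⟨a, b⟩ h1 ⟨c, d⟩ h2 h
    rw [mem_Q hα hβ] at h1 h2
    obtain ⟨i, j, hi, hj⟩ := H _ _ h1
    obtain ⟨i', j', hi', hj'⟩ := H _ _ h2
    simp only [Prod.mk.injEq] at h ⊢ hi hj hi' hj'
    have e1 : a ^ 2 = c ^ 2 := Nat.eq_of_mul_eq_mul_left hα (by omega)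
    have e2 : b ^ 2 = d ^ 2 := Nat.eq_of_mul_eq_mul_left hβ (by omega)
    exact ⟨Nat.pow_left_injective (n := 2) (by norm_num) e1,
      Nat.pow_left_injective (n := 2) (by norm_num) e2⟩
  · rintro ⟨i, j⟩ h
    simp only [Finset.mem_filter, Finset.HasAntidiagonal.mem_antidiagonal] at h
    obtain ⟨hij, ⟨x, hx⟩, ⟨y, hy⟩⟩ := h
    refine ⟨(x, y), (mem_Q hα hβ _).mpr (by simp only; rw [hx, hy]; omega), ?_⟩
    simp only [hx, hy, Nat.add_sub_cancel, Prod.mk.injEq]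
    omega

lemma zmod2_ext {a b : ZMod 2} (h : a = 1 ↔ b = 1) : a = b := by
  revert a b; decide

lemma zmod2_ite (P : Prop) [Decidable P] : ((if P then (1 : ZMod 2) else 0) = 1) ↔ P := by
  split_ifs with h <;> simp [h]

lemma shift_expand_th (φ : (ZMod 2)⟦X⟧) (P : ℕ → Prop) (hP : ∀ m, φ.coeff m = 1 ↔ P m)
    (a r : ℕ) (hr : r ≠ 0) (α σ : ℕ)
    (H : ∀ n, (∃ m, n = r * m + a ∧ P m) ↔ ∃ x, α * x ^ 2 = 24 * n + σ) :
    X ^ a * expand r hr φ = th α σ := by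
  classical
  ext n
  apply zmod2_ext
  rw [th, coeff_mk, zmod2_ite, ← H, coeff_X_pow_mul', ]
  constructor
  · intro h
    split_ifs at h with ha
    · rw [coeff_expand] at h
      split_ifs at h with hd
      · obtain ⟨m, hm⟩ := hd
        rw [hm, Nat.mul_div_cancel_left _ (by omega), hP] at h
        exact ⟨m, by omega, h⟩
      · simp at h
    · simp at h
  · rintro ⟨m, rfl, hm⟩
    rw [if_pos (by omega), Nat.add_sub_cancel, coeff_expand_mul, hP]
    exact hm

lemma coeff_f (m : ℕ) : f.coeff m = 1 ↔ ∃ x, x ^ 2 = 24 * m + 1 := by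
  have h1 : f.coeff m = 1 ↔ f.coeff m ≠ 0 := by
    generalize f.coeff m = a; revert a; decide
  rw [h1, f, ne_eq, coeff_pentagonalSeries_eq_zero_iff, not_not]
  constructor
  · rintro ⟨k, rfl⟩
    refine ⟨(6 * k - 1).natAbs, ?_⟩
    zify
    rw [sq_abs]
    linear_combination (-12) * two_mul_natCast_pentagonal k
  · rintro ⟨x, hx⟩
    have h2 : x % 6 = 1 ∨ x % 6 = 5 := by
      have h6 : x % 6 < 6 := Nat.mod_lt _ (by norm_num)
      have : x ^ 2 % 6 = 1 := by omega
      rw [Nat.pow_mod] at this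
      generalize x % 6 = r at *
      interval_cases r <;> simp_all
    rcases h2 with h2 | h2
    · obtain ⟨y, rfl⟩ : ∃ y, x = 6 * y + 1 := ⟨x / 6, by omega⟩
      refine ⟨-(y : ℤ), ?_⟩
      have := two_mul_natCast_pentagonal (-(y : ℤ))
      zify at hx ⊢
      linarith
    · obtain ⟨y, rfl⟩ : ∃ y, x = 6 * y + 5 := ⟨x / 6, by omega⟩
      refine ⟨(y : ℤ) + 1, ?_⟩
      have := two_mul_natCast_pentagonal ((y : ℤ) + 1)
      zify at hx ⊢
      linarith

lemma coeff_psi (m : ℕ) : psi.coeff m = 1 ↔ ∃ x, x ^ 2 = 8 * m + 1 := by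
  classical
  rw [psi, coeff_mk, zmod2_ite]
  have ev : ∀ s : ℕ, 2 * (s * (s + 1) / 2) = s * (s + 1) := fun s =>
    Nat.two_mul_div_two_of_even (Nat.even_mul_succ_self s)
  constructor
  · rintro ⟨s, hs⟩
    refine ⟨2 * s + 1, ?_⟩
    have := ev s
    rw [hs] at this
    linarith
  · rintro ⟨x, hx⟩
    have : x % 2 = 1 := by
      rcases Nat.mod_two_eq_zero_or_one x with h | h
      · obtain ⟨y, rfl⟩ : 2 ∣ x := by omega
        have : (2 * y) ^ 2 = 2 * (2 * y ^ 2) := by ring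
        omega
      · exact h
    obtain ⟨s, rfl⟩ : ∃ y, x = 2 * y + 1 := ⟨x / 2, by omega⟩
    refine ⟨s, ?_⟩
    have := ev s
    have : 8 * (s * (s + 1) / 2) = 8 * m := by linarith
    omega

lemma sq_expand (φ : (ZMod 2)⟦X⟧) : φ ^ 2 = expand 2 (by norm_num) φ := by
  have := MvPowerSeries.map_frobenius_expand (σ := Unit) (R := ZMod 2) 2 (f := φ)
  rw [← this (by norm_num), ZMod.frobenius_zmod]
  rfl

/-- g = f(X^13) -/
noncomputable def g : (ZMod 2)⟦X⟧ := expand 13 (by norm_num) f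

lemma t_f : f = th 1 1 := by
  have := shift_expand_th f _ coeff_f 0 1 (by norm_num) 1 1 (by
    intro n
    constructor
    · rintro ⟨m, hm, x, hx⟩; exact ⟨x, by omega⟩
    · rintro ⟨x, hx⟩; exact ⟨n, by omega, x, by omega⟩)
  rw [← this]; simp

lemma t_g : g = th 13 13 := by
  have := shift_expand_th f _ coeff_f 0 13 (by norm_num) 13 13 (by
    intro n
    constructor
    · rintro ⟨m, hm, x, hx⟩; exact ⟨x, by omega⟩
    · rintro ⟨x, hx⟩; exact ⟨n / 13, by omega, x, by omega⟩)
  rw [← this, g]; simp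

lemma t_f2 : f ^ 2 = th 2 2 := by
  have := shift_expand_th f _ coeff_f 0 2 (by norm_num) 2 2 (by
    intro n
    constructor
    · rintro ⟨m, hm, x, hx⟩; exact ⟨x, by omega⟩
    · rintro ⟨x, hx⟩
      have := sq24 x
      exact ⟨n / 2, by omega, x, by omega⟩)
  rw [← this, sq_expand]; simp

lemma exp_exp (a b c : ℕ) (ha : a ≠ 0) (hb : b ≠ 0) (hc : c ≠ 0) (h : a * b = c) (φ : (ZMod 2)⟦X⟧) :
    expand a ha (expand b hb φ) = expand c hc φ := by
  subst h
  exact (expand_mul a ha b hb φ).symm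

lemma t_g2 : X * g ^ 2 = th 26 2 := by
  have := shift_expand_th f _ coeff_f 1 26 (by norm_num) 26 2 (by
    intro n
    constructor
    · rintro ⟨m, hm, x, hx⟩; exact ⟨x, by omega⟩
    · rintro ⟨x, hx⟩
      have := sq24 x
      exact ⟨n / 26, by omega, x, by omega⟩)
  rw [← this, sq_expand, g, exp_exp 2 13 26 _ _ (by norm_num) (by norm_num), pow_one]

lemma sq8' (x : ℕ) : x ^ 2 % 8 = 0 ∨ x ^ 2 % 8 = 1 ∨ x ^ 2 % 8 = 4 := by
  have := sq24 x; omega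

lemma f12 : f ^ 12 = expand 4 (by norm_num) psi := by
  rw [← f_cube, show f ^ 12 = ((f ^ 3) ^ 2) ^ 2 by ring, sq_expand (f ^ 3), sq_expand,
    exp_exp 2 2 4 _ _ (by norm_num) (by norm_num)]

lemma t_f12 : f ^ 12 = th 12 12 := by
  have := shift_expand_th psi _ coeff_psi 0 4 (by norm_num) 12 12 (by
    intro n
    constructor
    · rintro ⟨m, hm, x, hx⟩; exact ⟨x, by omega⟩
    · rintro ⟨x, hx⟩
      have := sq8' x
      exact ⟨n / 4, by omega, x, by omega⟩)
  rw [← this, f12]; simp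

lemma t_g12 : X ^ 6 * g ^ 12 = th 156 12 := by
  have := shift_expand_th psi _ coeff_psi 6 52 (by norm_num) 156 12 (by
    intro n
    constructor
    · rintro ⟨m, hm, x, hx⟩; exact ⟨x, by omega⟩
    · rintro ⟨x, hx⟩
      have := sq8' x
      exact ⟨n / 52, by omega, x, by omega⟩)
  rw [← this, g, ← map_pow, f12, exp_exp 13 4 52 _ _ (by norm_num) (by norm_num)]

lemma Q_half (α β α' β' γ γ' : ℕ) (hα : 0 < α) (hβ : 0 < β) (h1 : α' = 2 * α) (h2 : β' = 2 * β)
    (h3 : γ' = 2 * γ) : (Q α' β' γ').card = (Q β α γ).card := by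
  subst h1 h2 h3
  rw [Q_swap hβ hα]
  symm
  apply Q_transfer hα hβ (by omega) (by omega) 1 1 (by norm_num) (by norm_num)
  · intro x y
    constructor <;> intro h <;> nlinarith
  · intro x y h
    exact ⟨one_dvd _, one_dvd _⟩

lemma Q_zero (α β γ : ℕ) (hα : 0 < α) (hβ : 0 < β) (h : ∀ x y, α * x ^ 2 + β * y ^ 2 ≠ γ) :
    (Q α β γ).card = 0 := by
  rw [Finset.card_eq_zero, Finset.eq_empty_iff_forall_notMem]
  intro p hp
  rw [mem_Q hα hβ] at hp
  exact h _ _ hp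

theorem series_identity :
    f ^ 14 + X * g ^ 2 * f ^ 12 + X ^ 6 * g ^ 12 * f ^ 2 + X ^ 7 * g ^ 14 = g * f := by
  have e : f ^ 14 + X * g ^ 2 * f ^ 12 + X ^ 6 * g ^ 12 * f ^ 2 + X ^ 7 * g ^ 14 =
    th 12 12 * th 2 2 + th 12 12 * th 26 2 + th 156 12 * th 2 2 + th 156 12 * th 26 2 := by
    rw [← t_f12, ← t_f2, ← t_g2, ← t_g12]; ring
  have e' : g * f = th 1 1 * th 13 13 := by rw [← t_f, ← t_g, mul_comm]
  rw [e, e']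
  ext n
  have hs := sq24
  simp only [map_add]
  rw [coeff_th_mul 12 12 2 2 n (by norm_num) (by norm_num), coeff_th_mul 12 12 26 2 n (by norm_num) (by norm_num),
    coeff_th_mul 156 12 2 2 n (by norm_num) (by norm_num), coeff_th_mul 156 12 26 2 n (by norm_num) (by norm_num),
    coeff_th_mul 1 1 13 13 n (by norm_num) (by norm_num)]
  rotate_left
  · intro x y h
    have := hs x; have := hs y
    exact ⟨x ^ 2 / 24, 13 * y ^ 2 / 24, by omega, by omega⟩
  · intro x y h
    have := hs x; have := hs y
    exact ⟨156 * x ^ 2 / 24, 26 * y ^ 2 / 24, by omega, by omega⟩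
  · intro x y h
    have := hs x; have := hs y
    exact ⟨156 * x ^ 2 / 24, 2 * y ^ 2 / 24, by omega, by omega⟩
  · intro x y h
    have := hs x; have := hs y
    exact ⟨12 * x ^ 2 / 24, 26 * y ^ 2 / 24, by omega, by omega⟩
  · intro x y h
    have := hs x; have := hs y
    exact ⟨12 * x ^ 2 / 24, 2 * y ^ 2 / 24, by omega, by omega⟩
  rw [Q_half 6 1 12 2 (12 * n + 7) _ (by norm_num) (by norm_num) rfl rfl (by ring),
    Q_half 6 13 12 26 (12 * n + 7) _ (by norm_num) (by norm_num) rfl rfl (by ring),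
    Q_half 78 1 156 2 (12 * n + 7) _ (by norm_num) (by norm_num) rfl rfl (by ring),
    Q_half 78 13 156 26 (12 * n + 7) _ (by norm_num) (by norm_num) rfl rfl (by ring),
    show 24 * n + (1 + 13) = 2 * (12 * n + 7) by ring]
  obtain ⟨T1, T2⟩ := T_even (12 * n + 7)
  rw [← Nat.cast_add, ← Nat.cast_add, ← Nat.cast_add, ZMod.natCast_eq_natCast_iff]
  unfold Nat.ModEq
  rcases Nat.mod_two_eq_zero_or_one n with h | h
  · have := T1 (by omega)
    rw [Q_zero 13 6 _ (by norm_num) (by norm_num), Q_zero 13 78 _ (by norm_num) (by norm_num)]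
    · omega
    all_goals
      intro x y h
      have := hs x; have := hs y
      omega
  · have := T2 (by omega)
    rw [Q_zero 1 6 _ (by norm_num) (by norm_num), Q_zero 1 78 _ (by norm_num) (by norm_num)]
    · omega
    all_goals
      intro x y h
      have := hs x; have := hs y
      omega

end Stmt3

namespace Stmt3
open PowerSeries

open Polynomial in
lemma vieta {A : Type*} [CommRing A] [IsDomain A] [CharP A 2] (r : Fin 13 → A) (w a b c d : A)
    (hinj : Function.Injective r) (hw : ∀ j, r j ≠ w)
    (hr : ∀ j, r j ^ 14 + a * r j ^ 12 + b * r j ^ 2 + c * r j + d = 0)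
    (hw' : w ^ 14 + a * w ^ 12 + b * w ^ 2 + c * w + d = 0) :
    w * ∏ j, r j = d ∧ (∏ j, r j) + w * ∑ j, ∏ k ∈ Finset.univ.erase j, r k = c := by
  set P : A[X] := Polynomial.X ^ 14 + (Polynomial.C a * Polynomial.X ^ 12 +
    Polynomial.C b * Polynomial.X ^ 2 + Polynomial.C c * Polynomial.X + Polynomial.C d) with hP
  set G : A[X] := ∏ j, (Polynomial.X - Polynomial.C (r j)) with hG
  have hlow : (Polynomial.C a * Polynomial.X ^ 12 +
    Polynomial.C b * Polynomial.X ^ 2 + Polynomial.C c * Polynomial.X + Polynomial.C d).degree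
      < ((14 : ℕ) : WithBot ℕ) := by
    have : (Polynomial.C a * Polynomial.X ^ 12 +
      Polynomial.C b * Polynomial.X ^ 2 + Polynomial.C c * Polynomial.X + Polynomial.C d).degree
      ≤ ((12 : ℕ) : WithBot ℕ) := by compute_degree!
    exact lt_of_le_of_lt this (by norm_num)
  have hPm : P.Monic := Polynomial.monic_X_pow_add hlow
  have hPd : P.degree = ((14 : ℕ) : WithBot ℕ) := by
    rw [hP, Polynomial.degree_add_eq_left_of_degree_lt, Polynomial.degree_X_pow]
    rw [Polynomial.degree_X_pow]; exact hlow
  have hGm : G.Monic := Polynomial.monic_prod_of_monic _ _ (fun j _ => Polynomial.monic_X_sub_C _)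
  have hHm : ((Polynomial.X - Polynomial.C w) * G).Monic := (Polynomial.monic_X_sub_C _).mul hGm
  have hHd : ((Polynomial.X - Polynomial.C w) * G).degree = ((14 : ℕ) : WithBot ℕ) := by
    rw [Polynomial.degree_mul, Polynomial.degree_X_sub_C, hG, Polynomial.degree_prod]
    simp only [Polynomial.degree_X_sub_C]
    simp
    norm_num
  have key : P = (Polynomial.X - Polynomial.C w) * G := by
    let v : Option (Fin 13) → A := fun o => o.elim w r
    apply Polynomial.eq_of_degree_sub_lt_of_eval_index_eq (v := v) (s := Finset.univ)
    · intro x _ y _ hxy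
      rcases x with _ | x <;> rcases y with _ | y
      · rfl
      · exact absurd hxy.symm (hw y)
      · exact absurd hxy (hw x)
      · exact congrArg some (hinj hxy)
    · have := Polynomial.degree_sub_lt_left (hPd.trans hHd.symm) hPm.ne_zero
        (hPm.leadingCoeff.trans hHm.leadingCoeff.symm)
      rw [hPd] at this
      simpa using this
    · intro o _
      rcases o with _ | j
      · show Polynomial.eval w P = Polynomial.eval w _
        simp only [hP, Polynomial.eval_add, Polynomial.eval_mul, Polynomial.eval_pow,
          Polynomial.eval_X, Polynomial.eval_C, Polynomial.eval_sub]
        rw [sub_self, zero_mul, ← hw']; ring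
      · show Polynomial.eval (r j) P = Polynomial.eval (r j) _
        have : Polynomial.eval (r j) G = 0 := by
          rw [hG, Polynomial.eval_prod]
          exact Finset.prod_eq_zero (Finset.mem_univ j) (by simp)
        rw [Polynomial.eval_mul, this, mul_zero]
        simp only [hP, Polynomial.eval_add, Polynomial.eval_mul, Polynomial.eval_pow,
          Polynomial.eval_X, Polynomial.eval_C]
        rw [← hr j]; ring
  have hG0 : Polynomial.eval 0 G = ∏ j, r j := by
    rw [hG, Polynomial.eval_prod]
    simp [CharTwo.neg_eq]
  have hG1 : Polynomial.eval 0 (Polynomial.derivative G) = ∑ j, ∏ k ∈ Finset.univ.erase j, r k := by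
    rw [hG, Polynomial.derivative_prod_finset, Polynomial.eval_finset_sum]
    apply Finset.sum_congr rfl
    intro j _
    rw [Polynomial.eval_mul, Polynomial.eval_prod]
    simp [CharTwo.neg_eq]
  constructor
  · have := congrArg (Polynomial.eval 0) key
    rw [Polynomial.eval_mul, hG0] at this
    simp [hP, CharTwo.neg_eq] at this
    exact this.symm
  · have := congrArg (fun p => Polynomial.eval 0 (Polynomial.derivative p)) key
    simp only [Polynomial.derivative_mul, Polynomial.eval_add, Polynomial.eval_mul, hG0, hG1] at this
    simp [hP, CharTwo.neg_eq] at this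
    exact this.symm

lemma exp_exp' {F : Type*} [CommRing F] (a b c : ℕ) (ha : a ≠ 0) (hb : b ≠ 0) (hc : c ≠ 0) (h : a * b = c) (φ : F⟦X⟧) :
    expand a ha (expand b hb φ) = expand c hc φ := by
  subst h
  exact (expand_mul a ha b hb φ).symm

lemma rescale_expand {F : Type*} [CommRing F] (u : F) (hu : u ^ 13 = 1) (φ : F⟦X⟧) :
    rescale u (expand 13 (by norm_num) φ) = expand 13 (by norm_num) φ := by
  ext n
  rw [coeff_rescale, coeff_expand]
  split_ifs with h
  · obtain ⟨m, rfl⟩ := h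
    rw [pow_mul, hu, one_pow, one_mul]
  · rw [mul_zero]

lemma constCoeff_f : constantCoeff f = 1 := by
  rw [← coeff_zero_eq_constantCoeff_apply, coeff_f]
  exact ⟨1, by norm_num⟩

/-- inverse of the Euler function -/
noncomputable def h : (ZMod 2)⟦X⟧ := f⁻¹

lemma f_mul_h : f * h = 1 := PowerSeries.mul_inv_cancel f (by rw [constCoeff_f]; exact one_ne_zero)

section
variable {F : Type*} [Field F] [Algebra (ZMod 2) F] [CharP F⟦X⟧ 2]

theorem root_sum (ζ : F) (hζ : IsPrimitiveRoot ζ 13) :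
    let φ := algebraMap (ZMod 2) F
    X ^ 7 * ∑ j : Fin 13, C (ζ ^ (7 * (j : ℕ))) * rescale (ζ ^ (j : ℕ)) (PowerSeries.map φ h)
      + PowerSeries.map φ (expand 169 (by norm_num) h) =
      (PowerSeries.map φ (expand 13 (by norm_num) h)) ^ 13 := by
  intro φ
  set fF := PowerSeries.map φ f with hfF
  set hF := PowerSeries.map φ h with hhF
  set Y := expand 13 (by norm_num) fF with hY
  set W := expand 169 (by norm_num) fF with hW
  set Y' := expand 13 (by norm_num) hF with hY'
  set W' := expand 169 (by norm_num) hF with hW'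
  have fh : fF * hF = 1 := by rw [hfF, hhF, ← map_mul, f_mul_h, map_one]
  have YY : Y * Y' = 1 := by rw [hY, hY', ← map_mul, fh, map_one]
  have WW : W * W' = 1 := by rw [hW, hW', ← map_mul, fh, map_one]
  have idF : fF ^ 14 + X * Y ^ 2 * fF ^ 12 + X ^ 6 * Y ^ 12 * fF ^ 2 + X ^ 7 * Y ^ 14 = Y * fF := by
    have := congrArg (PowerSeries.map φ) series_identity
    simpa [g] using this
  have hYW : expand 13 (by norm_num) Y = W := exp_exp' 13 13 169 _ _ _ (by norm_num) _
  have idY : Y ^ 14 + X ^ 13 * W ^ 2 * Y ^ 12 + X ^ 78 * W ^ 12 * Y ^ 2 + X ^ 91 * W ^ 14 = W * Y := by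
    have := congrArg (expand 13 (by norm_num)) idF
    simp only [map_add, map_mul, map_pow, expand_X, ← pow_mul] at this
    rw [hYW, ← hY] at this
    exact this
  set r : Fin 13 → F⟦X⟧ := fun j => C (ζ ^ (j : ℕ)) ^ 6 * rescale (ζ ^ (j : ℕ)) fF with hr
  have u13 : ∀ j : Fin 13, (ζ ^ (j : ℕ)) ^ 13 = 1 := by
    intro j; rw [← pow_mul, mul_comm, pow_mul, hζ.pow_eq_one, one_pow]
  have cc : ∀ j, constantCoeff (r j) = ζ ^ (6 * (j : ℕ)) := by
    intro j
    have h1 : constantCoeff (rescale (ζ ^ (j : ℕ)) fF) = 1 := by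
      rw [← coeff_zero_eq_constantCoeff_apply, coeff_rescale, hfF, PowerSeries.coeff_map,
        coeff_zero_eq_constantCoeff_apply, constCoeff_f, map_one, pow_zero, one_mul]
    rw [hr]
    simp only [map_mul, map_pow, h1, constantCoeff_C, mul_one]
    rw [← pow_mul, mul_comm]
  have hz0 : ζ ≠ 0 := hζ.ne_zero (by norm_num)
  obtain ⟨v1, v2⟩ := vieta r (X ^ 7 * W) (X * Y ^ 2) (X ^ 6 * Y ^ 12) Y (X ^ 7 * Y ^ 14)
    (by
      intro i j hij
      have := congrArg constantCoeff hij
      rw [cc, cc] at this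
      have h6 : IsPrimitiveRoot (ζ ^ 6) 13 := hζ.pow_of_coprime 6 (by norm_num)
      rw [pow_mul, pow_mul] at this
      exact Fin.ext (h6.pow_inj i.2 j.2 this))
    (by
      intro j hj
      have := congrArg constantCoeff hj
      rw [cc] at this
      simp at this
      exact hz0 this.1)
    (by
      intro j
      have hz13 := u13 j
      simp only [hr]
      generalize ζ ^ (j : ℕ) = z at hz13
      have := congrArg (rescale z) idF
      simp only [map_add, map_mul, map_pow, rescale_X] at this
      rw [hY, rescale_expand _ hz13, ← hY] at this
      set u : F⟦X⟧ := C z with hu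
      have hu13 : u ^ 13 = 1 := by rw [hu, ← map_pow, hz13, map_one]
      set R := rescale z fF
      have e1 : (u ^ 6 * R) ^ 14 = u ^ 6 * R ^ 14 := by
        rw [show (u ^ 6 * R) ^ 14 = (u ^ 13) ^ 6 * (u ^ 6 * R ^ 14) by ring, hu13]; ring
      have e2 : (u ^ 6 * R) ^ 12 = u ^ 7 * R ^ 12 := by
        rw [show (u ^ 6 * R) ^ 12 = (u ^ 13) ^ 5 * (u ^ 7 * R ^ 12) by ring, hu13]; ring
      rw [e1, e2]
      have e3 : u ^ 6 * (Y * R) + u ^ 6 * (Y * R) = 0 := CharTwo.add_self_eq_zero _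
      linear_combination u ^ 6 * this + e3 - X ^ 7 * Y ^ 14 * hu13)
    (by
      have e3 : X ^ 7 * (Y * W) + X ^ 7 * (Y * W) = 0 := CharTwo.add_self_eq_zero _
      linear_combination X ^ 7 * idY + e3)
  set R := ∏ j, r j with hR
  set s : Fin 13 → F⟦X⟧ := fun j => C (ζ ^ (7 * (j : ℕ))) * rescale (ζ ^ (j : ℕ)) hF with hs
  have rs : ∀ j, r j * s j = 1 := by
    intro j
    simp only [hr, hs]
    have : rescale (ζ ^ (j : ℕ)) fF * rescale (ζ ^ (j : ℕ)) hF = 1 := by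
      rw [← map_mul, fh, map_one]
    have h2 : C (ζ ^ (j : ℕ)) ^ 6 * C (ζ ^ (7 * (j : ℕ))) = (1 : F⟦X⟧) := by
      rw [← map_pow, ← map_mul, ← pow_mul, ← pow_add,
        show (j : ℕ) * 6 + 7 * j = j * 13 by ring, pow_mul, u13, map_one]
    linear_combination C (ζ ^ (j : ℕ)) ^ 6 * C (ζ ^ (7 * (j : ℕ))) * this + h2
  have er : ∀ j, ∏ k ∈ Finset.univ.erase j, r k = R * s j := by
    intro j
    have : r j * ∏ k ∈ Finset.univ.erase j, r k = R := Finset.mul_prod_erase _ _ (Finset.mem_univ j)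
    rw [← this]
    linear_combination (-(∏ k ∈ Finset.univ.erase j, r k)) * rs j
  simp only [er] at v2
  rw [← Finset.mul_sum] at v2
  set S := ∑ j, s j with hS
  have e0 : W * R = Y ^ 14 := by
    apply mul_left_cancel₀ (pow_ne_zero 7 (PowerSeries.X_ne_zero (R := F)))
    rw [← v1]; ring
  rw [PowerSeries.map_expand, PowerSeries.map_expand, ← hhF, ← hW', ← hY']
  -- v2 : R + X^7 W (R S) = Y
  have e1 : Y ^ 14 + X ^ 7 * W * Y ^ 14 * S = Y * W := by
    linear_combination W * v2 - (1 + X ^ 7 * W * S) * e0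
  have YY14 : Y ^ 14 * Y' ^ 14 = 1 := by rw [← mul_pow, YY, one_pow]
  have YY13 : Y ^ 13 * Y' ^ 13 = 1 := by rw [← mul_pow, YY, one_pow]
  have e2 : W' * Y' ^ 14 * (Y ^ 14 + X ^ 7 * W * Y ^ 14 * S) = W' * Y' ^ 14 * (Y * W) := by rw [e1]
  calc X ^ 7 * S + W' = W' * (Y ^ 14 * Y' ^ 14) + X ^ 7 * S * (W * W') * (Y ^ 14 * Y' ^ 14) := by
        rw [YY14, WW]; ring
    _ = W' * Y' ^ 14 * (Y ^ 14 + X ^ 7 * W * Y ^ 14 * S) := by ring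
    _ = W' * Y' ^ 14 * (Y * W) := e2
    _ = Y' ^ 13 * (Y * Y') * (W * W') := by ring
    _ = Y' ^ 13 := by rw [YY, WW]; ring

end

theorem dissect (m : ℕ) (hm : 0 < m) :
    h.coeff (13 * m - 7) + (expand 13 (by norm_num) h).coeff m = (h ^ 13).coeff m := by
  have : NeZero ((13 : ℕ) : ZMod 2) := ⟨by decide⟩
  obtain ⟨ζ, hζ⟩ := HasEnoughRootsOfUnity.exists_primitiveRoot (AlgebraicClosure (ZMod 2)) 13
  have : CharP (AlgebraicClosure (ZMod 2)) 2 := inferInstance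
  have : CharP (AlgebraicClosure (ZMod 2))⟦X⟧ 2 :=
    charP_of_injective_ringHom (f := (PowerSeries.C (R := AlgebraicClosure (ZMod 2))))
      PowerSeries.C_injective 2
  have key := root_sum ζ hζ
  simp only at key
  set φ := algebraMap (ZMod 2) (AlgebraicClosure (ZMod 2)) with hφ
  have key := congrArg (PowerSeries.coeff (13 * m)) key
  rw [map_add, coeff_X_pow_mul', if_pos (by omega), map_sum, ← map_pow, ← map_pow,
    PowerSeries.coeff_map, PowerSeries.coeff_map, coeff_expand_mul,
    ← exp_exp 13 13 169 (by norm_num) (by norm_num) _ (by norm_num), coeff_expand_mul] at key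
  have hsum : ∑ j : Fin 13, PowerSeries.coeff (13 * m - 7)
      (C (ζ ^ (7 * (j : ℕ))) * rescale (ζ ^ (j : ℕ)) (PowerSeries.map φ h)) =
      φ (h.coeff (13 * m - 7)) := by
    have : ∀ j : Fin 13, PowerSeries.coeff (13 * m - 7)
      (C (ζ ^ (7 * (j : ℕ))) * rescale (ζ ^ (j : ℕ)) (PowerSeries.map φ h)) =
        φ (h.coeff (13 * m - 7)) := by
      intro j
      rw [coeff_C_mul, coeff_rescale, PowerSeries.coeff_map, ← mul_assoc, ← pow_mul, ← pow_add]
      have : 7 * (j : ℕ) + j * (13 * m - 7) = 13 * (j * m) := by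
        obtain ⟨k, hk⟩ : ∃ k, 13 * m = k + 7 := ⟨13 * m - 7, by omega⟩
        rw [show 13 * m - 7 = k by omega]
        nlinarith
      rw [this, pow_mul, hζ.pow_eq_one, one_pow, one_mul]
    simp only [this]
    rw [Finset.sum_const, Finset.card_univ, Fintype.card_fin, nsmul_eq_mul]
    have : ((13 : ℕ) : AlgebraicClosure (ZMod 2)) = 1 := by
      have : ((13 : ℕ) : ZMod 2) = 1 := by decide
      have := congrArg φ this
      rw [map_natCast, map_one] at this
      exact this
    rw [this, one_mul]
  rw [hsum, ← map_add] at key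
  exact φ.injective key

end Stmt3

namespace Stmt3
open PowerSeries

section gf
open PowerSeries.WithPiTopology

lemma part_gf : (PowerSeries.mk fun n ↦ (Fintype.card n.Partition : ZMod 2)) * f = 1 := by
  let _ : TopologicalSpace (ZMod 2) := ⊥
  have _ : DiscreteTopology (ZMod 2) := ⟨rfl⟩
  have h1 := Nat.Partition.hasProd_powerSeriesMk_card_restricted (ZMod 2) (fun _ => True)
  have h2 := hasProd_one_sub_X_pow (ZMod 2)
  have h3 := h1.mul h2
  have h4 : (fun n ↦ ((Nat.Partition.restricted n (fun _ => True)).card : ZMod 2)) =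
      fun n ↦ (Fintype.card n.Partition : ZMod 2) := by
    funext n; simp [Nat.Partition.restricted]
  rw [h4] at h3
  refine h3.unique ?_
  convert hasProd_one using 2 with i
  rw [if_pos trivial]
  simp_rw [pow_mul]
  exact tsum_pow_mul_one_sub_of_constantCoeff_eq_zero (by simp)

lemma part_h : (PowerSeries.mk fun n ↦ (Fintype.card n.Partition : ZMod 2)) = h := by
  have h1 := part_gf
  have h2 := f_mul_h
  calc _ = (PowerSeries.mk fun n ↦ (Fintype.card n.Partition : ZMod 2)) * (f * h) := by
        rw [h2, mul_one]
    _ = _ := by rw [← mul_assoc, h1, one_mul]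

lemma reg_gf (m : ℕ) (hm : m ≠ 0) :
    (PowerSeries.mk fun n ↦ (numRegularPartitions m n : ZMod 2)) = expand m hm f * h := by
  let _ : TopologicalSpace (ZMod 2) := ⊥
  have _ : DiscreteTopology (ZMod 2) := ⟨rfl⟩
  have h1 := Nat.Partition.hasProd_powerSeriesMk_card_countRestricted (ZMod 2) (Nat.pos_of_ne_zero hm)
  have h2 := hasProd_one_sub_X_pow (ZMod 2)
  have h3 := h1.mul h2
  have h4 : (fun n ↦ ((Nat.Partition.countRestricted n m).card : ZMod 2)) =
      fun n ↦ (numRegularPartitions m n : ZMod 2) := by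
    funext n
    rw [← Nat.Partition.card_restricted_eq_card_countRestricted n (Nat.pos_of_ne_zero hm)]
    congr 1
    classical
    rw [numRegularPartitions, Nat.card_eq_fintype_card, Fintype.card_subtype]
    simp [Nat.Partition.restricted]
  rw [h4] at h3
  have hc : Continuous (expand m hm (R := ZMod 2)) := by
    rw [continuous_iff_continuousAt]
    intro φ
    rw [ContinuousAt, tendsto_iff_coeff_tendsto]
    intro d
    simp_rw [coeff_expand]
    split_ifs
    · exact (continuous_coeff _ _).tendsto φ
    · exact tendsto_const_nhds
  have h5 := h2.map (expand m hm (R := ZMod 2)) hc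
  have h6 : (PowerSeries.mk fun n ↦ (numRegularPartitions m n : ZMod 2)) * f = expand m hm f := by
    refine h3.unique ?_
    have h7 : (fun i ↦ (∑ j ∈ Finset.range m, (X : (ZMod 2)⟦X⟧) ^ ((i + 1) * j)) * (1 - X ^ (i + 1))) =
        (expand m hm (R := ZMod 2)) ∘ fun i ↦ 1 - X ^ (i + 1) := ?_
    · rw [h7]; exact h5
    funext i
    simp only [Function.comp, map_sub, map_one, map_pow, expand_X]
    simp_rw [pow_mul (X : (ZMod 2)⟦X⟧) (i + 1)]
    rw [geom_sum_mul_neg, ← pow_mul, ← pow_mul, mul_comm]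
  rw [← h6, mul_assoc, f_mul_h, mul_one]

end gf

lemma multi_gf (t n : ℕ) : (numMultipartitions t n : ZMod 2) = (h ^ t).coeff n := by
  have e : {f : Fin t → Σ k : ℕ, k.Partition // (∑ i, (f i).1) = n} ≃
      Σ s : ((Finset.univ : Finset (Fin t)).finsuppAntidiag n), ∀ i, (s.1 i).Partition :=
    { toFun := fun f => ⟨⟨Finsupp.equivFunOnFinite.symm (fun i => (f.1 i).1), by
        rw [Finset.mem_finsuppAntidiag]; exact ⟨f.2, Finset.subset_univ _⟩⟩, fun i => (f.1 i).2⟩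
      invFun := fun p => ⟨fun i => ⟨p.1.1 i, p.2 i⟩, (Finset.mem_finsuppAntidiag.1 p.1.2).1⟩
      left_inv := fun f => rfl
      right_inv := fun p => by
        rcases p with ⟨⟨s, hs⟩, q⟩
        refine Sigma.ext (Subtype.ext (Finsupp.ext fun i => rfl)) ?_
        exact HEq.rfl }
  rw [numMultipartitions, Nat.card_congr e, Nat.card_eq_fintype_card, Fintype.card_sigma]
  simp_rw [Fintype.card_pi]
  rw [Finset.sum_coe_sort ((Finset.univ : Finset (Fin t)).finsuppAntidiag n)
    (fun s => ∏ i, Fintype.card (s i).Partition)]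
  have : h ^ t = ∏ _i : Fin t, h := by simp
  rw [this, coeff_prod]
  push_cast
  refine Finset.sum_congr rfl fun s _ => Finset.prod_congr rfl fun i _ => ?_
  rw [← part_h, coeff_mk]

end Stmt3

namespace Stmt3
open PowerSeries

lemma conv13 (G : (ZMod 2)⟦X⟧) (m : ℕ) (hm : 0 < m) :
    (expand 13 (by norm_num) G * h).coeff (13 * m - 7) =
      ∑ k ∈ Finset.range m, G.coeff k * h.coeff (13 * (m - k) - 7) := by
  rw [coeff_mul, Finset.Nat.sum_antidiagonal_eq_sum_range_succ
    (fun a b => (expand 13 (by norm_num) G).coeff a * h.coeff b)]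
  have h1 : ∑ k ∈ Finset.range m, G.coeff k * h.coeff (13 * (m - k) - 7) =
      ∑ k ∈ (Finset.range m).image (fun k => 13 * k),
        (expand 13 (by norm_num) G).coeff k * h.coeff (13 * m - 7 - k) := by
    rw [Finset.sum_image (fun a _ b _ hab => by simpa using hab)]
    refine Finset.sum_congr rfl fun k hk => ?_
    rw [Finset.mem_range] at hk
    rw [coeff_expand_mul]
    congr 3
    omega
  rw [h1]
  symm
  apply Finset.sum_subset
  · intro x hx
    simp only [Finset.mem_image, Finset.mem_range] at hx ⊢
    omega
  · intro x hx hx'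
    rw [coeff_expand_of_not_dvd, zero_mul]
    rintro ⟨k, rfl⟩
    apply hx'
    simp only [Finset.mem_image, Finset.mem_range] at hx ⊢
    exact ⟨k, by omega, rfl⟩

lemma conv_main (G : (ZMod 2)⟦X⟧) (m : ℕ) (hm : 0 < m) :
    (expand 13 (by norm_num) G * h).coeff (13 * m - 7) =
      (G * h ^ 13).coeff m + (G * expand 13 (by norm_num) h).coeff m := by
  rw [conv13 G m hm, ← map_add, ← mul_add, coeff_mul, Finset.Nat.sum_antidiagonal_eq_sum_range_succ
    (fun a b => G.coeff a * (h ^ 13 + expand 13 (by norm_num) h).coeff b), Finset.sum_range_succ]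
  have hh : constantCoeff h = 1 := by
    have := congrArg constantCoeff f_mul_h
    simpa [constCoeff_f] using this
  have h0 : (h ^ 13 + expand 13 (by norm_num) h).coeff (m - m) = 0 := by
    rw [Nat.sub_self, coeff_zero_eq_constantCoeff_apply, map_add, map_pow, constantCoeff_expand, hh,
      one_pow]
    exact CharTwo.add_self_eq_zero 1
  rw [h0, mul_zero, add_zero]
  refine Finset.sum_congr rfl fun k hk => ?_
  rw [Finset.mem_range] at hk
  rw [map_add, ← dissect (m - k) (by omega), add_assoc, CharTwo.add_self_eq_zero, add_zero]

lemma vanish (r m : ℕ) (hr : r ≠ 0)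
    (H : ∀ x : ZMod 13, 24 * (m : ZMod 13) + r ≠ r * x ^ 2) :
    (expand r hr f * expand 13 (by norm_num) h).coeff m = 0 := by
  rw [coeff_mul]
  refine Finset.sum_eq_zero fun p hp => ?_
  rw [Finset.HasAntidiagonal.mem_antidiagonal] at hp
  by_cases h1 : r ∣ p.1
  · by_cases h2 : 13 ∣ p.2
    · obtain ⟨a, ha⟩ := h1
      obtain ⟨b, hb⟩ := h2
      rw [ha, coeff_expand_mul]
      have : f.coeff a = 0 := by
        by_contra hne
        have h3 : f.coeff a = 1 := by
          revert hne; generalize f.coeff a = z; revert z; decide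
        rw [coeff_f] at h3
        obtain ⟨x, hx⟩ := h3
        apply H x
        have e : 24 * m + r = r * x ^ 2 + 13 * (24 * b) := by
          rw [hx, ← hp, ha, hb]; ring
        have e' := congrArg (Nat.cast : ℕ → ZMod 13) e
        push_cast at e'
        rw [e', show (13 : ZMod 13) = 0 from rfl]
        ring
      rw [this, zero_mul]
    · rw [coeff_expand_of_not_dvd _ _ _ h2, mul_zero]
  · rw [coeff_expand_of_not_dvd _ _ _ h1, zero_mul]

lemma final (r s c n B : ℕ) (hr : r ≠ 0) (hc : c = 13 * r) (hs : r + s = 13) (hB : 0 < B)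
    (hf : f ^ r = expand r hr f)
    (H : ∀ x : ZMod 13, 24 * (B : ZMod 13) + r ≠ r * x ^ 2) :
    numRegularPartitions c (169 * n + 13 * B - 7) ≡ numMultipartitions s (13 * n + B) [MOD 2] := by
  rw [← ZMod.natCast_eq_natCast_iff]
  have hc0 : c ≠ 0 := by omega
  have e1 := congrArg (fun φ => PowerSeries.coeff (169 * n + 13 * B - 7) φ) (reg_gf c hc0)
  simp only [coeff_mk] at e1
  rw [e1, multi_gf, ← exp_exp 13 r c (by norm_num) hr hc0 hc.symm,
    show 169 * n + 13 * B - 7 = 13 * (13 * n + B) - 7 by omega, conv_main _ _ (by omega), vanish, add_zero,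
    ← hf, ← hs, pow_add, ← mul_assoc, ← mul_pow, f_mul_h, one_pow, one_mul]
  intro x
  have := H x
  push_cast
  rw [show (13 : ZMod 13) = 0 from rfl, zero_mul, zero_add]
  exact this

lemma f2 : f ^ 2 = expand 2 (by norm_num) f := sq_expand f
lemma f4 : f ^ 4 = expand 4 (by norm_num) f := by
  rw [show f ^ 4 = (f ^ 2) ^ 2 by ring, sq_expand (f ^ 2), sq_expand f]
  exact exp_exp 2 2 4 _ _ _ rfl f
lemma f8 : f ^ 8 = expand 8 (by norm_num) f := by
  rw [show f ^ 8 = (f ^ 4) ^ 2 by ring, sq_expand (f ^ 4), f4]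
  exact exp_exp 2 4 8 _ _ _ rfl f

end Stmt3

theorem stmt_3 (n : ℕ) :
    (∀ B ∈ ({3, 6, 7, 8, 9, 12} : Finset ℕ),
      numRegularPartitions 26 (169 * n + 13 * B - 7) ≡
        numMultipartitions 11 (13 * n + B) [MOD 2]) ∧
    (∀ B ∈ ({1, 3, 5, 6, 11, 12} : Finset ℕ),
      numRegularPartitions 52 (169 * n + 13 * B - 7) ≡
        numMultipartitions 9 (13 * n + B) [MOD 2]) ∧
    (∀ B ∈ ({2, 6, 9, 10, 11, 12} : Finset ℕ),
      numRegularPartitions 104 (169 * n + 13 * B - 7) ≡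
        numMultipartitions 5 (13 * n + B) [MOD 2]) := by
  refine ⟨fun B hB => ?_, fun B hB => ?_, fun B hB => ?_⟩
  · refine Stmt3.final 2 11 26 n B (by norm_num) rfl rfl ?_ Stmt3.f2 ?_
    · revert B; decide
    · revert B; decide
  · refine Stmt3.final 4 9 52 n B (by norm_num) rfl rfl ?_ Stmt3.f4 ?_
    · revert B; decide
    · revert B; decide
  · refine Stmt3.final 8 5 104 n B (by norm_num) rfl rfl ?_ Stmt3.f8 ?_
    · revert B; decide
    · revert B; decide
end

section
/- For every natural number n: for every B in {3, 5, 6, 8, 9, 11, 15, 16}, b_34(289n + 17B − 12) ≡ p_15(17n + B) (mod 2); for every B in {1, 5, 6, 10, 12, 13, 15, 16}, b_68(289n + 17B − 12) ≡ p_13(17n + B) (mod 2); for every B in {2, 3, 7, 9, 10, 12, 13, 15}, b_136(289n + 17B − 12) ≡ p_9(17n + B) (mod 2); and for every B in {1, 3, 4, 6, 7, 9, 13, 14}, b_272(289n + 17B − 12) ≡ p(17n + B) (mod 2). -/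
open PowerSeries

namespace Sol

open Classical in
/-- integer solutions of `d a² + e b² = n` with the side condition `P a b` -/
noncomputable def T (d e : ℤ) (P : ℤ → ℤ → Prop) (n : ℤ) : Finset (ℤ × ℤ) :=
  ((Finset.Icc (-n) n) ×ˢ (Finset.Icc (-n) n)).filter
    (fun x => d * x.1 ^ 2 + e * x.2 ^ 2 = n ∧ P x.1 x.2)

open Classical in
lemma mem_T {d e : ℤ} (hd : 1 ≤ d) (he : 1 ≤ e) {P : ℤ → ℤ → Prop} {n : ℤ} {x : ℤ × ℤ} :
    x ∈ T d e P n ↔ d * x.1 ^ 2 + e * x.2 ^ 2 = n ∧ P x.1 x.2 := by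
  unfold T
  rw [Finset.mem_filter, Finset.mem_product, Finset.mem_Icc, Finset.mem_Icc]
  constructor
  · exact fun h => h.2
  · intro h
    refine ⟨?_, h⟩
    have h1 : x.1 ^ 2 ≤ n := by nlinarith [sq_nonneg x.1, sq_nonneg x.2, h.1]
    have h2 : x.2 ^ 2 ≤ n := by nlinarith [sq_nonneg x.1, sq_nonneg x.2, h.1]
    have key : ∀ y : ℤ, y ^ 2 ≤ n → -n ≤ y ∧ y ≤ n := by
      intro y hy
      have := Int.le_self_sq y
      have := Int.le_self_sq (-y)
      constructor <;> nlinarith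
    exact ⟨key _ h1, key _ h2⟩

lemma card_two (s : Finset (ℤ × ℤ)) (p : ℤ × ℤ → Prop) [DecidablePred p] (f : ℤ × ℤ → ℤ × ℤ)
    (hf : ∀ x ∈ s, f x ∈ s) (hff : ∀ x, f (f x) = x) (hp : ∀ x ∈ s, p (f x) ↔ ¬ p x) :
    s.card = 2 * (s.filter p).card := by
  rw [← Finset.card_filter_add_card_filter_not (s := s) p, two_mul]
  congr 1
  refine Finset.card_bij' (fun x _ => f x) (fun x _ => f x) ?_ ?_ ?_ ?_
  · intro x hx
    simp only [Finset.mem_filter] at hx ⊢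
    exact ⟨hf x hx.1, (hp x hx.1).2 hx.2⟩
  · intro x hx
    simp only [Finset.mem_filter] at hx ⊢
    refine ⟨hf x hx.1, ?_⟩
    rw [hp x hx.1]
    exact fun h => h hx.2
  · intro x _; exact hff x
  · intro x _; exact hff x

lemma card_four (s : Finset (ℤ × ℤ)) (h0 : ∀ x ∈ s, x.1 ≠ 0 ∧ x.2 ≠ 0)
    (h1 : ∀ x ∈ s, (-x.1, x.2) ∈ s) (h2 : ∀ x ∈ s, (x.1, -x.2) ∈ s) :
    s.card = 4 * (s.filter (fun x => 0 < x.1 ∧ 0 < x.2)).card := by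
  rw [card_two s (fun x => 0 < x.1) (fun x => (-x.1, x.2)) h1 (by simp)
    (by intro x hx; have := h0 x hx; simp only; omega)]
  rw [card_two (s.filter (fun x => 0 < x.1)) (fun x => 0 < x.2) (fun x => (x.1, -x.2)) (by
      intro x hx
      simp only [Finset.mem_filter] at hx ⊢
      exact ⟨h2 x hx.1, hx.2⟩) (by simp)
    (by intro x hx; have := h0 x (Finset.mem_filter.1 hx).1; simp only; omega)]
  rw [Finset.filter_filter]
  ring

/-- positive solutions -/
noncomputable def C (d e : ℤ) (P : ℤ → ℤ → Prop) (n : ℤ) : ℕ :=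
  (T d e (fun a b => P a b ∧ 0 < a ∧ 0 < b) n).card

lemma T_four {d e : ℤ} (hd : 1 ≤ d) (he : 1 ≤ e) {P : ℤ → ℤ → Prop} (n : ℤ)
    (h0 : ∀ a b, P a b → a ≠ 0 ∧ b ≠ 0) (h1 : ∀ a b, P a b → P (-a) b)
    (h2 : ∀ a b, P a b → P a (-b)) :
    (T d e P n).card = 4 * C d e P n := by
  classical
  rw [card_four (T d e P n)]
  · unfold C
    congr 2
    ext x
    rw [Finset.mem_filter, mem_T hd he, mem_T hd he]
    tauto
  · intro x hx
    rw [mem_T hd he] at hx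
    exact h0 _ _ hx.2
  · intro x hx
    rw [mem_T hd he] at hx ⊢
    exact ⟨by simpa using hx.1, h1 _ _ hx.2⟩
  · intro x hx
    rw [mem_T hd he] at hx ⊢
    exact ⟨by simpa using hx.1, h2 _ _ hx.2⟩

open Classical in
lemma card_div17 {d e : ℤ} (hd : 1 ≤ d) (he : 1 ≤ e) {P : ℤ → ℤ → Prop}
    (hP : ∀ a b, P (17 * a) (17 * b) ↔ P a b) (m : ℤ) :
    ((T d e P (17 * (17 * m))).filter (fun x => (17 : ℤ) ∣ x.1 ∧ (17 : ℤ) ∣ x.2)).card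
      = (T d e P m).card := by
  symm
  refine Finset.card_bij (fun x _ => (17 * x.1, 17 * x.2)) ?_ ?_ ?_
  · intro x hx
    rw [mem_T hd he] at hx
    rw [Finset.mem_filter, mem_T hd he]
    refine ⟨⟨?_, (hP _ _).2 hx.2⟩, ⟨_, rfl⟩, ⟨_, rfl⟩⟩
    simp only
    rw [← hx.1]; ring
  · intro x _ y _ h
    simp only [Prod.mk.injEq] at h
    ext <;> omega
  · rintro ⟨a, b⟩ h
    rw [Finset.mem_filter, mem_T hd he] at h
    obtain ⟨⟨h1, h2⟩, ⟨a', ha⟩, ⟨b', hb⟩⟩ := h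
    simp only at h1 h2 ha hb
    subst ha hb
    refine ⟨(a', b'), ?_, rfl⟩
    rw [mem_T hd he]
    exact ⟨by simp only; nlinarith, (hP _ _).1 h2⟩

open Classical in
lemma card_div17' {d e : ℤ} (hd : 1 ≤ d) (he : 1 ≤ e) {P : ℤ → ℤ → Prop} (n : ℤ)
    (hn : ¬ (17 : ℤ) ∣ n) :
    ((T d e P (17 * n)).filter (fun x => (17 : ℤ) ∣ x.1 ∧ (17 : ℤ) ∣ x.2)).card = 0 := by
  rw [Finset.card_eq_zero, Finset.filter_eq_empty_iff]
  rintro ⟨a, b⟩ hx ⟨⟨a', ha⟩, ⟨b', hb⟩⟩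
  rw [mem_T hd he] at hx
  simp only at ha hb hx
  subst ha hb
  apply hn
  refine ⟨d * a' ^ 2 + e * b' ^ 2, ?_⟩
  nlinarith [hx.1]

open Classical in
lemma split_count (q u v D : ℤ) (hq : Prime q) (hq2 : ¬ q ∣ 2) (hD : 1 ≤ D) (h : u ^ 2 + D * v ^ 2 = q)
    (hu : ¬ q ∣ u) (hv : ¬ q ∣ v) (P Q : ℤ → ℤ → Prop)
    (hPb : ∀ a b, P a (-b) ↔ P a b)
    (hQ : ∀ c d, P (u * c - D * v * d) (v * c + u * d) ↔ Q c d)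
    (n : ℤ) :
    (T 1 D P (q * n)).card +
      ((T 1 D P (q * n)).filter (fun x => q ∣ x.1 ∧ q ∣ x.2)).card
      = 2 * (T 1 D Q n).card := by
  set S := T 1 D P (q * n) with hS
  have hq0 : q ≠ 0 := hq.ne_zero
  have hA : (S.filter (fun x => q ∣ u * x.2 - v * x.1)).card = (T 1 D Q n).card := by
    symm
    refine Finset.card_bij (fun x _ => (u * x.1 - D * v * x.2, v * x.1 + u * x.2)) ?_ ?_ ?_
    · intro x hx
      rw [mem_T le_rfl hD] at hx
      rw [Finset.mem_filter, hS, mem_T le_rfl hD]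
      refine ⟨⟨?_, (hQ _ _).2 hx.2⟩, ⟨x.2, ?_⟩⟩
      · simp only
        rw [← hx.1, ← h]; ring
      · simp only
        rw [← h]; ring
    · rintro ⟨a, b⟩ _ ⟨c, d⟩ _ hh
      simp only [Prod.mk.injEq] at hh ⊢
      obtain ⟨h1, h2⟩ := hh
      have e1 : q * a = q * c := by rw [← h]; linear_combination u * h1 + D * v * h2
      have e2 : q * b = q * d := by rw [← h]; linear_combination u * h2 - v * h1
      exact ⟨mul_left_cancel₀ hq0 e1, mul_left_cancel₀ hq0 e2⟩
    · rintro ⟨a, b⟩ hx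
      rw [Finset.mem_filter, hS, mem_T le_rfl hD] at hx
      simp only at hx
      obtain ⟨⟨h1, h2⟩, ⟨d, hd⟩⟩ := hx
      have : q ∣ v * (u * a + D * v * b) := by
        refine ⟨b - u * d, ?_⟩
        linear_combination b * h - u * hd
      obtain ⟨c, hc⟩ := (hq.dvd_or_dvd this).resolve_left hv
      have ea : u * c - D * v * d = a := by
        apply mul_left_cancel₀ hq0
        linear_combination a * h - u * hc + D * v * hd
      have eb : v * c + u * d = b := by
        apply mul_left_cancel₀ hq0
        linear_combination b * h - v * hc - u * hd
      refine ⟨(c, d), ?_, ?_⟩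
      · rw [mem_T le_rfl hD]
        simp only
        refine ⟨?_, ?_⟩
        · apply mul_left_cancel₀ hq0
          rw [← h1, ← ea, ← eb]
          linear_combination -(c ^ 2 + D * d ^ 2) * h
        · rw [← hQ, ea, eb]; exact h2
      · simp only [ea, eb]
  have hB : (S.filter (fun x => q ∣ u * x.2 + v * x.1)).card
      = (S.filter (fun x => q ∣ u * x.2 - v * x.1)).card := by
    refine Finset.card_bij' (fun x _ => (x.1, -x.2)) (fun x _ => (x.1, -x.2)) ?_ ?_ ?_ ?_
    · intro x hx
      rw [Finset.mem_filter, hS, mem_T le_rfl hD] at hx ⊢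
      refine ⟨⟨by simpa using hx.1.1, (hPb _ _).2 hx.1.2⟩, ?_⟩
      have := (dvd_neg).2 hx.2
      convert! this using 1
      ring
    · intro x hx
      rw [Finset.mem_filter, hS, mem_T le_rfl hD] at hx ⊢
      refine ⟨⟨by simpa using hx.1.1, (hPb _ _).2 hx.1.2⟩, ?_⟩
      have := (dvd_neg).2 hx.2
      convert! this using 1
      ring
    · simp
    · simp
  have hU : S.filter (fun x => q ∣ u * x.2 - v * x.1) ∪ S.filter (fun x => q ∣ u * x.2 + v * x.1)
      = S := by
    rw [← Finset.filter_or, Finset.filter_eq_self]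
    intro x hx
    rw [hS, mem_T le_rfl hD] at hx
    apply hq.dvd_or_dvd
    refine ⟨x.2 ^ 2 - v ^ 2 * n, ?_⟩
    linear_combination x.2 ^ 2 * h - v ^ 2 * hx.1
  have hI : S.filter (fun x => q ∣ u * x.2 - v * x.1) ∩ S.filter (fun x => q ∣ u * x.2 + v * x.1)
      = S.filter (fun x => q ∣ x.1 ∧ q ∣ x.2) := by
    rw [← Finset.filter_and]
    apply Finset.filter_congr
    intro x _
    constructor
    · rintro ⟨h1, h2⟩
      constructor
      · have : q ∣ 2 * (v * x.1) := by
          have := dvd_sub h2 h1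
          convert! this using 1
          ring
        exact (hq.dvd_or_dvd ((hq.dvd_or_dvd this).resolve_left hq2)).resolve_left hv
      · have : q ∣ 2 * (u * x.2) := by
          have := dvd_add h2 h1
          convert! this using 1
          ring
        exact (hq.dvd_or_dvd ((hq.dvd_or_dvd this).resolve_left hq2)).resolve_left hu
    · rintro ⟨h1, h2⟩
      exact ⟨dvd_sub (h2.mul_left _) (h1.mul_left _), dvd_add (h2.mul_left _) (h1.mul_left _)⟩
  have := Finset.card_union_add_card_inter (S.filter (fun x => q ∣ u * x.2 - v * x.1))
    (S.filter (fun x => q ∣ u * x.2 + v * x.1))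
  rw [hU, hI, hB, hA] at this
  omega

end Sol

namespace Sol

/-- coprime to six -/
def cop (a : ℤ) : Prop := ¬ (2 : ℤ) ∣ a ∧ ¬ (3 : ℤ) ∣ a

/-- odd -/
def od (a : ℤ) : Prop := ¬ (2 : ℤ) ∣ a

/-- product predicate -/
def pr (p q : ℤ → Prop) (a b : ℤ) : Prop := p a ∧ q b

lemma T_congr {d e : ℤ} (hd : 1 ≤ d) (he : 1 ≤ e) {P Q : ℤ → ℤ → Prop} {n : ℤ}
    (h : ∀ a b, d * a ^ 2 + e * b ^ 2 = n → (P a b ↔ Q a b)) : T d e P n = T d e Q n := by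
  ext x
  rw [mem_T hd he, mem_T hd he]
  constructor
  · rintro ⟨h1, h2⟩; exact ⟨h1, (h _ _ h1).1 h2⟩
  · rintro ⟨h1, h2⟩; exact ⟨h1, (h _ _ h1).2 h2⟩

/-- the parity relation -/
def Inv (d e : ℤ) (P : ℤ → ℤ → Prop) : Prop :=
  (∀ m : ℤ, C d e P (17 * (17 * m)) % 2 = C d e P m % 2) ∧
  (∀ n : ℤ, ¬ (17 : ℤ) ∣ n → C d e P (17 * n) % 2 = 0)

lemma prime17 : Prime (17 : ℤ) := Int.prime_ofNat_iff.2 (by norm_num)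
lemma prime3 : Prime (3 : ℤ) := Int.prime_ofNat_iff.2 (by norm_num)

lemma inv_split (u v D : ℤ) (hD : 1 ≤ D) (h : u ^ 2 + D * v ^ 2 = 17)
    (hu : ¬ 17 ∣ u) (hv : ¬ 17 ∣ v) (P Q : ℤ → ℤ → Prop)
    (hP0 : ∀ a b, P a b → a ≠ 0 ∧ b ≠ 0) (hP1 : ∀ a b, P a b → P (-a) b)
    (hP2 : ∀ a b, P a b → P a (-b))
    (hQ0 : ∀ a b, Q a b → a ≠ 0 ∧ b ≠ 0) (hQ1 : ∀ a b, Q a b → Q (-a) b)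
    (hQ2 : ∀ a b, Q a b → Q a (-b))
    (hQ : ∀ c d, P (u * c - D * v * d) (v * c + u * d) ↔ Q c d)
    (hP17 : ∀ a b, P (17 * a) (17 * b) ↔ P a b) : Inv 1 D P := by
  have key := split_count 17 u v D prime17 (by norm_num) hD h hu hv P Q
    (fun a b => ⟨fun h => by simpa using hP2 _ _ h, hP2 a b⟩) hQ
  have f1 : ∀ n, (T 1 D P n).card = 4 * C 1 D P n := fun n => T_four le_rfl hD n hP0 hP1 hP2
  have f2 : ∀ n, (T 1 D Q n).card = 4 * C 1 D Q n := fun n => T_four le_rfl hD n hQ0 hQ1 hQ2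
  constructor
  · intro m
    have := key (17 * m)
    rw [card_div17 le_rfl hD hP17, f1, f1, f2] at this
    omega
  · intro n hn
    have := key n
    rw [card_div17' le_rfl hD n hn, f1, f2] at this
    omega

lemma inv_inert (d e : ℤ) (hd : 1 ≤ d) (he : 1 ≤ e) (P : ℤ → ℤ → Prop)
    (hP17 : ∀ a b, P (17 * a) (17 * b) ↔ P a b)
    (hi : ∀ a b, (17 : ℤ) ∣ d * a ^ 2 + e * b ^ 2 → (17 : ℤ) ∣ a ∧ (17 : ℤ) ∣ b) : Inv d e P := by
  classical
  have key : ∀ n, ((T d e (fun a b => P a b ∧ 0 < a ∧ 0 < b) (17 * n)).filter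
      (fun x => (17 : ℤ) ∣ x.1 ∧ (17 : ℤ) ∣ x.2)) =
      T d e (fun a b => P a b ∧ 0 < a ∧ 0 < b) (17 * n) := by
    intro n
    rw [Finset.filter_eq_self]
    intro x hx
    rw [mem_T hd he] at hx
    exact hi _ _ ⟨n, hx.1⟩
  constructor
  · intro m
    unfold C
    rw [← key, card_div17 hd he]
    intro a b
    rw [hP17]
    constructor <;> rintro ⟨h1, h2, h3⟩ <;> exact ⟨h1, by omega, by omega⟩
  · intro n hn
    unfold C
    rw [← key, card_div17' hd he n hn]

lemma inert_aux (d e : ℤ) (h : ∀ a b : ZMod 17, (d : ZMod 17) * a ^ 2 + e * b ^ 2 = 0 → a = 0 ∧ b = 0)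
    (a b : ℤ) (hab : (17 : ℤ) ∣ d * a ^ 2 + e * b ^ 2) : (17 : ℤ) ∣ a ∧ (17 : ℤ) ∣ b := by
  have h1 := (ZMod.intCast_zmod_eq_zero_iff_dvd (d * a ^ 2 + e * b ^ 2) 17).2 (by exact_mod_cast hab)
  push_cast at h1
  have := h _ _ h1
  have h2 := (ZMod.intCast_zmod_eq_zero_iff_dvd a 17).1 this.1
  have h3 := (ZMod.intCast_zmod_eq_zero_iff_dvd b 17).1 this.2
  exact ⟨by exact_mod_cast h2, by exact_mod_cast h3⟩

lemma cop17 (a : ℤ) : cop (17 * a) ↔ cop a := by unfold cop; omega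
lemma od17 (a : ℤ) : od (17 * a) ↔ od a := by unfold od; omega

lemma inv7 : Inv 3 4 (pr od cop) := by
  refine inv_inert 3 4 (by norm_num) (by norm_num) _ (fun a b => ?_) (inert_aux 3 4 (by decide))
  unfold pr; rw [od17, cop17]

lemma inv11 : Inv 3 8 (pr od cop) := by
  refine inv_inert 3 8 (by norm_num) (by norm_num) _ (fun a b => ?_) (inert_aux 3 8 (by decide))
  unfold pr; rw [od17, cop17]

lemma inv13 : Inv 1 12 (pr cop od) := by
  refine inv_inert 1 12 (by norm_num) (by norm_num) _ (fun a b => ?_) (inert_aux 1 12 (by decide))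
  unfold pr; rw [od17, cop17]

lemma inv5 : Inv 1 4 (pr cop cop) := by
  refine inv_split 1 2 4 (by norm_num) (by norm_num) (by norm_num) (by norm_num) _
    (fun c d => od c ∧ od d ∧ ¬ (3 : ℤ) ∣ (c + d) ∧ ¬ (3 : ℤ) ∣ (c - d)) ?_ ?_ ?_ ?_ ?_ ?_ ?_ ?_ <;>
  (intro a b; simp only [pr, cop, od]; omega)

lemma inv9 : Inv 1 8 (pr cop cop) := by
  refine inv_split 3 1 8 (by norm_num) (by norm_num) (by norm_num) (by norm_num) _
    (fun c d => od c ∧ (2 : ℤ) ∣ d ∧ ¬ (3 : ℤ) ∣ c ∧ ¬ (3 : ℤ) ∣ d) ?_ ?_ ?_ ?_ ?_ ?_ ?_ ?_ <;>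
  (intro a b; simp only [pr, cop, od]; omega)

lemma inv15' : Inv 1 4 (pr od od) := by
  refine inv_split 1 2 4 (by norm_num) (by norm_num) (by norm_num) (by norm_num) _
    (fun c d => od c ∧ od d) ?_ ?_ ?_ ?_ ?_ ?_ ?_ ?_ <;>
  (intro a b; simp only [pr, od]; omega)

open Classical in
lemma axis_count (D : ℤ) (hD : 1 ≤ D) (Q : ℤ → ℤ → Prop)
    (hQ0 : ∀ a b, Q a b → a ≠ 0) (hQ1 : ∀ a b, Q a b → Q (-a) b)
    (hQ2 : ∀ a b, Q a b → Q a (-b)) (hc : ∀ a, Q a 0 ↔ cop a) (n : ℤ) :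
    ∃ t : ℕ, (T 1 D Q n).card = 4 * t + 2 * (if ∃ c : ℤ, 0 < c ∧ cop c ∧ c ^ 2 = n then 1 else 0) := by
  refine ⟨C 1 D (fun a b => Q a b ∧ b ≠ 0) n, ?_⟩
  rw [← T_four le_rfl hD n, ← Finset.card_filter_add_card_filter_not (s := T 1 D Q n) (fun x => x.2 ≠ 0)]
  · congr 1
    · congr 1
      ext x
      rw [Finset.mem_filter, mem_T le_rfl hD, mem_T le_rfl hD]
      tauto
    · rw [card_two _ (fun x => 0 < x.1) (fun x => (-x.1, x.2))]
      · congr 1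
        rw [Finset.filter_filter]
        split_ifs with h
        · obtain ⟨c, hc0, hcc, hcn⟩ := h
          rw [Finset.card_eq_one]
          refine ⟨(c, 0), ?_⟩
          ext ⟨a, b⟩
          rw [Finset.mem_filter, mem_T le_rfl hD, Finset.mem_singleton]
          simp only [ne_eq, not_not, Prod.mk.injEq]
          constructor
          · rintro ⟨⟨h1, h2⟩, h3, h4⟩
            subst h3
            refine ⟨?_, rfl⟩
            have : a ^ 2 = c ^ 2 := by rw [hcn, ← h1]; ring
            rcases sq_eq_sq_iff_eq_or_eq_neg.1 this with h | h <;> omega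
          · rintro ⟨rfl, rfl⟩
            exact ⟨⟨by rw [← hcn]; ring, (hc _).2 hcc⟩, rfl, hc0⟩
        · rw [Finset.card_eq_zero, Finset.filter_eq_empty_iff]
          rintro ⟨a, b⟩ hx hx2
          rw [mem_T le_rfl hD] at hx
          simp only [ne_eq, not_not] at hx hx2
          obtain ⟨h3, h4⟩ := hx2
          subst h3
          exact h ⟨a, h4, (hc _).1 hx.2, by rw [← hx.1]; ring⟩
      · intro x hx
        rw [Finset.mem_filter, mem_T le_rfl hD] at hx ⊢
        exact ⟨⟨by simpa using hx.1.1, hQ1 _ _ hx.1.2⟩, hx.2⟩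
      · simp
      · intro x hx
        rw [Finset.mem_filter, mem_T le_rfl hD] at hx
        have := hQ0 _ _ hx.1.2
        simp only; omega
  · intro a b h; exact ⟨hQ0 _ _ h.1, h.2⟩
  · intro a b h; exact ⟨hQ1 _ _ h.1, h.2⟩
  · intro a b h; exact ⟨hQ2 _ _ h.1, by simpa using h.2⟩

open Classical in
lemma count17 : (∀ m : ℤ, (C 1 16 (pr cop cop) (17 * (17 * m)) + C 1 16 (pr cop cop) m) % 2
      = (if ∃ c : ℤ, 0 < c ∧ cop c ∧ c ^ 2 = 17 * m then 1 else 0)) ∧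
    (∀ n : ℤ, ¬ (17 : ℤ) ∣ n → C 1 16 (pr cop cop) (17 * n) % 2 =
      (if ∃ c : ℤ, 0 < c ∧ cop c ∧ c ^ 2 = n then 1 else 0)) := by
  have key := split_count 17 1 1 16 prime17 (by norm_num) (by norm_num) (by norm_num) (by norm_num)
    (by norm_num) (pr cop cop)
    (fun c d => od c ∧ (2 : ℤ) ∣ d ∧ ¬ (3 : ℤ) ∣ (c + d) ∧ ¬ (3 : ℤ) ∣ (c - d))
    (by intro a b; simp only [pr, cop]; omega) (by intro a b; simp only [pr, cop, od]; omega)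
  have f1 : ∀ n, (T 1 16 (pr cop cop) n).card = 4 * C 1 16 (pr cop cop) n := fun n => by
    refine T_four le_rfl (by norm_num) n ?_ ?_ ?_ <;> (intro a b; simp only [pr, cop]; omega)
  have f2 := axis_count 16 (by norm_num)
    (fun c d => od c ∧ (2 : ℤ) ∣ d ∧ ¬ (3 : ℤ) ∣ (c + d) ∧ ¬ (3 : ℤ) ∣ (c - d))
    (by intro a b; simp only [od]; omega) (by intro a b; simp only [od]; omega)
    (by intro a b; simp only [od]; omega) (by intro a; simp only [od, cop]; omega)
  constructor
  · intro m
    have := key (17 * m)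
    obtain ⟨t, ht⟩ := f2 (17 * m)
    rw [card_div17 le_rfl (by norm_num) (by intro a b; simp only [pr, cop]; omega), f1, f1, ht] at this
    split_ifs at this ⊢ <;> omega
  · intro n hn
    have := key n
    obtain ⟨t, ht⟩ := f2 n
    rw [card_div17' le_rfl (by norm_num) n hn, f1, ht] at this
    split_ifs at this ⊢ <;> omega

lemma sq_mod3 (c : ℤ) : c ^ 2 % 3 = if (3 : ℤ) ∣ c then 0 else 1 := by
  have : c % 3 = 0 ∨ c % 3 = 1 ∨ c % 3 = 2 := by omega
  rcases this with h | h | h <;> simp [pow_two, Int.mul_emod, h, Int.dvd_iff_emod_eq_zero]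

lemma ccf (n : ℤ) : (T 1 2 (pr cop cop) n).card = 4 * C 1 2 (pr cop cop) n := by
  refine T_four le_rfl (by norm_num) n ?_ ?_ ?_ <;> (intro a b; simp only [pr, cop]; omega)

/-- auxiliary predicate -/
def Q1 (c d : ℤ) : Prop := od c ∧ (2 : ℤ) ∣ d ∧ ¬ (3 : ℤ) ∣ (c + d)
/-- auxiliary predicate -/
def Q2 (c d : ℤ) : Prop := od c ∧ od d ∧ ¬ (3 : ℤ) ∣ (c + d)

lemma cc3 (n : ℤ) : 2 * C 1 2 (pr cop cop) (3 * n) = (T 1 2 Q1 n).card := by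
  classical
  have key := split_count 3 1 1 2 prime3 (by norm_num) (by norm_num) (by norm_num) (by norm_num)
    (by norm_num) (pr cop cop) Q1
    (by intro a b; simp only [pr, cop]; omega) (by intro a b; simp only [pr, cop, od, Q1]; omega) n
  have h0 : ((T 1 2 (pr cop cop) (3 * n)).filter (fun x => (3 : ℤ) ∣ x.1 ∧ (3 : ℤ) ∣ x.2)).card = 0 := by
    rw [Finset.card_eq_zero, Finset.filter_eq_empty_iff]
    intro x hx hx2
    rw [mem_T le_rfl (by norm_num)] at hx
    exact hx.2.1.2 hx2.1
  rw [h0, ccf] at key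
  omega

lemma cc_zero (n : ℤ) (hn : ¬ (3 : ℤ) ∣ n) : C 1 2 (pr cop cop) n = 0 := by
  unfold C
  rw [Finset.card_eq_zero, Finset.eq_empty_iff_forall_notMem]
  intro x hx
  rw [mem_T le_rfl (by norm_num)] at hx
  obtain ⟨h1, ⟨h2, h3⟩, -⟩ := hx
  have e1 := sq_mod3 x.1
  have e2 := sq_mod3 x.2
  rw [if_neg h2.2] at e1
  rw [if_neg h3.2] at e2
  omega

open Classical in
lemma cc_a (n : ℤ) (hn : ¬ (3 : ℤ) ∣ n) : C 1 2 (pr cop cop) (3 * n) % 2 =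
    if ∃ c : ℤ, 0 < c ∧ cop c ∧ c ^ 2 = n then 1 else 0 := by
  have h := cc3 n
  rw [T_congr (Q := fun c d => Q1 c d ∧ ¬ (3 : ℤ) ∣ (c - d)) le_rfl (by norm_num)] at h
  · obtain ⟨t, ht⟩ := axis_count 2 (by norm_num) (fun c d => Q1 c d ∧ ¬ (3 : ℤ) ∣ (c - d))
      (by intro a b; simp only [od, Q1]; omega) (by intro a b; simp only [od, Q1]; omega)
      (by intro a b; simp only [od, Q1]; omega) (by intro a; simp only [od, cop, Q1]; omega) n
    rw [ht] at h
    split_ifs at h ⊢ <;> omega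
  · intro a b hab
    have e1 := sq_mod3 a
    have e2 := sq_mod3 b
    unfold Q1 od
    split_ifs at e1 e2 <;> omega

lemma q1q2 (m : ℤ) : (T 1 2 Q1 (3 * m)).card = (T 1 2 Q2 m).card := by
  symm
  have h2 : (1 : ℤ) ≤ 2 := by norm_num
  refine Finset.card_bij (fun x _ => (x.1 - 2 * x.2, x.1 + x.2)) ?_ ?_ ?_
  · intro x hx
    rw [mem_T le_rfl h2] at hx ⊢
    refine ⟨?_, ?_⟩
    · simp only
      rw [← hx.1]; ring
    · have := hx.2
      simp only [Q1, Q2, od] at this ⊢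
      omega
  · rintro ⟨a, b⟩ _ ⟨c, d⟩ _ hh
    simp only [Prod.mk.injEq] at hh ⊢
    omega
  · rintro ⟨a, b⟩ hx
    rw [mem_T le_rfl h2] at hx
    obtain ⟨h3, h4⟩ := hx
    simp only [Q1, od] at h3 h4
    have e1 := sq_mod3 a
    have e2 := sq_mod3 b
    have : (3 : ℤ) ∣ b - a := by
      have m1 : a % 3 = 0 ∨ a % 3 = 1 ∨ a % 3 = 2 := by omega
      have m2 : b % 3 = 0 ∨ b % 3 = 1 ∨ b % 3 = 2 := by omega
      rcases m1 with m1 | m1 | m1 <;> rcases m2 with m2 | m2 | m2 <;>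
      split_ifs at e1 e2 <;> omega
    obtain ⟨f, hf⟩ := this
    obtain rfl : b = 3 * f + a := by omega
    refine ⟨(a + 2 * f, f), ?_, ?_⟩
    · rw [mem_T le_rfl h2]
      simp only [Q2, od]
      refine ⟨by nlinarith, ?_⟩
      omega
    · simp only [Prod.mk.injEq]; omega

lemma cc_b (m : ℤ) : C 1 2 (pr cop cop) (3 * (3 * m)) % 2 = C 1 2 (pr cop cop) m % 2 := by
  classical
  have h := cc3 (3 * m)
  have h2 : (1 : ℤ) ≤ 2 := by norm_num
  rw [q1q2] at h
  by_cases hm : (3 : ℤ) ∣ m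
  · have h5 := card_two (T 1 2 (pr cop cop) m) (fun x => (3 : ℤ) ∣ x.1 - x.2) (fun x => (x.1, - x.2))
      (by
        intro x hx
        rw [mem_T le_rfl h2] at hx ⊢
        refine ⟨by simpa using hx.1, ?_⟩
        have := hx.2
        simp only [pr, cop] at this ⊢
        omega) (by simp) (by
        intro x hx
        rw [mem_T le_rfl h2] at hx
        have := hx.2
        simp only [pr, cop] at this ⊢
        have m1 : x.1 % 3 = 1 ∨ x.1 % 3 = 2 := by omega
        have m2 : x.2 % 3 = 1 ∨ x.2 % 3 = 2 := by omega
        rcases m1 with m1 | m1 <;> rcases m2 with m2 | m2 <;> omega)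
    have h6 : (T 1 2 (pr cop cop) m).filter (fun x => (3 : ℤ) ∣ x.1 - x.2) = T 1 2 Q2 m := by
      ext x
      rw [Finset.mem_filter, mem_T le_rfl h2, mem_T le_rfl h2, and_assoc]
      refine and_congr_right fun hx => ?_
      have e1 := sq_mod3 x.1
      have e2 := sq_mod3 x.2
      simp only [pr, cop, Q2, od]
      have m1 : x.1 % 3 = 0 ∨ x.1 % 3 = 1 ∨ x.1 % 3 = 2 := by omega
      have m2 : x.2 % 3 = 0 ∨ x.2 % 3 = 1 ∨ x.2 % 3 = 2 := by omega
      clear h h5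
      rcases m1 with m1 | m1 | m1 <;> rcases m2 with m2 | m2 | m2 <;>
      split_ifs at e1 e2 <;> omega
    rw [h6, ccf] at h5
    omega
  · rw [cc_zero m hm]
    rw [T_congr (Q := fun c d => Q2 c d ∧ ¬ (3 : ℤ) ∣ (c - d)) le_rfl h2, T_four le_rfl h2] at h
    · omega
    · intro a b; simp only [Q2, od]; omega
    · intro a b; simp only [Q2, od]; omega
    · intro a b; simp only [Q2, od]; omega
    · intro a b hab
      have e1 := sq_mod3 a
      have e2 := sq_mod3 b
      unfold Q2 od
      split_ifs at e1 e2 <;> omega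

open Classical in
lemma cc_main (n : ℕ) : C 1 2 (pr cop cop) (n : ℤ) % 2 =
    if ∃ x : ℤ, 0 < x ∧ od x ∧ 3 * x ^ 2 = n then 1 else 0 := by
  induction n using Nat.strong_induction_on with
  | _ n ih =>
  by_cases h3 : (3 : ℤ) ∣ n
  swap
  · rw [cc_zero _ h3, if_neg]
    rintro ⟨x, _, _, hx⟩
    exact h3 ⟨_, hx.symm⟩
  rcases Nat.eq_zero_or_pos n with rfl | hn
  · rw [if_neg]
    · have : C 1 2 (pr cop cop) ((0 : ℕ) : ℤ) = 0 := by
        unfold C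
        rw [Finset.card_eq_zero, Finset.eq_empty_iff_forall_notMem]
        intro x hx
        rw [mem_T le_rfl (by norm_num)] at hx
        obtain ⟨h1, -, h2, h3⟩ := hx
        push_cast at h1
        nlinarith [pow_pos h2 2, pow_pos h3 2]
      rw [this]
    · rintro ⟨x, h1, _, hx⟩
      push_cast at hx
      nlinarith [pow_pos h1 2]
  obtain ⟨k, rfl⟩ : 3 ∣ n := by exact_mod_cast h3
  by_cases h9 : (3 : ℤ) ∣ k
  · obtain ⟨m, rfl⟩ : 3 ∣ k := by exact_mod_cast h9
    push_cast
    rw [cc_b, ih m (by omega)]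
    congr 1
    apply propext
    constructor
    · rintro ⟨x, h1, h2, h3⟩
      exact ⟨3 * x, by omega, by unfold od at *; omega, by nlinarith⟩
    · rintro ⟨x, h1, h2, h3⟩
      have : (3 : ℤ) ∣ x ^ 2 := ⟨m, by omega⟩
      obtain ⟨y, rfl⟩ := prime3.dvd_of_dvd_pow this
      exact ⟨y, by omega, by unfold od at *; omega, by nlinarith⟩
  · push_cast
    rw [cc_a _ h9]
    congr 1
    apply propext
    constructor
    · rintro ⟨x, h1, h2, h3⟩
      exact ⟨x, h1, h2.1, by rw [h3]⟩
    · rintro ⟨x, h1, h2, h3⟩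
      refine ⟨x, h1, ⟨h2, ?_⟩, by omega⟩
      rintro ⟨y, rfl⟩
      exact h9 ⟨3 * y ^ 2, by nlinarith⟩

end Sol

open PowerSeries
namespace Sol

lemma sq_eq_expand (A : (ZMod 2)⟦X⟧) : A ^ 2 = expand 2 two_ne_zero A := by
  ext n
  rw [coeff_expand, pow_two, coeff_mul]
  have hswap : ∀ x ∈ (Finset.HasAntidiagonal.antidiagonal n).filter (fun x => x.1 ≠ x.2),
      coeff x.1 A * coeff x.2 A + coeff x.2 A * coeff x.1 A = 0 := by
    intro x _
    rw [mul_comm]; exact CharTwo.add_self_eq_zero _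
  rw [← Finset.sum_filter_add_sum_filter_not (Finset.HasAntidiagonal.antidiagonal n) (fun x => x.1 ≠ x.2)]
  have h0 : ∑ x ∈ (Finset.HasAntidiagonal.antidiagonal n).filter (fun x => x.1 ≠ x.2),
      coeff x.1 A * coeff x.2 A = 0 := by
    refine Finset.sum_involution (fun x _ => x.swap) ?_ ?_ ?_ ?_
    · intro x hx; exact hswap x hx
    · intro x hx _ h
      simp only [Finset.mem_filter] at hx
      apply hx.2
      have := congrArg Prod.fst h
      simpa using this.symm
    · intro x hx
      simp only [Finset.mem_filter, Finset.HasAntidiagonal.mem_antidiagonal, Prod.fst_swap, Prod.snd_swap] at hx ⊢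
      exact ⟨by omega, hx.2.symm⟩
    · intro x _; simp
  rw [h0, zero_add]
  split_ifs with h
  · obtain ⟨m, rfl⟩ := h
    rw [Finset.sum_eq_single (m, m)]
    · rw [Nat.mul_div_cancel_left _ (by norm_num)]
      generalize coeff m A = z
      revert z; decide
    · rintro ⟨a, b⟩ hx hne
      simp only [Finset.mem_filter, Finset.HasAntidiagonal.mem_antidiagonal, not_not] at hx
      exfalso; apply hne
      ext <;> simp only <;> omega
    · intro hx
      exfalso; apply hx
      simp only [Finset.mem_filter, Finset.HasAntidiagonal.mem_antidiagonal, not_not]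
      exact ⟨by omega, trivial⟩
  · rw [Finset.sum_eq_zero]
    rintro ⟨a, b⟩ hx
    simp only [Finset.mem_filter, Finset.HasAntidiagonal.mem_antidiagonal, not_not] at hx
    exfalso; apply h
    exact ⟨a, by omega⟩

open Classical in
/-- partial theta series -/
noncomputable def th (p : ℤ → Prop) (d : ℕ) : (ZMod 2)⟦X⟧ :=
  PowerSeries.mk fun n => if ∃ a : ℤ, 0 < a ∧ p a ∧ (d : ℤ) * a ^ 2 = n then 1 else 0

open Classical in
lemma coeff_th (p : ℤ → Prop) (d n : ℕ) : coeff n (th p d) =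
    if ∃ a : ℤ, 0 < a ∧ p a ∧ (d : ℤ) * a ^ 2 = n then 1 else 0 := by
  unfold th; rw [coeff_mk]

lemma expand_th (p : ℤ → Prop) (d m : ℕ) (hm : m ≠ 0) : expand m hm (th p d) = th p (m * d) := by
  classical
  ext n
  rw [coeff_expand, coeff_th, coeff_th]
  split_ifs with h1 h2 h3 h3 h2
  · rfl
  · exfalso; apply h3
    obtain ⟨a, ha, hp, h⟩ := h2
    obtain ⟨k, rfl⟩ := h1
    rw [Nat.mul_div_cancel_left _ (Nat.pos_of_ne_zero hm)] at h
    exact ⟨a, ha, hp, by push_cast; rw [← h]; ring⟩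
  · exfalso; apply h2
    obtain ⟨a, ha, hp, h⟩ := h3
    obtain ⟨k, rfl⟩ := h1
    rw [Nat.mul_div_cancel_left _ (Nat.pos_of_ne_zero hm)]
    refine ⟨a, ha, hp, ?_⟩
    push_cast at h
    have : (m : ℤ) ≠ 0 := by exact_mod_cast hm
    apply mul_left_cancel₀ this
    rw [← h]; ring
  · rfl
  · exfalso; apply h1
    obtain ⟨a, ha, hp, h⟩ := h2
    have : (m : ℤ) ∣ n := ⟨d * a ^ 2, by rw [← h]; push_cast; ring⟩
    exact_mod_cast this
  · rfl

lemma coeff_th_mul (p q : ℤ → Prop) (d e : ℕ) (hd : 1 ≤ d) (he : 1 ≤ e) (n : ℕ) :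
    coeff n (th p d * th q e) = (C d e (pr p q) n : ZMod 2) := by
  classical
  have hd' : (1 : ℤ) ≤ d := by exact_mod_cast hd
  have he' : (1 : ℤ) ≤ e := by exact_mod_cast he
  rw [coeff_mul]
  simp_rw [coeff_th]
  simp_rw [ite_mul, one_mul, zero_mul, ← ite_and]
  rw [Finset.sum_boole]
  congr 1
  unfold C
  symm
  refine Finset.card_bij (fun x _ => ((d * x.1 ^ 2 : ℤ).toNat, (e * x.2 ^ 2 : ℤ).toNat)) ?_ ?_ ?_
  · intro x hx
    rw [mem_T hd' he'] at hx
    obtain ⟨h1, ⟨h2, h3⟩, h4, h5⟩ := hx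
    have p1 : 0 ≤ (d * x.1 ^ 2 : ℤ) := by positivity
    have p2 : 0 ≤ (e * x.2 ^ 2 : ℤ) := by positivity
    rw [Finset.mem_filter, Finset.HasAntidiagonal.mem_antidiagonal]
    refine ⟨by simp only; omega, ⟨x.1, h4, h2, ?_⟩, ⟨x.2, h5, h3, ?_⟩⟩
    · simp only; omega
    · simp only; omega
  · rintro ⟨a, b⟩ hx ⟨a', b'⟩ hy hxy
    rw [mem_T hd' he'] at hx hy
    obtain ⟨h1, -, h4, h5⟩ := hx
    obtain ⟨k1, -, k4, k5⟩ := hy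
    simp only [Prod.mk.injEq] at *
    obtain ⟨e1, e2⟩ := hxy
    have p1 : 0 ≤ (d * a ^ 2 : ℤ) := by positivity
    have p2 : 0 ≤ (e * b ^ 2 : ℤ) := by positivity
    have p3 : 0 ≤ (d * a' ^ 2 : ℤ) := by positivity
    have p4 : 0 ≤ (e * b' ^ 2 : ℤ) := by positivity
    have f1 : (d * a ^ 2 : ℤ) = d * a' ^ 2 := by omega
    have f2 : (e * b ^ 2 : ℤ) = e * b' ^ 2 := by omega
    have g1 := mul_left_cancel₀ (by omega) f1
    have g2 := mul_left_cancel₀ (by omega) f2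
    constructor
    · rcases sq_eq_sq_iff_eq_or_eq_neg.1 g1 with h | h <;> omega
    · rcases sq_eq_sq_iff_eq_or_eq_neg.1 g2 with h | h <;> omega
  · rintro ⟨i, j⟩ hx
    rw [Finset.mem_filter, Finset.HasAntidiagonal.mem_antidiagonal] at hx
    obtain ⟨h, ⟨a, ha, hpa, h1⟩, ⟨b, hb, hqb, h2⟩⟩ := hx
    simp only at h h1 h2
    refine ⟨(a, b), ?_, ?_⟩
    · rw [mem_T hd' he']
      exact ⟨by simp only; omega, ⟨hpa, hqb⟩, ha, hb⟩
    · simp only [h1, h2]; simp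

/-- the eta series -/
noncomputable def G : (ZMod 2)⟦X⟧ := th cop 1

lemma th_sq (p : ℤ → Prop) (d : ℕ) : th p d ^ 2 = th p (2 * d) := by
  rw [sq_eq_expand, expand_th]

lemma G2 : G ^ 2 = th cop 2 := by unfold G; rw [th_sq]
lemma G4 : G ^ 4 = th cop 4 := by
  rw [show 4 = 2 * 2 by rfl, pow_mul, G2, th_sq]
lemma G8 : G ^ 8 = th cop 8 := by
  rw [show 8 = 4 * 2 by rfl, pow_mul, G4, th_sq]
lemma G16 : G ^ 16 = th cop 16 := by
  rw [show 16 = 8 * 2 by rfl, pow_mul, G8, th_sq]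

lemma cast_mod2 (a : ℕ) : (a : ZMod 2) = ((a % 2 : ℕ) : ZMod 2) := by simp

lemma G3 : G ^ 3 = th od 3 := by
  classical
  rw [show 3 = 1 + 2 by rfl, pow_add, G2, pow_one]
  unfold G
  ext n
  rw [coeff_th_mul _ _ _ _ le_rfl (by norm_num), coeff_th, cast_mod2]
  have := cc_main n
  push_cast at this ⊢
  rw [this]
  split_ifs <;> rfl

lemma G12 : G ^ 12 = th od 12 := by
  rw [show 12 = 3 * 2 * 2 by rfl, pow_mul, pow_mul, G3, th_sq, th_sq]

/-- the relation `T_17 A = 0` -/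
def Hk (A : (ZMod 2)⟦X⟧) : Prop :=
  ∀ n : ℕ, coeff (17 * n) A = if 17 ∣ n then coeff (n / 17) A else 0

lemma Hk_prod (p q : ℤ → Prop) (d e : ℕ) (hd : 1 ≤ d) (he : 1 ≤ e)
    (h : Inv d e (pr p q)) : Hk (th p d * th q e) := by
  intro n
  rw [coeff_th_mul p q d e hd he]
  split_ifs with h17
  · obtain ⟨m, rfl⟩ := h17
    rw [Nat.mul_div_cancel_left _ (by norm_num), coeff_th_mul p q d e hd he, cast_mod2]
    push_cast
    rw [h.1 m, ← cast_mod2]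
  · rw [cast_mod2]
    push_cast
    rw [h.2 n (by exact_mod_cast h17)]
    simp

lemma Hk_th (p : ℤ → Prop) (d : ℕ) (hd : ¬ 17 ∣ d) (hp : ∀ a, p (17 * a) ↔ p a) :
    Hk (th p d) := by
  classical
  intro n
  have hd' : ¬ (17 : ℤ) ∣ (d : ℤ) := by exact_mod_cast hd
  have key : ∀ a : ℤ, (d : ℤ) * a ^ 2 = (17 * n : ℕ) → ∃ b, a = 17 * b ∧ (n : ℤ) = 17 * (d * b ^ 2) := by
    intro a h
    have : (17 : ℤ) ∣ d * a ^ 2 := ⟨n, by rw [h]; push_cast; ring⟩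
    obtain ⟨b, rfl⟩ := prime17.dvd_of_dvd_pow ((prime17.dvd_or_dvd this).resolve_left hd')
    refine ⟨b, rfl, ?_⟩
    push_cast at h
    nlinarith
  rw [coeff_th, coeff_th]
  split_ifs with h1 h2 h3 h3 h4
  · rfl
  · exfalso; apply h3
    obtain ⟨a, ha, hpa, h⟩ := h1
    obtain ⟨b, rfl, hb⟩ := key a h
    refine ⟨b, by omega, (hp b).1 hpa, by omega⟩
  · exfalso
    obtain ⟨a, ha, hpa, h⟩ := h1
    obtain ⟨b, rfl, hb⟩ := key a h
    apply h2
    have : (17 : ℤ) ∣ n := ⟨_, hb⟩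
    exact_mod_cast this
  · exfalso; apply h1
    obtain ⟨b, hb0, hpb, hb⟩ := h4
    obtain ⟨m, rfl⟩ := h3
    rw [Nat.mul_div_cancel_left _ (by norm_num)] at hb
    refine ⟨17 * b, by omega, (hp b).2 hpb, ?_⟩
    push_cast
    rw [← hb]; ring
  · rfl
  · rfl

lemma Hk_expand (A : (ZMod 2)⟦X⟧) (h : Hk A) : Hk (expand 3 three_ne_zero A) := by
  intro n
  rw [coeff_expand, coeff_expand]
  by_cases h3 : 3 ∣ n
  · obtain ⟨m, rfl⟩ := h3
    rw [if_pos (by omega), show 17 * (3 * m) / 3 = 17 * m by omega, h]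
    by_cases h17 : 17 ∣ m
    · obtain ⟨k, rfl⟩ := h17
      rw [if_pos (by omega), if_pos (by omega), if_pos (by omega)]
      rw [show 17 * k / 17 = 3 * (17 * k) / 17 / 3 by omega]
    · rw [if_neg h17, if_neg (by omega)]
  · rw [if_neg (by omega)]
    split_ifs with h1 h2
    · omega
    · rfl
    · rfl

lemma Hk1 : Hk (G ^ 1) := by
  rw [pow_one]; exact Hk_th _ _ (by norm_num) cop17
lemma Hk3 : Hk (G ^ 3) := by
  rw [G3]; exact Hk_th _ _ (by norm_num) od17
lemma Hk5 : Hk (G ^ 5) := by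
  rw [show 5 = 1 + 4 by rfl, pow_add, G4, pow_one]
  exact Hk_prod _ _ _ _ (by norm_num) (by norm_num) inv5
lemma Hk7 : Hk (G ^ 7) := by
  rw [show 7 = 3 + 4 by rfl, pow_add, G4, G3]
  exact Hk_prod _ _ _ _ (by norm_num) (by norm_num) inv7
lemma Hk9 : Hk (G ^ 9) := by
  rw [show 9 = 1 + 8 by rfl, pow_add, G8, pow_one]
  exact Hk_prod _ _ _ _ (by norm_num) (by norm_num) inv9
lemma Hk11 : Hk (G ^ 11) := by
  rw [show 11 = 3 + 8 by rfl, pow_add, G8, G3]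
  exact Hk_prod _ _ _ _ (by norm_num) (by norm_num) inv11
lemma Hk13 : Hk (G ^ 13) := by
  rw [show 13 = 1 + 12 by rfl, pow_add, G12, pow_one]
  exact Hk_prod _ _ _ _ (by norm_num) (by norm_num) inv13
lemma Hk15 : Hk (G ^ 15) := by
  rw [show 15 = 3 + 12 by rfl, pow_add, G12, G3]
  have : th od 3 * th od 12 = expand 3 three_ne_zero (th od 1 * th od 4) := by
    rw [map_mul, expand_th, expand_th]
  rw [this]
  exact Hk_expand _ (Hk_prod _ _ _ _ (by norm_num) (by norm_num) inv15')

lemma Hk17 (n : ℕ) : coeff (17 * n) (G ^ 17) + (if 17 ∣ n then coeff (n / 17) (G ^ 17) else 0)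
    = coeff n G := by
  classical
  rw [show 17 = 1 + 16 by rfl, pow_add, G16, pow_one]
  unfold G
  rw [coeff_th_mul _ _ _ _ le_rfl (by norm_num), coeff_th]
  obtain ⟨h1, h2⟩ := count17
  split_ifs with h17 h h
  · obtain ⟨m, rfl⟩ := h17
    rw [Nat.mul_div_cancel_left _ (by norm_num), coeff_th_mul _ _ _ _ le_rfl (by norm_num),
      ← Nat.cast_add, cast_mod2]
    have := h1 m
    push_cast at this h ⊢
    rw [this, if_pos (by simpa using h)]; simp
  · obtain ⟨m, rfl⟩ := h17
    rw [Nat.mul_div_cancel_left _ (by norm_num), coeff_th_mul _ _ _ _ le_rfl (by norm_num),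
      ← Nat.cast_add, cast_mod2]
    have := h1 m
    push_cast at this h ⊢
    rw [this, if_neg (by simpa using h)]; simp
  · rw [add_zero, cast_mod2]
    have := h2 n (by exact_mod_cast h17)
    push_cast at this h ⊢
    rw [this, if_pos (by simpa using h)]; simp
  · rw [add_zero, cast_mod2]
    have := h2 n (by exact_mod_cast h17)
    push_cast at this h ⊢
    rw [this, if_neg (by simpa using h)]; simp

end Sol

open PowerSeries PowerSeries.WithPiTopology
namespace Sol

lemma zmod2_ne (z : ZMod 2) (h : z ≠ 0) : z = 1 := by revert z; decide

/-- Euler product modulo two -/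
noncomputable def F : (ZMod 2)⟦X⟧ := pentagonalSeries (ZMod 2)

lemma G_eq : G = X * expand 24 (by norm_num) F := by
  classical
  ext n
  unfold G
  rw [coeff_th]
  have key : ∀ k : ℤ, 24 * (pentagonal k : ℤ) + 1 = (6 * k - 1) ^ 2 := by
    intro k
    have := two_mul_natCast_pentagonal k
    linear_combination 12 * this
  rcases n with _ | n
  · rw [if_neg]
    · simp
    · rintro ⟨a, ha, _, h⟩
      push_cast at h
      nlinarith [pow_pos ha 2]
  · rw [coeff_succ_X_mul, coeff_expand]
    split_ifs with h1 h2 h2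
    · obtain ⟨a, ha, hc, h⟩ := h1
      symm
      apply zmod2_ne
      unfold F
      rw [ne_eq, coeff_pentagonalSeries_eq_zero_iff, not_not]
      obtain ⟨m, rfl⟩ := h2
      rw [Nat.mul_div_cancel_left _ (by norm_num)]
      unfold cop at hc
      have hk : ∃ k : ℤ, a = 6 * k - 1 ∨ a = - (6 * k - 1) := by
        have : a % 6 = 1 ∨ a % 6 = 5 := by omega
        rcases this with h | h
        · exact ⟨- (a / 6), by omega⟩
        · exact ⟨a / 6 + 1, by omega⟩
      obtain ⟨k, hk⟩ := hk
      refine ⟨k, ?_⟩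
      have h3 : a ^ 2 = (6 * k - 1) ^ 2 := by rcases hk with rfl | rfl <;> ring
      have := key k
      push_cast at h
      omega
    · exfalso; apply h2
      obtain ⟨a, ha, hc, h⟩ := h1
      unfold cop at hc
      have hk : ∃ k : ℤ, a = 6 * k - 1 ∨ a = - (6 * k - 1) := by
        have : a % 6 = 1 ∨ a % 6 = 5 := by omega
        rcases this with h | h
        · exact ⟨- (a / 6), by omega⟩
        · exact ⟨a / 6 + 1, by omega⟩
      obtain ⟨k, hk⟩ := hk
      have h3 : a ^ 2 = (6 * k - 1) ^ 2 := by rcases hk with rfl | rfl <;> ring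
      have := key k
      push_cast at h
      omega
    · symm
      by_contra h
      unfold F at h
      rw [coeff_pentagonalSeries_eq_zero_iff, not_not] at h
      obtain ⟨k, hk⟩ := h
      obtain ⟨m, rfl⟩ := h2
      rw [Nat.mul_div_cancel_left _ (by norm_num)] at hk
      subst hk
      apply h1
      refine ⟨|6 * k - 1|, by rw [abs_pos]; omega, ?_, ?_⟩
      · unfold cop; rw [dvd_abs, dvd_abs]; omega
      · rw [sq_abs, ← key]; push_cast; ring
    · rfl

lemma hasProd_map {K : Type*} [CommRing K] [TopologicalSpace K] {ι : Type*}
    (φ : K⟦X⟧ →* K⟦X⟧) (hφ : ∀ n, ∃ m, ∃ c : K, Continuous (fun z : K => c * z) ∧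
      ∀ A, coeff n (φ A) = c * coeff m A)
    (f : ι → K⟦X⟧) (a : K⟦X⟧) (h : HasProd f a) : HasProd (fun i => φ (f i)) (φ a) := by
  refine h.map φ ?_
  rw [continuous_iff_continuousAt]
  intro x
  unfold ContinuousAt
  rw [tendsto_iff_coeff_tendsto]
  intro n
  obtain ⟨m, c, hc, h⟩ := hφ n
  simp_rw [h]
  exact (hc.comp (continuous_coeff K m)).tendsto x

lemma hasProd_expand {K : Type*} [CommRing K] [TopologicalSpace K] [DiscreteTopology K]
    {ι : Type*} (m : ℕ) (hm : m ≠ 0) (f : ι → K⟦X⟧) (a : K⟦X⟧) (h : HasProd f a) :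
    HasProd (fun i => expand m hm (f i)) (expand m hm a) := by
  refine hasProd_map ((expand m hm : K⟦X⟧ →ₐ[K] K⟦X⟧) : K⟦X⟧ →* K⟦X⟧) ?_ f a h
  intro n
  refine ⟨n / m, if m ∣ n then 1 else 0, continuous_of_discreteTopology, fun A => ?_⟩
  simp [coeff_expand]

lemma hasProd_rescale {K : Type*} [CommRing K] [TopologicalSpace K] [DiscreteTopology K]
    {ι : Type*} (w : K) (f : ι → K⟦X⟧) (a : K⟦X⟧) (h : HasProd f a) :
    HasProd (fun i => rescale w (f i)) (rescale w a) := by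
  refine hasProd_map ((rescale w : K⟦X⟧ →+* K⟦X⟧) : K⟦X⟧ →* K⟦X⟧) ?_ f a h
  intro n
  refine ⟨n, w ^ n, continuous_of_discreteTopology, fun A => ?_⟩
  simp [coeff_rescale]

/-- multiples only -/
lemma hasProd_mult {K : Type*} [CommRing K] [TopologicalSpace K] [DiscreteTopology K]
    (m : ℕ) (hm : m ≠ 0) :
    HasProd (fun i => if m ∣ i + 1 then (1 - X ^ (i + 1) : K⟦X⟧) else 1)
      (expand m hm (pentagonalSeries K)) := by
  have h := hasProd_expand m hm _ _ (hasProd_one_sub_X_pow K)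
  have hinj : Function.Injective (fun i : ℕ => (i + 1) * m - 1) := by
    intro a b h
    have h1 : 1 ≤ (a + 1) * m := Nat.one_le_iff_ne_zero.2 (by positivity)
    have h2 : 1 ≤ (b + 1) * m := Nat.one_le_iff_ne_zero.2 (by positivity)
    have h3 : (a + 1) * m = (b + 1) * m := by simp only at h; omega
    have := Nat.eq_of_mul_eq_mul_right (Nat.pos_of_ne_zero hm) h3
    omega
  rw [← hinj.hasProd_iff]
  · convert! h using 1
    ext1 i
    have h1 : 1 ≤ (i + 1) * m := Nat.one_le_iff_ne_zero.2 (by positivity)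
    simp only [Function.comp]
    rw [Nat.sub_add_cancel h1, if_pos (Dvd.intro_left _ rfl)]
    simp [← pow_mul, mul_comm]
  · intro x hx
    rw [if_neg]
    rintro ⟨k, hk⟩
    apply hx
    have : k ≠ 0 := by rintro rfl; omega
    refine ⟨k - 1, ?_⟩
    simp only
    rw [Nat.sub_add_cancel (by omega), mul_comm, ← hk]
    rfl

/-- partition series -/
noncomputable def Pg : (ZMod 2)⟦X⟧ := PowerSeries.mk fun n => (Nat.card n.Partition : ZMod 2)

/-- regular partition series -/
noncomputable def Rg (m : ℕ) : (ZMod 2)⟦X⟧ := PowerSeries.mk fun n => (numRegularPartitions m n : ZMod 2)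

lemma Pg_mul : Pg * F = 1 := by
  let _ : TopologicalSpace (ZMod 2) := ⊥
  have _ : DiscreteTopology (ZMod 2) := ⟨rfl⟩
  have h1 := Nat.Partition.hasProd_powerSeriesMk_card_restricted (ZMod 2) (fun _ => True)
  have h2 := h1.mul (hasProd_one_sub_X_pow (ZMod 2))
  have e : (PowerSeries.mk fun n ↦ ((Nat.Partition.restricted n (fun _ => True)).card : ZMod 2)) = Pg := by
    unfold Pg
    ext n
    simp [Nat.Partition.restricted]
  rw [e] at h2
  refine h2.unique ?_
  convert! hasProd_one using 1
  ext1 i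
  simp only [if_true, pow_mul]
  rw [tsum_pow_mul_one_sub_of_constantCoeff_eq_zero (by simp)]

lemma Rg_mul (m : ℕ) (hm : m ≠ 0) : Rg m * F = expand m hm F := by
  let _ : TopologicalSpace (ZMod 2) := ⊥
  have _ : DiscreteTopology (ZMod 2) := ⟨rfl⟩
  have h1 := Nat.Partition.hasProd_powerSeriesMk_card_restricted (ZMod 2) (fun j => ¬ m ∣ j)
  have h2 := h1.mul (hasProd_one_sub_X_pow (ZMod 2))
  have e : (PowerSeries.mk fun n ↦ ((Nat.Partition.restricted n (fun j => ¬ m ∣ j)).card : ZMod 2))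
      = Rg m := by
    unfold Rg
    ext n
    simp only [coeff_mk, numRegularPartitions, Nat.Partition.restricted]
    rw [Nat.card_eq_fintype_card, Fintype.card_subtype]
  rw [e] at h2
  refine h2.unique ?_
  have h3 := hasProd_mult (K := ZMod 2) m hm
  refine h3.congr_fun ?_
  intro i
  by_cases h : m ∣ i + 1
  · simp [h]
  · simp only [h, not_false_eq_true, if_true, if_false, pow_mul]
    rw [tsum_pow_mul_one_sub_of_constantCoeff_eq_zero (by simp)]

lemma coeff_Pg_pow (t n : ℕ) : coeff n (Pg ^ t) = (numMultipartitions t n : ZMod 2) := by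
  classical
  have h0 : Pg ^ t = ∏ i : Fin t, Pg := by simp
  rw [h0]
  induction t generalizing n with
  | zero =>
    simp only [Finset.univ_eq_empty, Finset.prod_empty, coeff_one, numMultipartitions]
    split_ifs with h
    · subst h
      simp
    · have : IsEmpty {f : Fin 0 → Σ k : ℕ, k.Partition // (∑ i, (f i).1) = n} := by
        constructor
        rintro ⟨f, hf⟩
        simp at hf
        exact h hf.symm
      have h5 := Nat.card_of_isEmpty (α := {f : Fin 0 → Σ k : ℕ, k.Partition // (∑ i, (f i).1) = n})
      rw [Finset.univ_eq_empty] at h5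
      rw [h5, Nat.cast_zero]
  | succ t ih =>
    rw [Fin.prod_univ_succ, coeff_mul]
    have ih' : ∀ n, coeff n (∏ i : Fin t, Pg) = (numMultipartitions t n : ZMod 2) :=
      fun n => ih n (by simp)
    simp_rw [ih']
    unfold Pg
    simp_rw [coeff_mk]
    have hfin : ∀ t n, Finite {f : Fin t → Σ k : ℕ, k.Partition // (∑ i, (f i).1) = n} := by
      intro t n
      let g : {f : Fin t → Σ k : ℕ, k.Partition // (∑ i, (f i).1) = n} →
          (Fin t → Σ k : Fin (n + 1), (k : ℕ).Partition) :=
        fun f i => ⟨⟨(f.1 i).1, by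
          have := Finset.single_le_sum (f := fun i => (f.1 i).1) (fun _ _ => Nat.zero_le _)
            (Finset.mem_univ i)
          have := f.2
          have h3 : (f.1 i).1 ≤ ∑ i, (f.1 i).1 := by assumption
          omega⟩, (f.1 i).2⟩
      refine Finite.of_injective g ?_
      intro f f' h
      apply Subtype.ext
      funext i
      have := congrFun h i
      simp only [g, Sigma.mk.injEq, Fin.mk.injEq] at this
      exact Sigma.ext this.1 this.2
    let e : {f : Fin (t + 1) → Σ k : ℕ, k.Partition // (∑ i, (f i).1) = n} ≃
        Σ x : Finset.HasAntidiagonal.antidiagonal n, (Nat.Partition x.1.1 ×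
          {f : Fin t → Σ k : ℕ, k.Partition // (∑ i, (f i).1) = x.1.2}) :=
      { toFun := fun f => ⟨⟨((f.1 0).1, ∑ i : Fin t, (f.1 i.succ).1), by
            have := f.2
            rw [Fin.sum_univ_succ] at this
            rw [Finset.HasAntidiagonal.mem_antidiagonal]
            exact this⟩, (f.1 0).2, ⟨fun i => f.1 i.succ, rfl⟩⟩
        invFun := fun y => ⟨Fin.cons ⟨y.1.1.1, y.2.1⟩ y.2.2.1, by
            rw [Fin.sum_univ_succ]
            simp only [Fin.cons_zero, Fin.cons_succ]
            rw [y.2.2.2]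
            have := y.1.2
            rw [Finset.HasAntidiagonal.mem_antidiagonal] at this
            exact this⟩
        left_inv := by
          intro f
          apply Subtype.ext
          funext i
          refine Fin.cases ?_ (fun j => ?_) i <;> simp
        right_inv := by
          rintro ⟨⟨⟨a, b⟩, hab⟩, p, ⟨f, hf⟩⟩
          simp only at hf
          subst hf
          rfl }
    have hc : numMultipartitions (t + 1) n = ∑ x ∈ Finset.HasAntidiagonal.antidiagonal n,
        Nat.card (Nat.Partition x.1) * numMultipartitions t x.2 := by
      unfold numMultipartitions
      rw [Nat.card_congr e]
      have := fun t n => Fintype.ofFinite {f : Fin t → Σ k : ℕ, k.Partition // (∑ i, (f i).1) = n}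
      rw [Nat.card_sigma]
      simp_rw [Nat.card_prod]
      exact Finset.sum_coe_sort (Finset.HasAntidiagonal.antidiagonal n) (fun x => Nat.card (Nat.Partition x.1) *
        Nat.card {f : Fin t → Σ k : ℕ, k.Partition // (∑ i, (f i).1) = x.2})
    rw [hc]
    push_cast
    rfl

end Sol

open PowerSeries PowerSeries.WithPiTopology
namespace Sol

lemma map_F {K : Type*} [Field K] (φ : ZMod 2 →+* K) :
    PowerSeries.map φ F = pentagonalSeries K := by
  ext n
  unfold F
  rw [coeff_map]
  by_cases h : n ∈ Set.range pentagonal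
  · obtain ⟨k, rfl⟩ := h
    rw [coeff_pentagonalSeries_pentagonal, coeff_pentagonalSeries_pentagonal, map_intCast]
  · rw [coeff_pentagonalSeries_eq_zero _ h, coeff_pentagonalSeries_eq_zero _ h, map_zero]

lemma prod_term {K : Type*} [Field K] (w : K) (hw : IsPrimitiveRoot w 17) (m : ℕ) :
    ∏ j : Fin 17, rescale (w ^ (j : ℕ)) (1 - X ^ m : K⟦X⟧) =
      if 17 ∣ m then (1 - X ^ m) ^ 17 else 1 - X ^ (17 * m) := by
  have h1 : ∀ j : ℕ, rescale (w ^ j) (1 - X ^ m : K⟦X⟧) = 1 - (PowerSeries.C (w ^ m)) ^ j * X ^ m := by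
    intro j
    rw [map_sub, map_one, map_pow, rescale_X, mul_pow, ← map_pow, ← map_pow, ← pow_mul, ← pow_mul,
      mul_comm j m]
  simp_rw [h1]
  split_ifs with h
  · obtain ⟨k, rfl⟩ := h
    have : w ^ (17 * k) = 1 := by rw [pow_mul, hw.pow_eq_one, one_pow]
    simp [this]
  · have hc : Nat.Coprime m 17 := ((Nat.Prime.coprime_iff_not_dvd (by norm_num)).2 h).symm
    have hp : IsPrimitiveRoot (PowerSeries.C (w ^ m) : K⟦X⟧) 17 :=
      (hw.pow_of_coprime m hc).map_of_injective (f := (PowerSeries.C : K →+* K⟦X⟧)) PowerSeries.C_injective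
    have h2 := hp.pow_sub_pow_eq_prod_sub_mul (1 : K⟦X⟧) (X ^ m) (by norm_num)
    rw [one_pow, ← pow_mul, mul_comm m 17] at h2
    rw [h2]
    refine Finset.prod_bij (fun j _ => (PowerSeries.C (w ^ m) : K⟦X⟧) ^ (j : ℕ)) ?_ ?_ ?_ ?_
    · intro j _
      rw [Polynomial.mem_nthRootsFinset (by norm_num), ← pow_mul, mul_comm, pow_mul, hp.pow_eq_one,
        one_pow]
    · intro a _ b _ hab
      exact Fin.ext (hp.pow_inj a.2 b.2 hab)
    · intro z hz
      rw [Polynomial.mem_nthRootsFinset (by norm_num)] at hz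
      obtain ⟨i, hi, h⟩ := hp.eq_pow_of_pow_eq_one hz
      exact ⟨⟨i, hi⟩, Finset.mem_univ _, h⟩
    · intro _ _
      rfl

lemma prod_formula {K : Type*} [Field K] (w : K) (hw : IsPrimitiveRoot w 17) :
    (∏ j : Fin 17, rescale (w ^ (j : ℕ)) (pentagonalSeries K)) *
      expand 289 (by norm_num) (pentagonalSeries K) =
      (expand 17 (by norm_num) (pentagonalSeries K)) ^ 18 := by
  let _ : TopologicalSpace K := ⊥
  have _ : DiscreteTopology K := ⟨rfl⟩
  have hP := hasProd_one_sub_X_pow K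
  have hD := hasProd_mult (K := K) 17 (by norm_num)
  have hE := hasProd_expand 17 (by norm_num) _ _ hP
  have hDE := hasProd_expand 17 (by norm_num) _ _ hD
  have h289 : expand 289 (by norm_num) (pentagonalSeries K) =
      expand 17 (by norm_num) (expand 17 (by norm_num) (pentagonalSeries K)) := by
    rw [← expand_mul]
  rw [h289]
  have hR := hasProd_prod (s := Finset.univ) fun (j : Fin 17) _ =>
    hasProd_rescale (w ^ (j : ℕ)) _ _ hP
  have hA := hR.mul hDE
  have hB := hE.mul (hD.pow 17)
  have hB' := hB
  rw [← pow_succ'] at hB'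
  refine hA.unique (hB'.congr_fun ?_)
  intro i
  rw [prod_term w hw]
  by_cases h : 17 ∣ i + 1
  · simp only [h, if_true, map_sub, map_one, map_pow, expand_X, ← pow_mul]
    ring
  · simp only [h, if_false, map_sub, map_one, map_pow, expand_X, ← pow_mul]
    ring

lemma rescale_expand {K : Type*} [CommRing K] (w : K) (m : ℕ) (hm : m ≠ 0) (A : K⟦X⟧) :
    rescale w (expand m hm A) = expand m hm (rescale (w ^ m) A) := by
  ext n
  rw [coeff_rescale, coeff_expand, coeff_expand]
  split_ifs with h
  · obtain ⟨k, rfl⟩ := h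
    rw [Nat.mul_div_cancel_left _ (Nat.pos_of_ne_zero hm), coeff_rescale, pow_mul]
  · simp

lemma sum_zeta {K : Type*} [Field K] (φ : ZMod 2 →+* K) (z : K) (hz : IsPrimitiveRoot z 17)
    (n : ℕ) : ∑ j : Fin 17, (z ^ (j : ℕ)) ^ n = if 17 ∣ n then 1 else 0 := by
  have h17 : (17 : K) = 1 := by
    have : φ ((17 : ℕ) : ZMod 2) = φ 1 := by congr 1
    rw [map_natCast, map_one] at this
    exact_mod_cast this
  split_ifs with h
  · obtain ⟨k, rfl⟩ := h
    have : ∀ j : ℕ, (z ^ j) ^ (17 * k) = 1 := by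
      intro j
      rw [← pow_mul, mul_comm, mul_assoc, pow_mul, hz.pow_eq_one, one_pow]
    simp [this, h17]
  · have hc : Nat.Coprime n 17 := ((Nat.Prime.coprime_iff_not_dvd (by norm_num)).2 h).symm
    have := (hz.pow_of_coprime n hc).geom_sum_eq_zero (by norm_num)
    rw [Finset.sum_range] at this
    rw [← this]
    refine Finset.sum_congr rfl fun j _ => ?_
    rw [← pow_mul, ← pow_mul, mul_comm]

/-- The trace-like operator attached to the eighteen conjugates. -/
noncomputable def u {K : Type*} [Field K] (φ : ZMod 2 →+* K) (z : K) (A : (ZMod 2)⟦X⟧) :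
    Option (Fin 17) → K⟦X⟧
  | some j => rescale (z ^ (j : ℕ)) (PowerSeries.map φ A)
  | none => expand 289 (by norm_num) (PowerSeries.map φ A)

lemma u_pow {K : Type*} [Field K] (φ : ZMod 2 →+* K) (z : K) (A : (ZMod 2)⟦X⟧) (k : ℕ)
    (i : Option (Fin 17)) : u φ z A i ^ k = u φ z (A ^ k) i := by
  cases i <;> simp [u]

lemma coeff_sum_u {K : Type*} [Field K] (φ : ZMod 2 →+* K) (z : K) (hz : IsPrimitiveRoot z 17)
    (A : (ZMod 2)⟦X⟧) (n : ℕ) : coeff n (∑ i, u φ z A i) =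
      φ ((if 289 ∣ n then coeff (n / 289) A else 0) + (if 17 ∣ n then coeff n A else 0)) := by
  rw [Fintype.sum_option]
  simp only [u, map_add, map_sum, coeff_expand, coeff_rescale, coeff_map]
  rw [← Finset.sum_mul, sum_zeta φ z hz]
  congr 1
  · split_ifs <;> simp
  · split_ifs <;> simp

lemma sum_u_zero {K : Type*} [Field K] (φ : ZMod 2 →+* K) (z : K) (hz : IsPrimitiveRoot z 17)
    (A : (ZMod 2)⟦X⟧) (h : Hk A) : ∑ i, u φ z A i = 0 := by
  ext n
  rw [coeff_sum_u φ z hz, map_zero]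
  by_cases hn : 17 ∣ n
  · obtain ⟨m, rfl⟩ := hn
    have e : 289 ∣ 17 * m ↔ 17 ∣ m := by omega
    have e2 : 17 * m / 289 = m / 17 := by omega
    simp only [e, e2, dvd_mul_right, if_true]
    rw [h m]
    rw [CharTwo.add_self_eq_zero, map_zero]
  · have : ¬ 289 ∣ n := by omega
    simp [hn, this]

lemma sum_u_17 {K : Type*} [Field K] (φ : ZMod 2 →+* K) (z : K) (hz : IsPrimitiveRoot z 17) :
    ∑ i, u φ z (G ^ 17) i = PowerSeries.map φ (expand 17 (by norm_num) G) := by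
  ext n
  rw [coeff_sum_u φ z hz, coeff_map, coeff_expand]
  by_cases hn : 17 ∣ n
  · obtain ⟨m, rfl⟩ := hn
    have e : 289 ∣ 17 * m ↔ 17 ∣ m := by omega
    have e2 : 17 * m / 289 = m / 17 := by omega
    have e3 : 17 * m / 17 = m := by omega
    simp only [e, e2, e3, dvd_mul_right, if_true]
    rw [← Hk17 m, add_comm]
  · have : ¬ 289 ∣ n := by omega
    simp [hn, this]

lemma Hk_sq (A : (ZMod 2)⟦X⟧) (h : Hk A) : Hk (A ^ 2) := by
  intro n
  rw [sq_eq_expand]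
  simp only [coeff_expand]
  by_cases hn : 2 ∣ n
  · obtain ⟨m, rfl⟩ := hn
    have e1 : 17 * (2 * m) / 2 = 17 * m := by omega
    have e2 : (17 ∣ 2 * m) ↔ 17 ∣ m := by omega
    rw [e1, if_pos (by omega), h m]
    simp only [e2]
    by_cases hm : 17 ∣ m
    · rw [if_pos hm, if_pos hm, if_pos (by omega)]
      congr 2
      omega
    · rw [if_neg hm, if_neg hm]
  · rw [if_neg (by omega)]
    split_ifs with h1 h2
    · omega
    · rfl
    · rfl

lemma Hk_all (k : ℕ) (h1 : 1 ≤ k) (h2 : k ≤ 16) : Hk (G ^ k) := by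
  have sq : ∀ k, Hk (G ^ k) → Hk (G ^ (k * 2)) := fun k h => by
    rw [pow_mul]; exact Hk_sq _ h
  have a2 := sq 1 Hk1
  have a4 := sq 2 a2
  have a6 := sq 3 Hk3
  have a8 := sq 4 a4
  have a10 := sq 5 Hk5
  have a12 := sq 6 a6
  have a14 := sq 7 Hk7
  have a16 := sq 8 a8
  interval_cases k
  exacts [Hk1, a2, Hk3, a4, Hk5, a6, Hk7, a8, Hk9, a10, Hk11, a12, Hk13, a14, Hk15, a16]

lemma esymm_compl {R : Type*} [CommRing R] (v : Option (Fin 17) → R) :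
    MvPolynomial.aeval v (MvPolynomial.esymm (Option (Fin 17)) R 17) =
      ∑ i, ∏ l ∈ Finset.univ.erase i, v l := by
  classical
  unfold MvPolynomial.esymm
  simp only [map_sum, map_prod, MvPolynomial.aeval_X]
  symm
  refine Finset.sum_bij (fun i _ => Finset.univ.erase i) ?_ ?_ ?_ ?_
  · intro i _
    rw [Finset.mem_powersetCard]
    refine ⟨Finset.subset_univ _, ?_⟩
    rw [Finset.card_erase_of_mem (Finset.mem_univ _)]
    simp
  · intro a _ b _ h
    by_contra hne
    have : b ∈ Finset.univ.erase a := Finset.mem_erase.2 ⟨fun h => hne h.symm, Finset.mem_univ _⟩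
    rw [h] at this
    simp at this
  · intro s hs
    rw [Finset.mem_powersetCard] at hs
    have : sᶜ.card = 1 := by
      rw [Finset.card_compl, hs.2]; simp
    obtain ⟨a, ha⟩ := Finset.card_eq_one.1 this
    refine ⟨a, Finset.mem_univ _, ?_⟩
    rw [← compl_compl s, ha]
    ext x
    simp
  · intro _ _; rfl

lemma e17 {K : Type*} [Field K] (φ : ZMod 2 →+* K) (z : K) (hz : IsPrimitiveRoot z 17) :
    ∑ i, ∏ l ∈ Finset.univ.erase i, u φ z G l = PowerSeries.map φ (expand 17 (by norm_num) G) := by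
  have h17 : (17 : K⟦X⟧) = 1 := by
    have : (PowerSeries.C.comp φ) ((17 : ℕ) : ZMod 2) = (PowerSeries.C.comp φ) 1 := by congr 1
    rw [map_natCast, map_one] at this
    exact_mod_cast this
  have hN := congrArg (MvPolynomial.aeval (u φ z G))
    (MvPolynomial.mul_esymm_eq_sum (Option (Fin 17)) K⟦X⟧ 17)
  rw [map_mul, esymm_compl, map_natCast, Nat.cast_ofNat, h17, one_mul] at hN
  rw [hN, map_mul, map_sum, Finset.sum_eq_single (0, 17)]
  · simp only [map_mul, map_pow, map_neg, map_one, MvPolynomial.esymm_zero, MvPolynomial.psum,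
      map_sum, MvPolynomial.aeval_X, u_pow]
    rw [sum_u_17 φ z hz]
    norm_num
  · rintro ⟨a, b⟩ hab hne
    rw [Finset.mem_filter, Finset.HasAntidiagonal.mem_antidiagonal] at hab
    simp only at hab
    simp only [map_mul, MvPolynomial.psum, map_pow,
      map_sum, MvPolynomial.aeval_X, u_pow]
    rw [sum_u_zero φ z hz _ (Hk_all b (by omega) ?_), mul_zero]
    by_contra h
    apply hne
    have : a = 0 := by omega
    subst this
    rw [Prod.mk.injEq]; omega
  · intro h
    exfalso; apply h
    simp

end Sol

open PowerSeries
namespace Sol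

lemma expand_comm' {K : Type*} [CommRing K] (a b : ℕ) (ha : a ≠ 0) (hb : b ≠ 0) (A : K⟦X⟧) :
    expand a ha (expand b hb A) = expand b hb (expand a ha A) := by
  rw [← expand_mul, ← expand_mul]
  congr 2
  exact mul_comm a b

lemma map_G {K : Type*} [Field K] (φ : ZMod 2 →+* K) :
    PowerSeries.map φ G = X * expand 24 (by norm_num) (pentagonalSeries K) := by
  rw [G_eq, map_mul, map_X, map_expand, map_F]

lemma e18 {K : Type*} [Field K] (φ : ZMod 2 →+* K) (z : K) (hz : IsPrimitiveRoot z 17) :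
    ∏ i, u φ z G i = (PowerSeries.map φ (expand 17 (by norm_num) G)) ^ 18 := by
  have hw : IsPrimitiveRoot (z ^ 24) 17 := hz.pow_of_coprime 24 (by norm_num)
  have hf := congrArg (expand 24 (by norm_num)) (prod_formula (z ^ 24) hw)
  rw [map_mul, map_prod, map_pow] at hf
  rw [Fintype.prod_option, map_expand]
  simp only [u]
  rw [map_G]
  have h1 : ∀ j : Fin 17, rescale (z ^ (j : ℕ))
      (X * expand 24 (by norm_num) (pentagonalSeries K)) =
      PowerSeries.C (z ^ (j : ℕ)) * X * expand 24 (by norm_num)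
        (rescale ((z ^ 24) ^ (j : ℕ)) (pentagonalSeries K)) := by
    intro j
    rw [map_mul, rescale_X, rescale_expand, ← pow_mul, ← pow_mul, mul_comm (j : ℕ)]
  rw [Finset.prod_congr rfl fun j _ => h1 j]
  rw [Finset.prod_mul_distrib, Finset.prod_mul_distrib]
  have h2 : ∏ j : Fin 17, (PowerSeries.C (z ^ (j : ℕ)) : K⟦X⟧) = 1 := by
    rw [← map_prod, Finset.prod_pow_eq_pow_sum]
    have : ∑ j : Fin 17, (j : ℕ) = 17 * 8 := by decide
    rw [this, pow_mul, hz.pow_eq_one, one_pow, map_one]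
  rw [h2, map_mul, map_mul, expand_X, expand_X, expand_comm' 289 24, expand_comm' 17 24, mul_pow,
    ← hf]
  simp only [Finset.prod_const, Finset.card_univ, Fintype.card_fin]
  ring

/-- the complementary factors -/
noncomputable def v {K : Type*} [Field K] (φ : ZMod 2 →+* K) (z : K) (A : (ZMod 2)⟦X⟧) :
    Option (Fin 17) → K⟦X⟧
  | some j => PowerSeries.C (z ^ (j : ℕ))⁻¹ * X ^ 288 *
      rescale (z ^ (j : ℕ)) (PowerSeries.map φ A)
  | none => expand 289 (by norm_num) (PowerSeries.map φ A)

lemma G_mul : G * expand 24 (by norm_num) Pg = X := by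
  rw [G_eq, mul_assoc, ← map_mul, mul_comm F, Pg_mul, map_one, mul_one]

lemma u_mul_v {K : Type*} [Field K] (φ : ZMod 2 →+* K) (z : K) (hz : IsPrimitiveRoot z 17)
    (i : Option (Fin 17)) : u φ z G i * v φ z (expand 24 (by norm_num) Pg) i = X ^ 289 := by
  cases i with
  | none =>
    simp only [u, v]
    rw [← map_mul, ← map_mul, G_mul, map_X, expand_X]
  | some j =>
    simp only [u, v]
    have h0 : z ^ (j : ℕ) ≠ 0 := pow_ne_zero _ (hz.ne_zero (by norm_num))
    have h1 : rescale (z ^ (j : ℕ)) (PowerSeries.map φ G) *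
        rescale (z ^ (j : ℕ)) (PowerSeries.map φ (expand 24 (by norm_num) Pg)) =
        PowerSeries.C (z ^ (j : ℕ)) * X := by
      rw [← map_mul, ← map_mul, G_mul, map_X, rescale_X]
    have h2 : (PowerSeries.C (z ^ (j : ℕ))⁻¹ * PowerSeries.C (z ^ (j : ℕ)) : K⟦X⟧) = 1 := by
      rw [← map_mul, inv_mul_cancel₀ h0, map_one]
    linear_combination (PowerSeries.C (z ^ (j : ℕ))⁻¹ * X ^ 288) * h1 + X ^ 289 * h2

lemma sum_v {K : Type*} [Field K] (φ : ZMod 2 →+* K) (z : K) (hz : IsPrimitiveRoot z 17) :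
    ∑ i, v φ z (expand 24 (by norm_num) Pg) i =
      (PowerSeries.map φ (expand 17 (by norm_num) (expand 24 (by norm_num) Pg))) ^ 17 := by
  set W := PowerSeries.map φ (expand 17 (by norm_num) (expand 24 (by norm_num) Pg))
  set H := PowerSeries.map φ (expand 17 (by norm_num) G)
  have hHW : H * W = X ^ 17 := by
    simp only [H, W]
    rw [← map_mul, ← map_mul, G_mul, expand_X, map_pow, map_X]
  have h1 : X ^ 289 * H = H ^ 18 * ∑ i, v φ z (expand 24 (by norm_num) Pg) i := by
    have a1 : _ = H := e17 φ z hz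
    have a2 : _ = H ^ 18 := e18 φ z hz
    rw [← a2, ← a1, Finset.mul_sum, Finset.mul_sum]
    refine Finset.sum_congr rfl fun i _ => ?_
    rw [← u_mul_v φ z hz i, ← Finset.mul_prod_erase Finset.univ _ (Finset.mem_univ i)]
    ring
  have h2 : (X ^ 306 : K⟦X⟧) * ∑ i, v φ z (expand 24 (by norm_num) Pg) i = X ^ 306 * W ^ 17 := by
    have e1 : (X ^ 306 : K⟦X⟧) = H ^ 18 * W ^ 18 := by
      rw [← mul_pow, hHW, ← pow_mul]
    calc (X ^ 306 : K⟦X⟧) * ∑ i, v φ z (expand 24 (by norm_num) Pg) i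
        = (H ^ 18 * ∑ i, v φ z (expand 24 (by norm_num) Pg) i) * W ^ 18 := by rw [e1]; ring
      _ = X ^ 289 * (H * W) * W ^ 17 := by rw [← h1]; ring
      _ = X ^ 306 * W ^ 17 := by rw [hHW]; ring
  exact mul_left_cancel₀ (pow_ne_zero _ X_ne_zero) h2

lemma coeff_key (N : ℕ) (hN : 1 ≤ N) : coeff N (Pg ^ 17) =
    coeff (17 * N - 12) Pg + if 17 ∣ N then coeff (N / 17) Pg else 0 := by
  have hne : NeZero ((17 : ℕ) : AlgebraicClosure (ZMod 2)) := by
    constructor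
    rw [Ne, CharP.cast_eq_zero_iff (AlgebraicClosure (ZMod 2)) 2]
    norm_num
  obtain ⟨z, hz⟩ := HasEnoughRootsOfUnity.exists_primitiveRoot (AlgebraicClosure (ZMod 2)) 17
  let φ := algebraMap (ZMod 2) (AlgebraicClosure (ZMod 2))
  apply φ.injective
  have h := congrArg (coeff (408 * N)) (sum_v φ z hz)
  rw [← map_pow, ← map_pow, ← map_pow, ← expand_mul, coeff_map] at h
  have e1 : coeff (408 * N) (expand (17 * 24) (by norm_num) (Pg ^ 17)) = coeff N (Pg ^ 17) :=
    coeff_expand_mul _ _ _ _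
  rw [e1] at h
  rw [← h, Fintype.sum_option]
  simp only [v]
  rw [map_add, map_add, add_comm, map_sum]
  congr 1
  · have e2 : 408 * N = 24 * (17 * N - 12) + 288 := by omega
    have e3 : ∀ j : Fin 17, coeff (408 * N) (PowerSeries.C (z ^ (j : ℕ))⁻¹ * X ^ 288 *
        rescale (z ^ (j : ℕ)) (PowerSeries.map φ (expand 24 (by norm_num) Pg))) =
        (z ^ (j : ℕ)) ^ (408 * N - 289) * φ (coeff (17 * N - 12) Pg) := by
      intro j
      have h0 : z ^ (j : ℕ) ≠ 0 := pow_ne_zero _ (hz.ne_zero (by norm_num))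
      rw [mul_assoc, coeff_C_mul, e2, mul_comm (X ^ 288), coeff_mul_X_pow, coeff_rescale, coeff_map,
        coeff_expand_mul, ← mul_assoc]
      congr 1
      have : 24 * (17 * N - 12) = (408 * N - 289) + 1 := by omega
      have e4 : 24 * (17 * N - 12) + 288 - 289 = 408 * N - 289 := by omega
      rw [e4, this, pow_succ]
      field_simp
    rw [Finset.sum_congr rfl fun j _ => e3 j, ← Finset.sum_mul, sum_zeta φ z hz,
      if_pos (by omega), one_mul]
  · rw [coeff_expand, coeff_map, coeff_expand]
    by_cases h17 : 17 ∣ N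
    · obtain ⟨M, rfl⟩ := h17
      have e5 : 408 * (17 * M) / 289 = 24 * M := by omega
      rw [if_pos (by omega), e5, if_pos (by omega), if_pos (by omega)]
      rw [Nat.mul_div_cancel_left _ (by norm_num), Nat.mul_div_cancel_left _ (by norm_num)]
    · rw [if_neg (by omega), if_neg h17, map_zero]

/-- dissection -/
noncomputable def U : (ZMod 2)⟦X⟧ := PowerSeries.mk fun N => if N = 0 then 0 else coeff (17 * N - 12) Pg

lemma U_eq : Pg ^ 17 = U + expand 17 (by norm_num) Pg := by
  ext N
  rw [map_add, coeff_expand]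
  simp only [U, coeff_mk]
  rcases Nat.eq_zero_or_pos N with rfl | h
  · have : constantCoeff Pg = 1 := by
      rw [← coeff_zero_eq_constantCoeff_apply]
      simp [Pg]
    simp [this]
  · rw [if_neg (by omega), coeff_key N h]

lemma pow_two_pow (a : ℕ) (A : (ZMod 2)⟦X⟧) :
    A ^ (2 ^ a) = expand (2 ^ a) (by positivity) A := by
  induction a with
  | zero => simp
  | succ a ih =>
    have h : A ^ (2 ^ (a + 1)) = (A ^ (2 ^ a)) ^ 2 := by rw [← pow_mul, ← pow_succ]
    rw [h, ih, sq_eq_expand, ← expand_mul]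
    congr 2
    exact mul_comm _ _

lemma coeff_dissect (A : (ZMod 2)⟦X⟧) (N : ℕ) (hN : 1 ≤ N) :
    coeff (17 * N - 12) (expand 17 (by norm_num) A * Pg) = coeff N (A * U) := by
  rw [coeff_mul, coeff_mul,
    Finset.Nat.sum_antidiagonal_eq_sum_range_succ
      (fun i j => coeff i (expand 17 (by norm_num) A) * coeff j Pg),
    Finset.Nat.sum_antidiagonal_eq_sum_range_succ (fun i j => coeff i A * coeff j U)]
  rw [Finset.sum_range_succ _ N, Nat.sub_self]
  have hU : coeff 0 U = 0 := by simp [U]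
  rw [hU, mul_zero, add_zero]
  symm
  refine Finset.sum_of_injOn (fun i => 17 * i) ?_ ?_ ?_ ?_
  · intro a _ b _ h
    simp only at h
    omega
  · intro a ha
    simp only [Finset.coe_range, Set.mem_Iio] at ha ⊢
    omega
  · intro i hi hn
    rw [coeff_expand, if_neg, zero_mul]
    rintro ⟨k, rfl⟩
    apply hn
    simp only [Finset.mem_range] at hi
    refine ⟨k, ?_, rfl⟩
    simp only [Finset.coe_range, Set.mem_Iio]
    omega
  · intro i hi
    rw [Finset.mem_range] at hi
    rw [coeff_expand_mul]
    simp only [U, coeff_mk]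
    have e : 17 * (N - i) - 12 = 17 * N - 12 - 17 * i := by omega
    rw [if_neg (by omega), e]

lemma vanish (a B n : ℕ) (hB : ∀ y : ZMod 17, 24 * (B : ZMod 17) + 2 ^ a ≠ 2 ^ a * y ^ 2) :
    coeff (17 * n + B) (F ^ (2 ^ a) * expand 17 (by norm_num) Pg) = 0 := by
  rw [coeff_mul]
  refine Finset.sum_eq_zero ?_
  rintro ⟨i, j⟩ hij
  rw [Finset.HasAntidiagonal.mem_antidiagonal] at hij
  simp only at hij ⊢
  rw [pow_two_pow, coeff_expand, coeff_expand]
  split_ifs with h1 h2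
  · obtain ⟨k, rfl⟩ := h1
    obtain ⟨l, rfl⟩ := h2
    rw [Nat.mul_div_cancel_left _ (by positivity)]
    have : coeff k F = 0 := by
      unfold F
      rw [coeff_pentagonalSeries_eq_zero_iff]
      rintro ⟨c, rfl⟩
      have key := two_mul_natCast_pentagonal c
      apply hB ((6 * c - 1 : ℤ) : ZMod 17)
      have h3 : (24 * B + 2 ^ a : ℤ) = 2 ^ a * (6 * c - 1) ^ 2 + 17 * (24 * l - 24 * n) := by
        zify at hij
        linear_combination 24 * (-hij) + 12 * 2 ^ a * key
      have h4 := congrArg (Int.cast (R := ZMod 17)) h3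
      push_cast at h4
      have h17 : (17 : ZMod 17) = 0 := by decide
      rw [h17, zero_mul, add_zero] at h4
      push_cast
      exact h4
    rw [this, zero_mul]
  · simp
  · simp
  · simp

lemma main (a t m B n : ℕ) (ht : 2 ^ a + t = 17) (hm : m = 17 * 2 ^ a) (hB1 : 1 ≤ B)
    (hB : ∀ y : ZMod 17, 24 * (B : ZMod 17) + 2 ^ a ≠ 2 ^ a * y ^ 2) :
    numRegularPartitions m (289 * n + 17 * B - 12) ≡ numMultipartitions t (17 * n + B) [MOD 2] := by
  rw [← ZMod.natCast_eq_natCast_iff, ← coeff_Pg_pow]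
  subst hm
  have hm0 : 17 * 2 ^ a ≠ 0 := by positivity
  have h1 : Rg (17 * 2 ^ a) = expand 17 (by norm_num) (F ^ (2 ^ a)) * Pg := by
    have := Rg_mul (17 * 2 ^ a) hm0
    rw [pow_two_pow, ← expand_mul, ← this, mul_assoc, mul_comm F, Pg_mul, mul_one]
  have h2 : (numRegularPartitions (17 * 2 ^ a) (289 * n + 17 * B - 12) : ZMod 2) =
      coeff (17 * (17 * n + B) - 12) (Rg (17 * 2 ^ a)) := by
    unfold Rg
    rw [coeff_mk]
    congr 2
    omega
  rw [h2, h1, coeff_dissect _ _ (by omega)]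
  have h3 : F ^ (2 ^ a) * U = Pg ^ t - F ^ (2 ^ a) * expand 17 (by norm_num) Pg := by
    have h4 : Pg ^ t = F ^ (2 ^ a) * Pg ^ 17 := by
      rw [← ht, pow_add, ← mul_assoc, ← mul_pow, mul_comm F, Pg_mul, one_pow, one_mul]
    rw [h4, U_eq]
    ring
  rw [h3, map_sub, vanish a B n hB, sub_zero]

end Sol

theorem stmt_4 (n : ℕ) :
    (∀ B ∈ ({3, 5, 6, 8, 9, 11, 15, 16} : Finset ℕ),
      numRegularPartitions 34 (289 * n + 17 * B - 12) ≡
        numMultipartitions 15 (17 * n + B) [MOD 2]) ∧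
    (∀ B ∈ ({1, 5, 6, 10, 12, 13, 15, 16} : Finset ℕ),
      numRegularPartitions 68 (289 * n + 17 * B - 12) ≡
        numMultipartitions 13 (17 * n + B) [MOD 2]) ∧
    (∀ B ∈ ({2, 3, 7, 9, 10, 12, 13, 15} : Finset ℕ),
      numRegularPartitions 136 (289 * n + 17 * B - 12) ≡
        numMultipartitions 9 (17 * n + B) [MOD 2]) ∧
    (∀ B ∈ ({1, 3, 4, 6, 7, 9, 13, 14} : Finset ℕ),
      numRegularPartitions 272 (289 * n + 17 * B - 12) ≡
        numMultipartitions 1 (17 * n + B) [MOD 2]) := by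
  refine ⟨?_, ?_, ?_, ?_⟩
  · intro B hB
    refine Sol.main 1 15 34 B n (by norm_num) (by norm_num) ?_ ?_ <;> revert B <;> decide
  · intro B hB
    refine Sol.main 2 13 68 B n (by norm_num) (by norm_num) ?_ ?_ <;> revert B <;> decide
  · intro B hB
    refine Sol.main 3 9 136 B n (by norm_num) (by norm_num) ?_ ?_ <;> revert B <;> decide
  · intro B hB
    refine Sol.main 4 1 272 B n (by norm_num) (by norm_num) ?_ ?_ <;> revert B <;> decide
end
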